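/- Soundness and completeness of CKAO: for all CKAO terms e and f, e ≡^obs f if and only if cl_obs(⟦e⟧) = cl_obs(⟦f⟧). -/

import Mathlib

namespace CKAH

open Classical

/-! ### Labelled posets and pomsets -/

/-- A labelled poset over alphabet `A`: a finite carrier with a partial order and labelling. -/
structure LPoset (A : Type) : Type 1 where
  carrier : Type
  [fin : Fintype carrier]
  [ord : PartialOrder carrier]
  lab : carrier → A

attribute [instance] LPoset.fin LPoset.ord

/-- Isomorphism of labelled posets: an order isomorphism preserving labels. -/
def LPoset.Iso {A : Type} (u v : LPoset A) : Prop :=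
  ∃ e : u.carrier ≃o v.carrier, ∀ x, v.lab (e x) = u.lab x

theorem LPoset.iso_equivalence (A : Type) : Equivalence (LPoset.Iso (A := A)) where
  refl u := ⟨OrderIso.refl _, fun _ => rfl⟩
  symm := by
    rintro u v ⟨e, he⟩
    exact ⟨e.symm, fun x => by rw [← he (e.symm x), OrderIso.apply_symm_apply]⟩
  trans := by
    rintro u v w ⟨e, he⟩ ⟨f, hf⟩
    exact ⟨e.trans f, fun x => by rw [OrderIso.trans_apply, hf, he]⟩

instance pomSetoid (A : Type) : Setoid (LPoset A) := ⟨LPoset.Iso, LPoset.iso_equivalence A⟩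

/-- A pomset is an isomorphism class of labelled posets. -/
def Pomset (A : Type) : Type 1 := Quotient (pomSetoid A)

/-- Sequential composition of labelled posets: disjoint union, everything on the left
below everything on the right (lexicographic sum order). -/
def LPoset.seqL {A : Type} (u v : LPoset A) : LPoset A where
  carrier := u.carrier ⊕ₗ v.carrier
  fin := inferInstanceAs (Fintype (u.carrier ⊕ v.carrier))
  lab := fun x => Sum.elim u.lab v.lab (ofLex x)

/-- Parallel composition of labelled posets: disjoint union with no cross ordering. -/
def LPoset.parL {A : Type} (u v : LPoset A) : LPoset A where
  carrier := u.carrier ⊕ v.carrier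
  lab := Sum.elim u.lab v.lab

def Pomset.seq {A : Type} : Pomset A → Pomset A → Pomset A :=
  Quotient.map₂ LPoset.seqL (by
    rintro u₁ u₂ ⟨e, he⟩ v₁ v₂ ⟨f, hf⟩
    refine ⟨(RelIso.sumLexCongr e f :
      (u₁.carrier ⊕ₗ v₁.carrier) ≃o (u₂.carrier ⊕ₗ v₂.carrier)), ?_⟩
    rintro (x | x)
    · exact he x
    · exact hf x)

/-- Order isomorphism between disjoint-union orders, from component isomorphisms. -/
def sumOrderIso {α β γ δ : Type} [PartialOrder α] [PartialOrder β] [PartialOrder γ]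
    [PartialOrder δ] (e : α ≃o γ) (f : β ≃o δ) : (α ⊕ β) ≃o (γ ⊕ δ) where
  toEquiv := Equiv.sumCongr e.toEquiv f.toEquiv
  map_rel_iff' := by
    rintro (x | x) (y | y) <;> simp [Sum.le_def, e.le_iff_le, f.le_iff_le]

def Pomset.par {A : Type} : Pomset A → Pomset A → Pomset A :=
  Quotient.map₂ LPoset.parL (by
    rintro u₁ u₂ ⟨e, he⟩ v₁ v₂ ⟨f, hf⟩
    refine ⟨sumOrderIso e f, ?_⟩
    rintro (x | x)
    · exact he x
    · exact hf x)

def LPoset.emptyL (A : Type) : LPoset A := { carrier := Fin 0, lab := fun x => x.elim0 }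

def LPoset.singleL {A : Type} (a : A) : LPoset A := { carrier := PUnit, lab := fun _ => a }

/-- The empty pomset `1`. -/
def Pomset.empty (A : Type) : Pomset A := ⟦LPoset.emptyL A⟧

/-- The single-letter pomset. -/
def Pomset.single {A : Type} (a : A) : Pomset A := ⟦LPoset.singleL a⟧

/-- Subsumption on labelled posets: `u ⊑ v` iff there is a label-preserving
order-preserving bijection from the carrier of `v` to that of `u`. -/
def LPoset.subL {A : Type} (u v : LPoset A) : Prop :=
  ∃ h : v.carrier ≃ u.carrier,
    (∀ x, u.lab (h x) = v.lab x) ∧ ∀ x y : v.carrier, x ≤ y → h x ≤ h y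

/-- Subsumption of pomsets: `Pomset.sub U V` means `U ⊑ V`. -/
def Pomset.sub {A : Type} : Pomset A → Pomset A → Prop :=
  Quotient.lift₂ LPoset.subL (by
    rintro u₁ v₁ u₂ v₂ ⟨e, he⟩ ⟨f, hf⟩
    refine propext ⟨?_, ?_⟩
    · rintro ⟨h, hl, hm⟩
      refine ⟨(f.toEquiv.symm.trans h).trans e.toEquiv, fun x => ?_, fun x y hxy => ?_⟩
      · show u₂.lab (e (h (f.symm x))) = v₂.lab x
        rw [he, hl, ← hf (f.symm x), OrderIso.apply_symm_apply]
      · simp only [Equiv.trans_apply]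
        exact e.le_iff_le.mpr (hm _ _ (f.symm.le_iff_le.mpr hxy))
    · rintro ⟨h, hl, hm⟩
      refine ⟨(f.toEquiv.trans h).trans e.toEquiv.symm, fun x => ?_, fun x y hxy => ?_⟩
      · show u₁.lab (e.symm (h (f x))) = v₁.lab x
        rw [← he (e.symm (h (f x))), OrderIso.apply_symm_apply, hl, hf]
      · simp only [Equiv.trans_apply]
        exact e.symm.le_iff_le.mpr (hm _ _ (f.le_iff_le.mpr hxy)))

def LPoset.isWordL {A : Type} (u : LPoset A) : Prop := ∀ x y : u.carrier, x ≤ y ∨ y ≤ x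

/-- A pomset is a word when it is totally ordered. -/
def Pomset.IsWord {A : Type} : Pomset A → Prop :=
  Quotient.lift LPoset.isWordL (by
    rintro u v ⟨e, -⟩
    refine propext ⟨fun h x y => ?_, fun h x y => ?_⟩
    · rcases h (e.symm x) (e.symm y) with h' | h'
      · exact Or.inl (e.symm.le_iff_le.mp h')
      · exact Or.inr (e.symm.le_iff_le.mp h')
    · rcases h (e x) (e y) with h' | h'
      · exact Or.inl (e.le_iff_le.mp h')
      · exact Or.inr (e.le_iff_le.mp h'))

def LPoset.mapL {A B : Type} (f : A → B) (u : LPoset A) : LPoset B :=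
  { carrier := u.carrier, lab := f ∘ u.lab }

/-- Relabelling of pomsets along a function on letters. -/
def Pomset.map {A B : Type} (f : A → B) : Pomset A → Pomset B :=
  Quotient.map (LPoset.mapL f)
    (by rintro u v ⟨e, he⟩; exact ⟨e, fun x => congrArg f (he x)⟩)

def LPoset.overL {A : Type} (Γ : Set A) (u : LPoset A) : Prop := ∀ x, u.lab x ∈ Γ

/-- All labels of the pomset belong to `Γ`. -/
def Pomset.Over {A : Type} (Γ : Set A) : Pomset A → Prop :=
  Quotient.lift (LPoset.overL Γ) (by
    rintro u v ⟨e, he⟩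
    refine propext ⟨fun h x => ?_, fun h x => ?_⟩
    · have h2 := he (e.symm x)
      rw [OrderIso.apply_symm_apply] at h2
      rw [h2]; exact h _
    · rw [← he x]; exact h _)

/-- Series-parallel pomsets. -/
inductive Pomset.IsSP {A : Type} : Pomset A → Prop
  | empty : Pomset.IsSP (Pomset.empty A)
  | single (a : A) : Pomset.IsSP (Pomset.single a)
  | seq {U V : Pomset A} : Pomset.IsSP U → Pomset.IsSP V → Pomset.IsSP (Pomset.seq U V)
  | par {U V : Pomset A} : Pomset.IsSP U → Pomset.IsSP V → Pomset.IsSP (Pomset.par U V)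

def SPset (A : Type) : Set (Pomset A) := {U | U.IsSP}

/-! ### Pomset contexts -/

/-- Contexts are pomsets over `Option A`, where `none` plays the role of `*`.
`uniqueStarL` says there is exactly one `*`-labelled node. -/
def LPoset.uniqueStarL {A : Type} (c : LPoset (Option A)) : Prop := ∃! x, c.lab x = none

theorem LPoset.uniqueStarL_congr {A : Type} {u v : LPoset (Option A)}
    (e : u.carrier ≃o v.carrier) (he : ∀ x, v.lab (e x) = u.lab x) :
    u.uniqueStarL ↔ v.uniqueStarL := by
  constructor
  · rintro ⟨x, hx, hux⟩
    refine ⟨e x, show v.lab (e x) = none by rw [he]; exact hx, fun y hy => ?_⟩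
    have h2 := he (e.symm y)
    rw [OrderIso.apply_symm_apply] at h2
    have h3 : e.symm y = x := hux _ (h2.symm.trans hy)
    rw [← h3, OrderIso.apply_symm_apply]
  · rintro ⟨x, hx, hvx⟩
    refine ⟨e.symm x, ?_, fun y hy => ?_⟩
    · show u.lab (e.symm x) = none
      have h2 := he (e.symm x)
      rw [OrderIso.apply_symm_apply] at h2
      rw [← h2]; exact hx
    · have h3 : e y = x := hvx _ (show v.lab (e y) = none by rw [he]; exact hy)
      rw [← h3, OrderIso.symm_apply_apply]

/-- A pomset context: exactly one node labelled `*`. -/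
def Pomset.IsCtx {A : Type} : Pomset (Option A) → Prop :=
  Quotient.lift LPoset.uniqueStarL
    (fun _ _ h => propext (LPoset.uniqueStarL_congr h.choose h.choose_spec))

/-- Series-parallel pomset contexts. -/
def Pomset.IsSPCtx {A : Type} (C : Pomset (Option A)) : Prop := C.IsCtx ∧ C.IsSP

/-- Sequential (totally ordered) pomset contexts. -/
def Pomset.IsSeqCtx {A : Type} (C : Pomset (Option A)) : Prop := C.IsCtx ∧ C.IsWord

/-- The trivial context `*`. -/
def starCtx (A : Type) : Pomset (Option A) := Pomset.single (none : Option A)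

theorem option_get_eq_get {α : Type} {o₁ o₂ : Option α} (h : o₁ = o₂) (h₁ : o₁.isSome)
    (h₂ : o₂.isSome) : o₁.get h₁ = o₂.get h₂ := by subst h; rfl

/-- The order of `C[U]`: the orders of `C` (restricted away from `*`) and of `U`, with a
point of `C` below (resp. above) all of `U` when it is below (resp. above) the unique
`*`-node of `C`.  (For well-definedness of the order, the cross-relations are guarded by
the requirement that the star node is unique, which holds for every genuine context.) -/
def LPoset.insLe {A : Type} (c : LPoset (Option A)) (u : LPoset A) :
    ({x : c.carrier // c.lab x ≠ none} ⊕ u.carrier) →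
    ({x : c.carrier // c.lab x ≠ none} ⊕ u.carrier) → Prop
  | Sum.inl x, Sum.inl y => x.val ≤ y.val
  | Sum.inr x, Sum.inr y => x ≤ y
  | Sum.inl x, Sum.inr _ => c.uniqueStarL ∧ ∃ s, c.lab s = none ∧ x.val ≤ s
  | Sum.inr _, Sum.inl y => c.uniqueStarL ∧ ∃ s, c.lab s = none ∧ s ≤ y.val

/-- Insertion of a labelled poset `u` into the gap of a context `c`: the `*`-labelled
node is removed and `u` is put in its place, inheriting the order relations of `*`. -/
noncomputable def LPoset.insL {A : Type} (c : LPoset (Option A)) (u : LPoset A) :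
    LPoset A where
  carrier := {x : c.carrier // c.lab x ≠ none} ⊕ u.carrier
  fin := by classical exact inferInstance
  ord :=
    { le := LPoset.insLe c u
      lt := fun p q => LPoset.insLe c u p q ∧ ¬ LPoset.insLe c u q p
      lt_iff_le_not_ge := fun _ _ => Iff.rfl
      le_refl := by rintro (x | x) <;> exact le_refl _
      le_trans := by
        rintro (x | x) (y | y) (z | z) h1 h2
        · exact le_trans h1 h2
        · obtain ⟨hu, s, hs, hys⟩ := h2
          exact ⟨hu, s, hs, le_trans h1 hys⟩
        · obtain ⟨hu, s, hs, hxs⟩ := h1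
          obtain ⟨-, t, ht, htz⟩ := h2
          obtain ⟨w, hw, huniq⟩ := hu
          have hst : s = t := (huniq s hs).trans (huniq t ht).symm
          exact le_trans (hst ▸ hxs) htz
        · exact h1
        · obtain ⟨hu, s, hs, hsy⟩ := h1
          exact ⟨hu, s, hs, le_trans hsy h2⟩
        · obtain ⟨hu, s, hs, hsy⟩ := h1
          obtain ⟨-, t, ht, hyt⟩ := h2
          obtain ⟨w, hw, huniq⟩ := hu
          have hst : s = t := (huniq s hs).trans (huniq t ht).symm
          have hy : y.val = s := le_antisymm (hst.symm ▸ hyt) hsy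
          exact absurd (hy.symm ▸ hs) y.prop
        · exact h2
        · exact le_trans h1 h2
      le_antisymm := by
        rintro (x | x) (y | y) h1 h2
        · exact congrArg Sum.inl (Subtype.ext (le_antisymm h1 h2))
        · obtain ⟨hu, s, hs, hxs⟩ := h1
          obtain ⟨-, t, ht, htx⟩ := h2
          obtain ⟨w, hw, huniq⟩ := hu
          have hst : s = t := (huniq s hs).trans (huniq t ht).symm
          have hx : x.val = s := le_antisymm hxs (hst.symm ▸ htx)
          exact absurd (hx.symm ▸ hs) x.prop
        · obtain ⟨hu, s, hs, hsy⟩ := h1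
          obtain ⟨-, t, ht, hyt⟩ := h2
          obtain ⟨w, hw, huniq⟩ := hu
          have hst : s = t := (huniq s hs).trans (huniq t ht).symm
          have hy : y.val = s := le_antisymm (hst.symm ▸ hyt) hsy
          exact absurd (hy.symm ▸ hs) y.prop
        · exact congrArg Sum.inr (le_antisymm h1 h2) }
  lab := Sum.elim (fun x => (c.lab x.val).get (Option.isSome_iff_ne_none.mpr x.prop)) u.lab

/-- `Pomset.ins C U` is `C[U]`: plugging the pomset `U` into the gap of the context `C`. -/
noncomputable def Pomset.ins {A : Type} : Pomset (Option A) → Pomset A → Pomset A :=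
  Quotient.map₂ LPoset.insL (by
    rintro c₁ c₂ ⟨e, he⟩ u₁ u₂ ⟨f, hf⟩
    have hstar : c₁.uniqueStarL ↔ c₂.uniqueStarL := LPoset.uniqueStarL_congr e he
    refine ⟨{ toEquiv := Equiv.sumCongr
                (e.toEquiv.subtypeEquiv fun x => by
                  rw [show c₂.lab (e.toEquiv x) = c₁.lab x from he x]) f.toEquiv
              map_rel_iff' := ?_ }, ?_⟩
    · rintro (x | x) (y | y)
      · exact e.le_iff_le
      · show (c₂.uniqueStarL ∧ ∃ s, c₂.lab s = none ∧ (e x.val : c₂.carrier) ≤ s) ↔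
             (c₁.uniqueStarL ∧ ∃ s, c₁.lab s = none ∧ x.val ≤ s)
        constructor
        · rintro ⟨hu, s, hs, hxs⟩
          refine ⟨hstar.mpr hu, e.symm s, ?_, ?_⟩
          · have h2 := he (e.symm s)
            rw [OrderIso.apply_symm_apply] at h2
            rw [← h2]; exact hs
          · exact e.le_iff_le.mp (by rw [OrderIso.apply_symm_apply]; exact hxs)
        · rintro ⟨hu, s, hs, hxs⟩
          exact ⟨hstar.mp hu, e s, by rw [he]; exact hs, e.le_iff_le.mpr hxs⟩
      · show (c₂.uniqueStarL ∧ ∃ s, c₂.lab s = none ∧ s ≤ (e y.val : c₂.carrier)) ↔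
             (c₁.uniqueStarL ∧ ∃ s, c₁.lab s = none ∧ s ≤ y.val)
        constructor
        · rintro ⟨hu, s, hs, hsy⟩
          refine ⟨hstar.mpr hu, e.symm s, ?_, ?_⟩
          · have h2 := he (e.symm s)
            rw [OrderIso.apply_symm_apply] at h2
            rw [← h2]; exact hs
          · exact e.le_iff_le.mp (by rw [OrderIso.apply_symm_apply]; exact hsy)
        · rintro ⟨hu, s, hs, hsy⟩
          exact ⟨hstar.mp hu, e s, by rw [he]; exact hs, e.le_iff_le.mpr hsy⟩
      · exact f.le_iff_le
    · rintro (x | x)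
      · exact option_get_eq_get (he x.val) _ _
      · exact hf x)

/-! ### Pomset languages -/

abbrev Lang (A : Type) := Set (Pomset A)

def Lang.seq {A : Type} (L K : Lang A) : Lang A :=
  {W | ∃ U ∈ L, ∃ V ∈ K, W = Pomset.seq U V}

def Lang.par {A : Type} (L K : Lang A) : Lang A :=
  {W | ∃ U ∈ L, ∃ V ∈ K, W = Pomset.par U V}

def Lang.pow {A : Type} (L : Lang A) : ℕ → Lang A
  | 0 => {Pomset.empty A}
  | n + 1 => Lang.seq (Lang.pow L n) L

def Lang.star {A : Type} (L : Lang A) : Lang A := ⋃ n, L.pow n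

/-- Application of a context to a language: `C[L] = {C[U] : U ∈ L}`. -/
def Ctx.img {A : Type} (C : Pomset (Option A)) (L : Lang A) : Lang A :=
  {W | ∃ U ∈ L, W = C.ins U}

/-! ### CKA terms and semantics -/

inductive Term (A : Type) : Type
  | zero : Term A
  | one : Term A
  | var : A → Term A
  | add : Term A → Term A → Term A
  | seq : Term A → Term A → Term A
  | par : Term A → Term A → Term A
  | star : Term A → Term A

/-- Pomset language semantics of CKA terms. -/
def Term.lang {A : Type} : Term A → Lang A
  | .zero => ∅
  | .one => {Pomset.empty A}
  | .var a => {Pomset.single a}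
  | .add e f => e.lang ∪ f.lang
  | .seq e f => Lang.seq e.lang f.lang
  | .par e f => Lang.par e.lang f.lang
  | .star e => Lang.star e.lang

/-- Sets of hypotheses: a hypothesis `e ≤ f` is the pair `(e, f)`. -/
abbrev HypSet (A : Type) := Set (Term A × Term A)

/-- The congruence `≡^H` on CKA terms generated by the CKA axioms and the hypotheses `H`
(the constructor `hyp` encodes `e ≦^H f`, i.e. `e + f ≡^H f`, for `e ≤ f ∈ H`). -/
inductive CongH {A : Type} (H : HypSet A) : Term A → Term A → Prop
  | refl (e) : CongH H e e
  | symm {e f} : CongH H e f → CongH H f e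
  | trans {e f g} : CongH H e f → CongH H f g → CongH H e g
  | addCong {e e' f f'} : CongH H e e' → CongH H f f' → CongH H (.add e f) (.add e' f')
  | seqCong {e e' f f'} : CongH H e e' → CongH H f f' → CongH H (.seq e f) (.seq e' f')
  | parCong {e e' f f'} : CongH H e e' → CongH H f f' → CongH H (.par e f) (.par e' f')
  | starCong {e e'} : CongH H e e' → CongH H (.star e) (.star e')
  | addZero (e) : CongH H (.add e .zero) e
  | addIdem (e) : CongH H (.add e e) e
  | addComm (e f) : CongH H (.add e f) (.add f e)
  | addAssoc (e f g) : CongH H (.add e (.add f g)) (.add (.add e f) g)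
  | seqAssoc (e f g) : CongH H (.seq e (.seq f g)) (.seq (.seq e f) g)
  | seqDistL (e f g) : CongH H (.seq e (.add f g)) (.add (.seq e f) (.seq e g))
  | seqDistR (e f g) : CongH H (.seq (.add e f) g) (.add (.seq e g) (.seq f g))
  | seqOneR (e) : CongH H (.seq e .one) e
  | seqOneL (e) : CongH H (.seq .one e) e
  | seqZeroR (e) : CongH H (.seq e .zero) .zero
  | seqZeroL (e) : CongH H (.seq .zero e) .zero
  | parComm (e f) : CongH H (.par e f) (.par f e)
  | parOne (e) : CongH H (.par e .one) e
  | parZero (e) : CongH H (.par e .zero) .zero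
  | parAssoc (e f g) : CongH H (.par e (.par f g)) (.par (.par e f) g)
  | parDist (e f g) : CongH H (.par e (.add f g)) (.add (.par e f) (.par e g))
  | starUnfoldL (e) : CongH H (.add .one (.seq e (.star e))) (.star e)
  | starUnfoldR (e) : CongH H (.add .one (.seq (.star e) e)) (.star e)
  | lfpL {e f g} : CongH H (.add (.add e (.seq f g)) g) g →
      CongH H (.add (.seq (.star f) e) g) g
  | lfpR {e f g} : CongH H (.add (.add e (.seq f g)) f) f →
      CongH H (.add (.seq e (.star g)) f) f
  | hyp {e f} : (e, f) ∈ H → CongH H (.add e f) f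

/-- `e ≦^H f`, the natural order `e + f ≡^H f`. -/
def LeH {A : Type} (H : HypSet A) (e f : Term A) : Prop := CongH H (.add e f) f

/-- The `H`-closure of a pomset language, as an inductive predicate: the smallest language
containing `L` such that for all `e ≤ f ∈ H` and series-parallel contexts `C`,
if `C[⟦f⟧] ⊆ cl` then `C[⟦e⟧] ⊆ cl`. -/
inductive closure {A : Type} (H : HypSet A) (L : Lang A) : Pomset A → Prop
  | base {U} : U ∈ L → closure H L U
  | step {e f : Term A} (hef : (e, f) ∈ H) {C : Pomset (Option A)} (hC : C.IsSPCtx)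
      (hf : ∀ V ∈ f.lang, closure H L (C.ins V)) {U} (hU : U ∈ e.lang) :
      closure H L (C.ins U)

/-- `cl H L` is the `H`-closure of `L`. -/
def cl {A : Type} (H : HypSet A) (L : Lang A) : Lang A := {U | closure H L U}

/-- The sequential closure: like `cl` but only sequential contexts are used. -/
inductive seqClosure {A : Type} (H : HypSet A) (L : Lang A) : Pomset A → Prop
  | base {U} : U ∈ L → seqClosure H L U
  | step {e f : Term A} (hef : (e, f) ∈ H) {C : Pomset (Option A)} (hC : C.IsSeqCtx)
      (hf : ∀ V ∈ f.lang, seqClosure H L (C.ins V)) {U} (hU : U ∈ e.lang) :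
      seqClosure H L (C.ins U)

def seqCl {A : Type} (H : HypSet A) (L : Lang A) : Lang A := {U | seqClosure H L U}

/-! ### Implication, completeness, reductions -/

/-- `H` implies `H'`: every hypothesis of `H'` is derivable from `H`. -/
def Implies {A : Type} (H H' : HypSet A) : Prop := ∀ p ∈ H', LeH H p.1 p.2

/-- `H` is complete: semantic equivalence implies axiomatic equivalence. -/
def Complete {A : Type} (H : HypSet A) : Prop :=
  ∀ e f : Term A, cl H e.lang = cl H f.lang → CongH H e f

/-- A reduction from `H` to `H'` (presupposing that `H` implies `H'`). -/
structure IsReduction {A : Type} (H H' : HypSet A) (r : Term A → Term A) : Prop where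
  implies : Implies H H'
  equiv : ∀ e, CongH H e (r e)
  reflect : ∀ e f : Term A, cl H e.lang = cl H f.lang → cl H' (r e).lang = cl H' (r f).lang

def Reduces {A : Type} (H H' : HypSet A) : Prop := ∃ r, IsReduction H H' r

/-- A strong reduction from `H` to `H'`. -/
structure IsStrongReduction {A : Type} (H H' : HypSet A) (r : Term A → Term A)
    extends IsReduction H H' r : Prop where
  strong : ∀ e : Term A, cl H e.lang = cl H' (r e).lang

def StronglyReduces {A : Type} (H H' : HypSet A) : Prop := ∃ r, IsStrongReduction H H' r

/-- `H` factorises into `H₀` and `H₁`. -/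
def Factorises {A : Type} (H H₀ H₁ : HypSet A) : Prop :=
  Implies H H₀ ∧ Implies H H₁ ∧ ∀ L : Lang A, L ⊆ SPset A → cl H L = cl H₁ (cl H₀ L)

/-! ### The exchange hypotheses and sp-subsumption -/

/-- The exchange hypotheses `(e∥f)·(g∥h) ≤ (e·g)∥(f·h)`. -/
def exch (A : Type) : HypSet A :=
  {p | ∃ e f g h : Term A,
    p = (Term.seq (.par e f) (.par g h), Term.par (.seq e g) (.seq f h))}

/-- `⊑^sp`: the smallest precongruence on series-parallel pomsets satisfying the
exchange inequality. -/
inductive spSub {A : Type} : Pomset A → Pomset A → Prop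
  | refl {U : Pomset A} : U.IsSP → spSub U U
  | trans {U V W} : spSub U V → spSub V W → spSub U W
  | seqCong {U V U' V'} : spSub U V → spSub U' V' → spSub (Pomset.seq U U') (Pomset.seq V V')
  | parCong {U V U' V'} : spSub U V → spSub U' V' → spSub (Pomset.par U U') (Pomset.par V V')
  | exch {U V W X : Pomset A} : U.IsSP → V.IsSP → W.IsSP → X.IsSP →
      spSub (Pomset.seq (Pomset.par U V) (Pomset.par W X))
            (Pomset.par (Pomset.seq U W) (Pomset.seq V X))

/-! ### KA terms, grounded hypotheses, sequential reductions -/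

/-- A term is a KA term when it contains no `∥`. -/
def Term.noPar {A : Type} : Term A → Prop
  | .zero => True
  | .one => True
  | .var _ => True
  | .add e f => e.noPar ∧ f.noPar
  | .seq e f => e.noPar ∧ f.noPar
  | .par _ _ => False
  | .star e => e.noPar

/-- A non-empty word. -/
def IsNonemptyWord {A : Type} (W : Pomset A) : Prop := W.IsWord ∧ W ≠ Pomset.empty A

/-- A set of hypotheses is grounded when in each hypothesis `e ≤ f`, `e` is a KA term and
`⟦f⟧ = {W}` for a non-empty word `W`. -/
def Grounded {A : Type} (H : HypSet A) : Prop :=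
  ∀ p ∈ H, p.1.noPar ∧ ∃ W : Pomset A, IsNonemptyWord W ∧ p.2.lang = {W}

/-- `≡_KA^H`: the congruence on terms generated by the axioms of `≡` not involving `∥`
together with the hypotheses of `H`. -/
inductive KACong {A : Type} (H : HypSet A) : Term A → Term A → Prop
  | refl (e) : KACong H e e
  | symm {e f} : KACong H e f → KACong H f e
  | trans {e f g} : KACong H e f → KACong H f g → KACong H e g
  | addCong {e e' f f'} : KACong H e e' → KACong H f f' → KACong H (.add e f) (.add e' f')
  | seqCong {e e' f f'} : KACong H e e' → KACong H f f' → KACong H (.seq e f) (.seq e' f')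
  | starCong {e e'} : KACong H e e' → KACong H (.star e) (.star e')
  | addZero (e) : KACong H (.add e .zero) e
  | addIdem (e) : KACong H (.add e e) e
  | addComm (e f) : KACong H (.add e f) (.add f e)
  | addAssoc (e f g) : KACong H (.add e (.add f g)) (.add (.add e f) g)
  | seqAssoc (e f g) : KACong H (.seq e (.seq f g)) (.seq (.seq e f) g)
  | seqDistL (e f g) : KACong H (.seq e (.add f g)) (.add (.seq e f) (.seq e g))
  | seqDistR (e f g) : KACong H (.seq (.add e f) g) (.add (.seq e g) (.seq f g))
  | seqOneR (e) : KACong H (.seq e .one) e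
  | seqOneL (e) : KACong H (.seq .one e) e
  | seqZeroR (e) : KACong H (.seq e .zero) .zero
  | seqZeroL (e) : KACong H (.seq .zero e) .zero
  | starUnfoldL (e) : KACong H (.add .one (.seq e (.star e))) (.star e)
  | starUnfoldR (e) : KACong H (.add .one (.seq (.star e) e)) (.star e)
  | lfpL {e f g} : KACong H (.add (.add e (.seq f g)) g) g →
      KACong H (.add (.seq (.star f) e) g) g
  | lfpR {e f g} : KACong H (.add (.add e (.seq f g)) f) f →
      KACong H (.add (.seq e (.star g)) f) f
  | hyp {e f} : (e, f) ∈ H → KACong H (.add e f) f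

/-- A sequential reduction from `H` to `H'`. -/
structure IsSeqReduction {A : Type} (H H' : HypSet A) (r : Term A → Term A) : Prop where
  implies : Implies H H'
  equiv : ∀ e : Term A, e.noPar → KACong H e (r e)
  closure_eq : ∀ e : Term A, e.noPar → seqCl H e.lang = seqCl H' (r e).lang

/-- Extension of a map on (KA) terms to all CKA terms, homomorphically on `∥`. -/
def parExt {A : Type} (r : Term A → Term A) : Term A → Term A
  | .par e f => .par (parExt r e) (parExt r f)
  | e => r e

/-! ### Inductive characterisation of sp contexts -/

/-- The generators of series-parallel contexts (Lemma: `PC^sp` is the smallest such set). -/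
inductive GenCtx {A : Type} : Pomset (Option A) → Prop
  | star : GenCtx (Pomset.single (none : Option A))
  | seqL {U : Pomset A} {C} : U.IsSP → GenCtx C → GenCtx (Pomset.seq (Pomset.map some U) C)
  | seqR {C} {V : Pomset A} : GenCtx C → V.IsSP → GenCtx (Pomset.seq C (Pomset.map some V))
  | par {U : Pomset A} {C} : U.IsSP → GenCtx C → GenCtx (Pomset.par (Pomset.map some U) C)

/-! ### Reification -/

/-- Homomorphic extension of a letter map to terms. -/
def rTerm {A : Type} (r : A → Term A) : Term A → Term A
  | .zero => .zero
  | .one => .one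
  | .var a => r a
  | .add e f => .add (rTerm r e) (rTerm r f)
  | .seq e f => .seq (rTerm r e) (rTerm r f)
  | .par e f => .par (rTerm r e) (rTerm r f)
  | .star e => .star (rTerm r e)

/-- All letters of a term lie in `Γ`. -/
def TermOver {A : Type} (Γ : Set A) : Term A → Prop
  | .zero => True
  | .one => True
  | .var a => a ∈ Γ
  | .add e f => TermOver Γ e ∧ TermOver Γ f
  | .seq e f => TermOver Γ e ∧ TermOver Γ f
  | .par e f => TermOver Γ e ∧ TermOver Γ f
  | .star e => TermOver Γ e

/-- Extension of a letter map `r` to (series-parallel) pomsets, as a relation: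
`rMap r U V` means `V ∈ r(U)`. -/
inductive rMap {A : Type} (r : A → Term A) : Pomset A → Pomset A → Prop
  | one : rMap r (Pomset.empty A) (Pomset.empty A)
  | var (a : A) {V} : V ∈ (r a).lang → rMap r (Pomset.single a) V
  | seq {U U' V V'} : rMap r U V → rMap r U' V' →
      rMap r (Pomset.seq U U') (Pomset.seq V V')
  | par {U U' V V'} : rMap r U V → rMap r U' V' →
      rMap r (Pomset.par U U') (Pomset.par V V')

/-- Image of a language under (the pomset extension of) `r`. -/
def rImg {A : Type} (r : A → Term A) (L : Lang A) : Lang A := {V | ∃ U ∈ L, rMap r U V}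

/-- Series-parallel pomsets over the subalphabet `Γ`. -/
def SPover {A : Type} (Γ : Set A) : Lang A := {U | U.IsSP ∧ U.Over Γ}

/-- `r : Σ → Term Γ` is a reification from `H` to `H'`. -/
structure IsReification {A : Type} (Γ : Set A) (H H' : HypSet A) (r : A → Term A) : Prop where
  toGamma : ∀ a : A, TermOver Γ (r a)
  equiv : ∀ a : A, CongH H (r a) (.var a)
  expansive : ∀ a ∈ Γ, LeH (∅ : HypSet A) (.var a) (r a)
  preserves : ∀ L : Lang A, L ⊆ SPover Γ → cl H' L ⊆ SPover Γ
  hyps : ∀ p ∈ H, LeH H' (rTerm r p.1) (rTerm r p.2)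

end CKAH

namespace CKAH

/-! ### Boolean observations and CKAO -/

open scoped Classical

/-- Propositional (Boolean) terms over primitive observations `Ω`. -/
inductive BATerm (Ω : Type) : Type
  | bot : BATerm Ω
  | top : BATerm Ω
  | var : Ω → BATerm Ω
  | or : BATerm Ω → BATerm Ω → BATerm Ω
  | and : BATerm Ω → BATerm Ω → BATerm Ω
  | not : BATerm Ω → BATerm Ω

/-- The congruence `≡_BA` generated by the Boolean algebra axioms. -/
inductive BACong {Ω : Type} : BATerm Ω → BATerm Ω → Prop
  | refl (p) : BACong p p
  | symm {p q} : BACong p q → BACong q p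
  | trans {p q r} : BACong p q → BACong q r → BACong p r
  | orCong {p p' q q'} : BACong p p' → BACong q q' → BACong (.or p q) (.or p' q')
  | andCong {p p' q q'} : BACong p p' → BACong q q' → BACong (.and p q) (.and p' q')
  | notCong {p p'} : BACong p p' → BACong (.not p) (.not p')
  | orBot (p) : BACong (.or p .bot) p
  | orComm (p q) : BACong (.or p q) (.or q p)
  | orNot (p) : BACong (.or p (.not p)) .top
  | orAssoc (p q r) : BACong (.or p (.or q r)) (.or (.or p q) r)
  | andTop (p) : BACong (.and p .top) p
  | andComm (p q) : BACong (.and p q) (.and q p)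
  | andNot (p) : BACong (.and p (.not p)) .bot
  | andAssoc (p q r) : BACong (.and p (.and q r)) (.and (.and p q) r)
  | orAndDist (p q r) : BACong (.or p (.and q r)) (.and (.or p q) (.or p r))
  | andOrDist (p q r) : BACong (.and p (.or q r)) (.or (.and p q) (.and p r))

/-- `p ≦_BA q` iff `p ∨ q ≡_BA q`. -/
def leBA {Ω : Type} (p q : BATerm Ω) : Prop := BACong (BATerm.or p q) q

/-- The canonical propositional term of an atom `α ∈ 2^Ω`. -/
noncomputable def atomTerm {Ω : Type} [Fintype Ω] (α : Ω → Bool) : BATerm Ω :=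
  (Finset.univ : Finset Ω).toList.foldr
    (fun o t => BATerm.and (if α o then BATerm.var o else BATerm.not (BATerm.var o)) t)
    BATerm.top

/-- CKAO letters: program actions from `S` or propositional terms over `Ω`. -/
abbrev OLet (S Ω : Type) : Type := S ⊕ BATerm Ω

/-- The hypotheses `bool`: `p = q` whenever `p ≡_BA q`. -/
def boolHyp (S Ω : Type) : HypSet (OLet S Ω) :=
  {x | ∃ p q : BATerm Ω, BACong p q ∧ x = (Term.var (Sum.inr p), Term.var (Sum.inr q))}

/-- The hypotheses `contr`: `p ∧ q ≤ p · q`. -/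
def contrHyp (S Ω : Type) : HypSet (OLet S Ω) :=
  {x | ∃ p q : BATerm Ω,
    x = (Term.var (Sum.inr (BATerm.and p q)),
         Term.seq (Term.var (Sum.inr p)) (Term.var (Sum.inr q)))}

/-- The hypotheses `glue`: `0 = ⊥` and `p + q = p ∨ q`. -/
def glueHyp (S Ω : Type) : HypSet (OLet S Ω) :=
  {(Term.zero, Term.var (Sum.inr BATerm.bot)), (Term.var (Sum.inr BATerm.bot), Term.zero)} ∪
  {x | ∃ p q : BATerm Ω,
    x = (Term.add (Term.var (Sum.inr p)) (Term.var (Sum.inr q)),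
         Term.var (Sum.inr (BATerm.or p q))) ∨
    x = (Term.var (Sum.inr (BATerm.or p q)),
         Term.add (Term.var (Sum.inr p)) (Term.var (Sum.inr q)))}

/-- The hypotheses of CKAO: `obs = bool ∪ contr ∪ exch ∪ glue`. -/
def obsHyp (S Ω : Type) : HypSet (OLet S Ω) :=
  boolHyp S Ω ∪ contrHyp S Ω ∪ exch (OLet S Ω) ∪ glueHyp S Ω

/-- The hypotheses `contr' = {α ≤ α·α : α ∈ At}`. -/
noncomputable def contr'Hyp (S Ω : Type) [Fintype Ω] : HypSet (OLet S Ω) :=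
  {x | ∃ α : Ω → Bool,
    x = (Term.var (Sum.inr (atomTerm α)),
         Term.seq (Term.var (Sum.inr (atomTerm α))) (Term.var (Sum.inr (atomTerm α))))}

/-- The letter map of the reification: each action is mapped to itself, each
propositional term `p` to the sum of all atoms `α` with `α ≦_BA p`. -/
noncomputable def obsR (S Ω : Type) [Fintype Ω] [DecidableEq Ω] :
    OLet S Ω → Term (OLet S Ω)
  | Sum.inl a => Term.var (Sum.inl a)
  | Sum.inr p =>
    ((Finset.univ : Finset (Ω → Bool)).filter (fun α => leBA (atomTerm α) p)).toList.foldr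
      (fun α t => Term.add (Term.var (Sum.inr (atomTerm α))) t) Term.zero

end CKAH

/-!
Soundness is an induction over the congruence, since the closure of a language respects all
operations. For completeness, let `K` be the algebra of terms modulo `≡^obs`. A term `f` is
recognized by a finite automaton with weights in `K` together with a finite preordered monoid `M`,
again with a parallel composition and exchange: the value of a pomset in `M` decides whether it is
accepted, the accepted values form a lower set, and in `K` pomsets with accepted values are below
`f`. By induction on `e`, every term `e` is in `K` below a finite sum of elements, each bounded by
the value of some pomset of `e`; a star is bounded through the star of a matrix indexed by `M`.
Hence `e ≤ f` holds in `K` as soon as all pomsets of `e` are accepted.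

It remains to see that closing a language only adds pomsets with smaller values. Modulo `≡^obs` an
observation is the sum of its atoms, so it can be given the set of the values of its atoms. With
this convention the hypotheses `bool` and `glue` become equalities, the exchange law holds in `M`,
and contraction only requires `v ≤ v * v` for the value `v` of an atom. The last inequality is
what makes recognizers for starred terms delicate: reading a letter once must allow everything that
reading it several times does.
-/

namespace CKAH

open scoped Pointwise

section Bimonoids

/-- A bimonoid: a monoid together with a commutative parallel composition `∥` that has the same
unit. It is the algebraic structure carried by pomsets. -/
class Bimonoid (M : Type*) extends Monoid M where
  par : M → M → M
  par_assoc (a b c : M) : par (par a b) c = par a (par b c)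
  par_comm (a b : M) : par a b = par b a
  par_one (a : M) : par a 1 = a

infixl:70 "∥" => Bimonoid.par

open Bimonoid

variable {M N : Type*} [Bimonoid M] [Bimonoid N]

theorem one_par (a : M) : 1 ∥ a = a := by rw [par_comm, par_one]

theorem par_par_par_comm (a b c d : M) : (a ∥ b) ∥ (c ∥ d) = (a ∥ c) ∥ (b ∥ d) := by
  rw [par_assoc, par_assoc, ← par_assoc b, par_comm b, par_assoc]

theorem mul_par_mul_of_eq_one {a b c d : M} (had : a = 1 ∨ d = 1) (hbc : b = 1 ∨ c = 1) :
    (a * b) ∥ (c * d) = (a ∥ c) * (b ∥ d) := by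
  rcases had with rfl | rfl <;> rcases hbc with rfl | rfl <;> simp [one_par, par_one]

instance : Bimonoid (M × N) where
  par a b := (a.1 ∥ b.1, a.2 ∥ b.2)
  par_assoc a b c := by simp only [par_assoc]
  par_comm a b := by rw [par_comm a.1, par_comm a.2]
  par_one a := by simp [par_one]

instance : Bimonoid (Set M) where
  par := Set.image2 (· ∥ ·)
  par_assoc _ _ _ := Set.image2_assoc par_assoc
  par_comm _ _ := Set.image2_comm par_comm
  par_one s := by simp [← Set.singleton_one, Set.image2_singleton_right, par_one]

end Bimonoids

/-! ### The bimonoid of pomsets -/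

namespace Pomset

open Bimonoid

variable {A : Type}

theorem mk_eq_mk_of_orderIso {u v : LPoset A} (e : u.carrier ≃o v.carrier)
    (he : ∀ x, v.lab (e x) = u.lab x) : (⟦u⟧ : Pomset A) = ⟦v⟧ :=
  Quotient.sound ⟨e, he⟩

instance : IsEmpty (LPoset.emptyL A).carrier := inferInstanceAs (IsEmpty (Fin 0))

protected theorem seq_assoc (U V W : Pomset A) : (U.seq V).seq W = U.seq (V.seq W) := by
  induction U, V, W using Quotient.inductionOn₃ with
  | h u v w =>
    refine mk_eq_mk_of_orderIso (OrderIso.sumLexAssoc u.carrier v.carrier w.carrier) ?_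
    rintro ((_ | _) | _) <;> rfl

protected theorem seq_empty (U : Pomset A) : U.seq (empty A) = U := by
  induction U using Quotient.inductionOn with
  | h u =>
    refine mk_eq_mk_of_orderIso
      (OrderIso.sumLexEmpty (α := u.carrier) (β := (LPoset.emptyL A).carrier)) ?_
    rintro (_ | x)
    exacts [rfl, isEmptyElim x]

protected theorem empty_seq (U : Pomset A) : (empty A).seq U = U := by
  induction U using Quotient.inductionOn with
  | h u =>
    refine mk_eq_mk_of_orderIso
      (OrderIso.emptySumLex (α := u.carrier) (β := (LPoset.emptyL A).carrier)) ?_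
    rintro (x | _)
    exacts [isEmptyElim x, rfl]

protected theorem par_assoc (U V W : Pomset A) : (U.par V).par W = U.par (V.par W) := by
  induction U, V, W using Quotient.inductionOn₃ with
  | h u v w =>
    refine mk_eq_mk_of_orderIso (OrderIso.sumAssoc u.carrier v.carrier w.carrier) ?_
    rintro ((_ | _) | _) <;> rfl

protected theorem par_comm (U V : Pomset A) : U.par V = V.par U := by
  induction U, V using Quotient.inductionOn₂ with
  | h u v =>
    refine mk_eq_mk_of_orderIso (OrderIso.sumComm u.carrier v.carrier) ?_
    rintro (_ | _) <;> rfl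

protected theorem par_empty (U : Pomset A) : U.par (empty A) = U := by
  induction U using Quotient.inductionOn with
  | h u =>
    refine mk_eq_mk_of_orderIso
      { toEquiv := Equiv.sumEmpty u.carrier (LPoset.emptyL A).carrier, map_rel_iff' := ?_ } ?_
    · rintro (_ | x) (_ | y)
      exacts [Sum.inl_le_inl_iff.symm, isEmptyElim y, isEmptyElim x, isEmptyElim x]
    · rintro (_ | x)
      exacts [rfl, isEmptyElim x]

instance : Bimonoid (Pomset A) where
  mul := seq
  one := empty A
  mul_assoc := Pomset.seq_assoc
  one_mul := Pomset.empty_seq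
  mul_one := Pomset.seq_empty
  par := par
  par_assoc := Pomset.par_assoc
  par_comm := Pomset.par_comm
  par_one := Pomset.par_empty

theorem seq_eq_mul (U V : Pomset A) : U.seq V = U * V := rfl

theorem par_eq_par (U V : Pomset A) : U.par V = U ∥ V := rfl

theorem empty_eq_one : empty A = 1 := rfl

/-! ### Series-parallel contexts -/

/-- The number of gaps `*` of a pomset over `Option A`. -/
noncomputable def gapCount : Pomset (Option A) → ℕ :=
  Quotient.lift (fun c => Nat.card {x : c.carrier // c.lab x = none}) (by
    rintro c d ⟨e, he⟩
    exact Nat.card_congr (e.toEquiv.subtypeEquiv fun x => by rw [← he x]; rfl))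

theorem isCtx_iff_gapCount_eq_one {C : Pomset (Option A)} : C.IsCtx ↔ C.gapCount = 1 := by
  induction C using Quotient.inductionOn with
  | h c =>
    refine Iff.trans ?_ (Nat.card_eq_one_iff_exists (α := {x // c.lab x = none})).symm
    exact ⟨fun ⟨s, hs, hu⟩ => ⟨⟨s, hs⟩, fun y => Subtype.ext (hu y y.2)⟩,
      fun ⟨s, hu⟩ => ⟨s, s.2, fun y hy => congrArg Subtype.val (hu ⟨y, hy⟩)⟩⟩

theorem gapCount_one : gapCount (1 : Pomset (Option A)) = 0 :=
  Nat.card_eq_zero.2 (.inl ⟨fun x => x.1.elim0⟩)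

theorem gapCount_map_some (U : Pomset A) : (U.map some).gapCount = 0 := by
  induction U using Quotient.inductionOn with
  | h u => exact Nat.card_eq_zero.2 (.inl ⟨fun x => Option.some_ne_none _ x.2⟩)

theorem gapCount_single_none : gapCount (single (none : Option A)) = 1 :=
  isCtx_iff_gapCount_eq_one.1 ⟨⟨⟩, rfl, fun _ _ => rfl⟩

theorem gapCount_mul (C D : Pomset (Option A)) : (C * D).gapCount = C.gapCount + D.gapCount := by
  induction C, D using Quotient.inductionOn₂ with
  | h c d => exact (Nat.card_congr Equiv.subtypeSum).trans Nat.card_sum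

theorem gapCount_par (C D : Pomset (Option A)) : (C ∥ D).gapCount = C.gapCount + D.gapCount := by
  induction C, D using Quotient.inductionOn₂ with
  | h c d => exact (Nat.card_congr Equiv.subtypeSum).trans Nat.card_sum

theorem map_mul {B : Type} (f : A → B) (U V : Pomset A) : (U * V).map f = U.map f * V.map f := by
  induction U, V using Quotient.inductionOn₂ with
  | h u v =>
    refine mk_eq_mk_of_orderIso (OrderIso.refl _) ?_
    rintro (_ | _) <;> rfl

theorem map_par {B : Type} (f : A → B) (U V : Pomset A) : (U ∥ V).map f = U.map f ∥ V.map f := by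
  induction U, V using Quotient.inductionOn₂ with
  | h u v =>
    refine mk_eq_mk_of_orderIso (OrderIso.refl _) ?_
    rintro (_ | _) <;> rfl

theorem map_one {B : Type} (f : A → B) : (1 : Pomset A).map f = 1 :=
  mk_eq_mk_of_orderIso (OrderIso.refl _) fun x => x.elim0

theorem IsSP.exists_eq_map_some {C : Pomset (Option A)} (hC : C.IsSP) (h : C.gapCount = 0) :
    ∃ U : Pomset A, U.IsSP ∧ C = U.map some := by
  induction hC with
  | empty => exact ⟨1, .empty, (map_one _).symm⟩
  | single a =>
    cases a with
    | none => exact absurd h (by simp [gapCount_single_none])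
    | some a => exact ⟨Pomset.single a, .single a, rfl⟩
  | seq _ _ ihU ihV =>
    rw [seq_eq_mul, gapCount_mul, Nat.add_eq_zero_iff] at h
    obtain ⟨U, hU, rfl⟩ := ihU h.1
    obtain ⟨V, hV, rfl⟩ := ihV h.2
    exact ⟨U * V, .seq hU hV, (map_mul some U V).symm⟩
  | par _ _ ihU ihV =>
    rw [par_eq_par, gapCount_par, Nat.add_eq_zero_iff] at h
    obtain ⟨U, hU, rfl⟩ := ihU h.1
    obtain ⟨V, hV, rfl⟩ := ihV h.2
    exact ⟨U ∥ V, .par hU hV, (map_par some U V).symm⟩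

theorem IsSP.genCtx {C : Pomset (Option A)} (hC : C.IsSP) (h : C.gapCount = 1) : GenCtx C := by
  induction hC with
  | empty => exact absurd h (by simp [empty_eq_one, gapCount_one])
  | single a =>
    cases a with
    | none => exact .star
    | some a => exact absurd ((gapCount_map_some (Pomset.single a)).symm.trans h) zero_ne_one
  | @seq C D hC hD ihC ihD =>
    rw [seq_eq_mul, gapCount_mul, Nat.add_eq_one_iff] at h
    obtain ⟨hC₀, hD₁⟩ | ⟨hC₁, hD₀⟩ := h
    · obtain ⟨U, hU, rfl⟩ := hC.exists_eq_map_some hC₀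
      exact .seqL hU (ihD hD₁)
    · obtain ⟨V, hV, rfl⟩ := hD.exists_eq_map_some hD₀
      exact .seqR (ihC hC₁) hV
  | @par C D hC hD ihC ihD =>
    rw [par_eq_par, gapCount_par, Nat.add_eq_one_iff] at h
    obtain ⟨hC₀, hD₁⟩ | ⟨hC₁, hD₀⟩ := h
    · obtain ⟨U, hU, rfl⟩ := hC.exists_eq_map_some hC₀
      exact .par hU (ihD hD₁)
    · obtain ⟨V, hV, rfl⟩ := hD.exists_eq_map_some hD₀
      rw [Pomset.par_comm]
      exact .par hV (ihC hC₁)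

theorem IsSP.map {B : Type} {U : Pomset A} (hU : U.IsSP) (f : A → B) : (U.map f).IsSP := by
  induction hU with
  | empty => rw [empty_eq_one, map_one]; exact .empty
  | single a => exact .single (f a)
  | seq _ _ ihU ihV => rw [seq_eq_mul, map_mul]; exact .seq ihU ihV
  | par _ _ ihU ihV => rw [par_eq_par, map_par]; exact .par ihU ihV

end Pomset

theorem GenCtx.isSPCtx {A : Type} {C : Pomset (Option A)} (hC : GenCtx C) : C.IsSPCtx := by
  rw [Pomset.IsSPCtx, Pomset.isCtx_iff_gapCount_eq_one]
  induction hC with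
  | star => exact ⟨Pomset.gapCount_single_none, .single _⟩
  | seqL hU _ ih =>
    exact ⟨by rw [Pomset.seq_eq_mul, Pomset.gapCount_mul, Pomset.gapCount_map_some, ih.1],
      .seq (hU.map _) ih.2⟩
  | seqR _ hV ih =>
    exact ⟨by rw [Pomset.seq_eq_mul, Pomset.gapCount_mul, Pomset.gapCount_map_some, ih.1],
      .seq ih.2 (hV.map _)⟩
  | par hU _ ih =>
    exact ⟨by rw [Pomset.par_eq_par, Pomset.gapCount_par, Pomset.gapCount_map_some, ih.1],
      .par (hU.map _) ih.2⟩

theorem genCtx_iff_isSPCtx {A : Type} {C : Pomset (Option A)} : GenCtx C ↔ C.IsSPCtx :=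
  ⟨GenCtx.isSPCtx, fun ⟨hC, hSP⟩ => hSP.genCtx (Pomset.isCtx_iff_gapCount_eq_one.1 hC)⟩

/-! ### Insertion into contexts -/

namespace LPoset

variable {A : Type}

section Order

variable {u v : LPoset A} {x x' : u.carrier} {y y' : v.carrier}

theorem seqL_inl_le_inl : LE.le (α := (u.seqL v).carrier) (.inl x) (.inl x') ↔ x ≤ x' :=
  Sum.lex_inl_inl

theorem seqL_inr_le_inr : LE.le (α := (u.seqL v).carrier) (.inr y) (.inr y') ↔ y ≤ y' :=
  Sum.lex_inr_inr

theorem seqL_inl_le_inr : LE.le (α := (u.seqL v).carrier) (.inl x) (.inr y) :=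
  .sep x y

theorem not_seqL_inr_le_inl : ¬LE.le (α := (u.seqL v).carrier) (.inr y) (.inl x) :=
  Sum.lex_inr_inl

theorem parL_inl_le_inl : LE.le (α := (u.parL v).carrier) (.inl x) (.inl x') ↔ x ≤ x' :=
  Sum.inl_le_inl_iff

theorem parL_inr_le_inr : LE.le (α := (u.parL v).carrier) (.inr y) (.inr y') ↔ y ≤ y' :=
  Sum.inr_le_inr_iff

theorem not_parL_inl_le_inr : ¬LE.le (α := (u.parL v).carrier) (.inl x) (.inr y) :=
  Sum.not_inl_le_inr

theorem not_parL_inr_le_inl : ¬LE.le (α := (u.parL v).carrier) (.inr y) (.inl x) :=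
  Sum.not_inr_le_inl

end Order

section Insertion

variable {c : LPoset (Option A)} {u : LPoset A} {s : c.carrier}
  {x : {x : c.carrier // c.lab x ≠ none}} {y : u.carrier}

theorem insL_inl_le_inr (hc : c.uniqueStarL) (hs : c.lab s = none) :
    LE.le (α := (c.insL u).carrier) (.inl x) (.inr y) ↔ x.1 ≤ s :=
  ⟨fun ⟨_, _, ht, hxt⟩ => hc.unique ht hs ▸ hxt, fun h => ⟨hc, s, hs, h⟩⟩

theorem insL_inr_le_inl (hc : c.uniqueStarL) (hs : c.lab s = none) :
    LE.le (α := (c.insL u).carrier) (.inr y) (.inl x) ↔ s ≤ x.1 :=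
  ⟨fun ⟨_, _, ht, htx⟩ => hc.unique ht hs ▸ htx, fun h => ⟨hc, s, hs, h⟩⟩

end Insertion

end LPoset

namespace Pomset

open LPoset

variable {A : Type}

theorem ins_single_none (U : Pomset A) : (single (none : Option A)).ins U = U := by
  induction U using Quotient.inductionOn with
  | h u =>
    have : IsEmpty {x : (singleL (none : Option A)).carrier // (singleL none).lab x ≠ none} :=
      ⟨fun x => x.2 rfl⟩
    refine (mk_eq_mk_of_orderIso
      { toEquiv := (Equiv.emptySum {x // (singleL none).lab x ≠ none} u.carrier).symm
        map_rel_iff' := Iff.rfl } fun _ => rfl).symm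

theorem ins_map_some_mul (U : Pomset A) {C : Pomset (Option A)} (hC : C.IsCtx) (V : Pomset A) :
    (U.map some * C).ins V = U * C.ins V := by
  have hUC : (U.map some * C).IsCtx := by
    rw [isCtx_iff_gapCount_eq_one] at hC ⊢
    rw [gapCount_mul, gapCount_map_some, hC]
  induction U, C, V using Quotient.inductionOn₃ with
  | h u c v =>
    obtain ⟨s, hs, -⟩ := id hC
    let uc := (u.mapL some).seqL c
    have hs' : uc.lab (.inr s) = none := hs
    let e : (uc.insL v).carrier ≃ (u.seqL (c.insL v)).carrier :=
      ((Equiv.subtypeSum.trans (Equiv.sumCongr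
        (Equiv.subtypeUnivEquiv fun x => Option.some_ne_none (u.lab x)) (Equiv.refl _))).sumCongr
          (Equiv.refl _)).trans (Equiv.sumAssoc _ _ _)
    refine mk_eq_mk_of_orderIso ⟨e, ?_⟩ ?_
    · rintro (⟨x | x, hx⟩ | x) (⟨y | y, hy⟩ | y)
      · exact seqL_inl_le_inl.trans (seqL_inl_le_inl (v := c)).symm
      · exact iff_of_true seqL_inl_le_inr (seqL_inl_le_inr (v := c))
      · exact iff_of_true seqL_inl_le_inr ((insL_inl_le_inr hUC hs').2 seqL_inl_le_inr)
      · exact iff_of_false not_seqL_inr_le_inl (not_seqL_inr_le_inl (v := c))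
      · exact seqL_inr_le_inr.trans (seqL_inr_le_inr (u := u.mapL some)).symm
      · exact (seqL_inr_le_inr.trans (insL_inl_le_inr hC hs)).trans
          ((insL_inl_le_inr hUC hs').trans (seqL_inr_le_inr (u := u.mapL some))).symm
      · exact iff_of_false not_seqL_inr_le_inl
          (not_seqL_inr_le_inl ∘ (insL_inr_le_inl hUC hs').1)
      · exact (seqL_inr_le_inr.trans (insL_inr_le_inl hC hs)).trans
          ((insL_inr_le_inl hUC hs').trans (seqL_inr_le_inr (u := u.mapL some))).symm
      · exact seqL_inr_le_inr
    · rintro (⟨_ | _, _⟩ | _) <;> rfl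

theorem ins_mul_map_some {C : Pomset (Option A)} (hC : C.IsCtx) (U V : Pomset A) :
    (C * U.map some).ins V = C.ins V * U := by
  have hCU : (C * U.map some).IsCtx := by
    rw [isCtx_iff_gapCount_eq_one] at hC ⊢
    rw [gapCount_mul, gapCount_map_some, hC]
  induction C, U, V using Quotient.inductionOn₃ with
  | h c u v =>
    obtain ⟨s, hs, -⟩ := id hC
    let cu := c.seqL (u.mapL some)
    have hs' : cu.lab (.inl s) = none := hs
    let e : (cu.insL v).carrier ≃ ((c.insL v).seqL u).carrier :=
      ((Equiv.subtypeSum.trans (Equiv.sumCongr (Equiv.refl _)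
        (Equiv.subtypeUnivEquiv fun x => Option.some_ne_none (u.lab x)))).sumCongr
          (Equiv.refl _)).trans ((Equiv.sumAssoc _ _ _).trans
            (((Equiv.refl _).sumCongr (Equiv.sumComm _ _)).trans (Equiv.sumAssoc _ _ _).symm))
    refine mk_eq_mk_of_orderIso ⟨e, ?_⟩ ?_
    · rintro (⟨x | x, hx⟩ | x) (⟨y | y, hy⟩ | y)
      · exact seqL_inl_le_inl.trans (seqL_inl_le_inl (v := u.mapL some)).symm
      · exact iff_of_true seqL_inl_le_inr (seqL_inl_le_inr (v := u.mapL some))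
      · exact (seqL_inl_le_inl.trans (insL_inl_le_inr hC hs)).trans
          ((insL_inl_le_inr hCU hs').trans (seqL_inl_le_inl (v := u.mapL some))).symm
      · exact iff_of_false not_seqL_inr_le_inl (not_seqL_inr_le_inl (v := u.mapL some))
      · exact seqL_inr_le_inr.trans (seqL_inr_le_inr (u := c)).symm
      · exact iff_of_false not_seqL_inr_le_inl
          (not_seqL_inr_le_inl ∘ (insL_inl_le_inr hCU hs').1)
      · exact (seqL_inl_le_inl.trans (insL_inr_le_inl hC hs)).trans
          ((insL_inr_le_inl hCU hs').trans (seqL_inl_le_inl (v := u.mapL some))).symm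
      · exact iff_of_true seqL_inl_le_inr ((insL_inr_le_inl hCU hs').2 seqL_inl_le_inr)
      · exact seqL_inl_le_inl
    · rintro (⟨_ | _, _⟩ | _) <;> rfl

theorem ins_map_some_par (U : Pomset A) {C : Pomset (Option A)} (hC : C.IsCtx) (V : Pomset A) :
    (U.map some ∥ C).ins V = U ∥ C.ins V := by
  have hUC : (U.map some ∥ C).IsCtx := by
    rw [isCtx_iff_gapCount_eq_one] at hC ⊢
    rw [gapCount_par, gapCount_map_some, hC]
  induction U, C, V using Quotient.inductionOn₃ with
  | h u c v =>
    obtain ⟨s, hs, -⟩ := id hC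
    let uc := (u.mapL some).parL c
    have hs' : uc.lab (.inr s) = none := hs
    let e : (uc.insL v).carrier ≃ (u.parL (c.insL v)).carrier :=
      ((Equiv.subtypeSum.trans (Equiv.sumCongr
        (Equiv.subtypeUnivEquiv fun x => Option.some_ne_none (u.lab x)) (Equiv.refl _))).sumCongr
          (Equiv.refl _)).trans (Equiv.sumAssoc _ _ _)
    refine mk_eq_mk_of_orderIso ⟨e, ?_⟩ ?_
    · rintro (⟨x | x, hx⟩ | x) (⟨y | y, hy⟩ | y)
      · exact parL_inl_le_inl.trans (parL_inl_le_inl (v := c)).symm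
      · exact iff_of_false not_parL_inl_le_inr (not_parL_inl_le_inr (v := c))
      · exact iff_of_false not_parL_inl_le_inr
          (not_parL_inl_le_inr ∘ (insL_inl_le_inr hUC hs').1)
      · exact iff_of_false not_parL_inr_le_inl (not_parL_inr_le_inl (v := c))
      · exact parL_inr_le_inr.trans (parL_inr_le_inr (u := u.mapL some)).symm
      · exact (parL_inr_le_inr.trans (insL_inl_le_inr hC hs)).trans
          ((insL_inl_le_inr hUC hs').trans (parL_inr_le_inr (u := u.mapL some))).symm
      · exact iff_of_false not_parL_inr_le_inl
          (not_parL_inr_le_inl ∘ (insL_inr_le_inl hUC hs').1)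
      · exact (parL_inr_le_inr.trans (insL_inr_le_inl hC hs)).trans
          ((insL_inr_le_inl hUC hs').trans (parL_inr_le_inr (u := u.mapL some))).symm
      · exact parL_inr_le_inr
    · rintro (⟨_ | _, _⟩ | _) <;> rfl

end Pomset

end CKAH

namespace CKAH

open scoped Pointwise
open Bimonoid

/-! ### Languages and their closures -/

section Semantics

variable {A : Type}

theorem Lang.seq_eq_mul (L K : Lang A) : L.seq K = L * K := by
  ext W
  simp only [Lang.seq, Set.mem_ofPred_eq, Set.mem_mul, eq_comm (a := W)]
  rfl

theorem Lang.par_eq_par (L K : Lang A) : L.par K = L ∥ K := by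
  ext W
  simp only [Lang.par, Set.mem_ofPred_eq, eq_comm (a := W)]
  rfl

theorem Lang.star_eq_iUnion_pow (L : Lang A) : L.star = ⋃ n : ℕ, L ^ n := by
  refine Set.iUnion_congr fun n => ?_
  induction n with
  | zero => rfl
  | succ n ih => rw [Lang.pow, Lang.seq_eq_mul, ih, pow_succ]

namespace Term

theorem lang_zero : (zero : Term A).lang = ∅ := rfl

theorem lang_one : (one : Term A).lang = 1 := rfl

theorem lang_add (e f : Term A) : (e.add f).lang = e.lang ∪ f.lang := rfl

theorem lang_seq (e f : Term A) : (e.seq f).lang = e.lang * f.lang := Lang.seq_eq_mul _ _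

theorem lang_par (e f : Term A) : (e.par f).lang = e.lang ∥ f.lang := Lang.par_eq_par _ _

theorem lang_star (e : Term A) : e.star.lang = ⋃ n : ℕ, e.lang ^ n := Lang.star_eq_iUnion_pow _

end Term

theorem mul_subset_SPset {L K : Lang A} (hL : L ⊆ SPset A) (hK : K ⊆ SPset A) :
    L * K ⊆ SPset A :=
  Set.mul_subset_iff.2 fun _ hU _ hV => .seq (hL hU) (hK hV)

theorem pow_subset_SPset {L : Lang A} (hL : L ⊆ SPset A) (n : ℕ) : L ^ n ⊆ SPset A := by
  induction n with
  | zero => exact Set.one_subset.2 .empty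
  | succ n ih => exact pow_succ L n ▸ mul_subset_SPset ih hL

theorem Term.lang_subset_SPset (e : Term A) : e.lang ⊆ SPset A := by
  induction e with
  | zero => exact Set.empty_subset _
  | one => exact Set.one_subset.2 .empty
  | var a => exact Set.singleton_subset_iff.2 (.single a)
  | add e f ihe ihf => exact Set.union_subset ihe ihf
  | seq e f ihe ihf => exact lang_seq e f ▸ mul_subset_SPset ihe ihf
  | par e f ihe ihf =>
    exact lang_par e f ▸ Set.image2_subset_iff.2 fun _ hU _ hV => .par (ihe hU) (ihf hV)
  | star e ih => exact lang_star e ▸ Set.iUnion_subset (pow_subset_SPset ih)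

theorem GenCtx.isSP_ins {C : Pomset (Option A)} (hC : GenCtx C) {U : Pomset A} (hU : U.IsSP) :
    (C.ins U).IsSP := by
  induction hC with
  | star => rwa [Pomset.ins_single_none]
  | seqL hV hC ih => exact Pomset.ins_map_some_mul _ hC.isSPCtx.1 U ▸ .seq hV ih
  | seqR hC hV ih => exact Pomset.ins_mul_map_some hC.isSPCtx.1 _ U ▸ .seq ih hV
  | par hV hC ih => exact Pomset.ins_map_some_par _ hC.isSPCtx.1 U ▸ .par hV ih

end Semantics

section Closure

variable {A : Type} {H : HypSet A} {L K : Lang A} {U V : Pomset A}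

theorem subset_cl (L : Lang A) : L ⊆ cl H L := fun _ => closure.base

theorem cl_subset_cl_iff : cl H L ⊆ cl H K ↔ L ⊆ cl H K := by
  refine ⟨(subset_cl L).trans, fun h U hU => ?_⟩
  induction (hU : closure H L U) with
  | base hU => exact h hU
  | step hef hC _ hU ih => exact closure.step hef hC ih hU

theorem cl_mono (h : L ⊆ K) : cl H L ⊆ cl H K := cl_subset_cl_iff.2 (h.trans (subset_cl K))

theorem cl_eq_cl_iff : cl H L = cl H K ↔ L ⊆ cl H K ∧ K ⊆ cl H L := by
  rw [Set.Subset.antisymm_iff, cl_subset_cl_iff, cl_subset_cl_iff]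

theorem cl_subset_SPset (hL : L ⊆ SPset A) : cl H L ⊆ SPset A := by
  intro U hU
  induction (hU : closure H L U) with
  | base hU => exact hL hU
  | @step e _ _ _ hC _ _ hU _ => exact (genCtx_iff_isSPCtx.2 hC).isSP_ins (e.lang_subset_SPset hU)

theorem mul_mem_cl_of_left (hV : V.IsSP) (h : ∀ U ∈ L, U * V ∈ cl H K) (hU : U ∈ cl H L) :
    U * V ∈ cl H K := by
  induction (hU : closure H L U) with
  | base hU => exact h _ hU
  | step hef hC _ hU ih =>
    rw [← Pomset.ins_mul_map_some hC.1]
    refine closure.step hef ((genCtx_iff_isSPCtx.2 hC).seqR hV).isSPCtx (fun V' hV' => ?_) hU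
    rw [Pomset.seq_eq_mul, Pomset.ins_mul_map_some hC.1]; exact ih V' hV'

theorem mul_mem_cl_of_right (hU : U.IsSP) (h : ∀ V ∈ L, U * V ∈ cl H K) (hV : V ∈ cl H L) :
    U * V ∈ cl H K := by
  induction (hV : closure H L V) with
  | base hV => exact h _ hV
  | step hef hC _ hV ih =>
    rw [← Pomset.ins_map_some_mul U hC.1]
    refine closure.step hef ((genCtx_iff_isSPCtx.2 hC).seqL hU).isSPCtx (fun V' hV' => ?_) hV
    rw [Pomset.seq_eq_mul, Pomset.ins_map_some_mul U hC.1]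
    exact ih V' hV'

theorem par_mem_cl_of_right (hU : U.IsSP) (h : ∀ V ∈ L, U ∥ V ∈ cl H K) (hV : V ∈ cl H L) :
    U ∥ V ∈ cl H K := by
  induction (hV : closure H L V) with
  | base hV => exact h _ hV
  | step hef hC _ hV ih =>
    rw [← Pomset.ins_map_some_par U hC.1]
    refine closure.step hef ((genCtx_iff_isSPCtx.2 hC).par hU).isSPCtx (fun V' hV' => ?_) hV
    rw [Pomset.par_eq_par, Pomset.ins_map_some_par U hC.1]
    exact ih V' hV'

theorem cl_mul_cl_subset (hL : L ⊆ SPset A) (hK : K ⊆ SPset A) :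
    cl H L * cl H K ⊆ cl H (L * K) :=
  Set.mul_subset_iff.2 fun _ hU _ hV =>
    mul_mem_cl_of_left (cl_subset_SPset hK hV) (fun _ hU' =>
      mul_mem_cl_of_right (hL hU') (fun _ hV' => subset_cl _ (Set.mul_mem_mul hU' hV')) hV) hU

theorem cl_par_cl_subset (hL : L ⊆ SPset A) (hK : K ⊆ SPset A) :
    cl H L ∥ cl H K ⊆ cl H (L ∥ K) := by
  refine Set.image2_subset_iff.2 fun U hU V hV =>
    par_mem_cl_of_right (cl_subset_SPset hL hU) (fun V' hV' => ?_) hV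
  rw [par_comm U]
  refine par_mem_cl_of_right (hK hV') (fun U' hU' => ?_) hU
  rw [par_comm V']
  exact subset_cl _ (Set.mem_image2_of_mem hU' hV')

theorem cl_union : cl H (L ∪ K) = cl H (cl H L ∪ cl H K) :=
  (cl_mono (Set.union_subset_union (subset_cl L) (subset_cl K))).antisymm
    (cl_subset_cl_iff.2 (Set.union_subset (cl_mono Set.subset_union_left)
      (cl_mono Set.subset_union_right)))

theorem cl_mul (hL : L ⊆ SPset A) (hK : K ⊆ SPset A) : cl H (L * K) = cl H (cl H L * cl H K) :=
  (cl_mono (Set.mul_subset_mul (subset_cl L) (subset_cl K))).antisymm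
    (cl_subset_cl_iff.2 (cl_mul_cl_subset hL hK))

theorem cl_par (hL : L ⊆ SPset A) (hK : K ⊆ SPset A) : cl H (L ∥ K) = cl H (cl H L ∥ cl H K) :=
  (cl_mono (Set.image2_subset (subset_cl L) (subset_cl K))).antisymm
    (cl_subset_cl_iff.2 (cl_par_cl_subset hL hK))

theorem cl_pow_subset (hL : L ⊆ SPset A) (n : ℕ) : cl H L ^ n ⊆ cl H (L ^ n) := by
  induction n with
  | zero => exact subset_cl _
  | succ n ih =>
    rw [pow_succ, pow_succ]
    exact (Set.mul_subset_mul_right ih).trans (cl_mul_cl_subset (pow_subset_SPset hL n) hL)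

theorem cl_iUnion_pow (hL : L ⊆ SPset A) :
    cl H (⋃ n : ℕ, L ^ n) = cl H (⋃ n : ℕ, cl H L ^ n) :=
  (cl_mono (Set.iUnion_mono fun _ => Set.pow_subset_pow_left (subset_cl L))).antisymm
    (cl_subset_cl_iff.2 (Set.iUnion_subset fun n =>
      (cl_pow_subset hL n).trans (cl_mono (Set.subset_iUnion (L ^ ·) n))))

theorem cl_union_eq_cl_right_iff : cl H (L ∪ K) = cl H K ↔ L ⊆ cl H K := by
  simp [cl_eq_cl_iff, subset_cl, Set.subset_union_right.trans (subset_cl (H := H) (L ∪ K))]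

theorem iUnion_pow_mul_subset_cl (hL : L ⊆ SPset A) (hK : K ⊆ SPset A) {J : Lang A}
    (hJ : J ⊆ cl H K) (h : L * K ⊆ cl H K) : (⋃ n : ℕ, L ^ n) * J ⊆ cl H K := by
  have absorb : L * cl H K ⊆ cl H K := (Set.mul_subset_mul_right (subset_cl L)).trans
    ((cl_mul_cl_subset hL hK).trans (cl_subset_cl_iff.2 h))
  rw [Set.iUnion_mul]
  refine Set.iUnion_subset fun n => (Set.mul_subset_mul_left hJ).trans ?_
  induction n with
  | zero => rw [pow_zero, one_mul]
  | succ n ih =>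
    rw [pow_succ', mul_assoc]
    exact (Set.mul_subset_mul_left ih).trans absorb

theorem mul_iUnion_pow_subset_cl (hL : L ⊆ SPset A) (hK : K ⊆ SPset A) {J : Lang A}
    (hJ : J ⊆ cl H K) (h : K * L ⊆ cl H K) : (J * ⋃ n : ℕ, L ^ n) ⊆ cl H K := by
  have absorb : cl H K * L ⊆ cl H K := (Set.mul_subset_mul_left (subset_cl L)).trans
    ((cl_mul_cl_subset hK hL).trans (cl_subset_cl_iff.2 h))
  rw [Set.mul_iUnion]
  refine Set.iUnion_subset fun n => (Set.mul_subset_mul_right hJ).trans ?_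
  induction n with
  | zero => rw [pow_zero, mul_one]
  | succ n ih =>
    rw [pow_succ, ← mul_assoc]
    exact (Set.mul_subset_mul_right ih).trans absorb

theorem lang_subset_cl_of_mem {e f : Term A} (h : (e, f) ∈ H) : e.lang ⊆ cl H f.lang := by
  intro U hU
  rw [← Pomset.ins_single_none U]
  exact closure.step h GenCtx.star.isSPCtx
    (fun V hV => (Pomset.ins_single_none V).symm ▸ closure.base hV) hU

end Closure

section Soundness

variable {A : Type}

theorem one_union_mul_iUnion_pow (L : Lang A) : 1 ∪ (L * ⋃ n : ℕ, L ^ n) = ⋃ n : ℕ, L ^ n := by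
  rw [Set.mul_iUnion, ← Set.union_iUnion_nat_succ fun n => L ^ n]
  simp only [pow_zero, pow_succ']

theorem one_union_iUnion_pow_mul (L : Lang A) : 1 ∪ (⋃ n : ℕ, L ^ n) * L = ⋃ n : ℕ, L ^ n := by
  rw [Set.iUnion_mul, ← Set.union_iUnion_nat_succ fun n => L ^ n]
  simp only [pow_zero, pow_succ]

theorem CongH.cl_lang_eq {H : HypSet A} {e f : Term A} (h : CongH H e f) :
    cl H e.lang = cl H f.lang := by
  have sp := Term.lang_subset_SPset (A := A)
  induction h with
  | refl e => rfl
  | symm _ ih => exact ih.symm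
  | trans _ _ ih₁ ih₂ => exact ih₁.trans ih₂
  | addCong _ _ ih₁ ih₂ => rw [Term.lang_add, Term.lang_add, cl_union, ih₁, ih₂, ← cl_union]
  | seqCong _ _ ih₁ ih₂ =>
    rw [Term.lang_seq, Term.lang_seq, cl_mul (sp _) (sp _), ih₁, ih₂, ← cl_mul (sp _) (sp _)]
  | parCong _ _ ih₁ ih₂ =>
    rw [Term.lang_par, Term.lang_par, cl_par (sp _) (sp _), ih₁, ih₂, ← cl_par (sp _) (sp _)]
  | starCong _ ih =>
    rw [Term.lang_star, Term.lang_star, cl_iUnion_pow (sp _), ih, ← cl_iUnion_pow (sp _)]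
  | addZero e => exact congrArg _ (Set.union_empty _)
  | addIdem e => exact congrArg _ (Set.union_self _)
  | addComm e f => exact congrArg _ (Set.union_comm _ _)
  | addAssoc e f g => exact congrArg _ (Set.union_assoc _ _ _).symm
  | seqAssoc e f g => simp only [Term.lang_seq, mul_assoc]
  | seqDistL e f g => simp only [Term.lang_seq, Term.lang_add, Set.mul_union]
  | seqDistR e f g => simp only [Term.lang_seq, Term.lang_add, Set.union_mul]
  | seqOneR e => rw [Term.lang_seq, Term.lang_one, mul_one]
  | seqOneL e => rw [Term.lang_seq, Term.lang_one, one_mul]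
  | seqZeroR e => rw [Term.lang_seq, Term.lang_zero, Set.mul_empty]
  | seqZeroL e => rw [Term.lang_seq, Term.lang_zero, Set.empty_mul]
  | parComm e f => simp only [Term.lang_par, par_comm e.lang]
  | parOne e => rw [Term.lang_par, Term.lang_one, par_one]
  | parZero e => rw [Term.lang_par]; exact congrArg _ Set.image2_empty_right
  | parAssoc e f g => simp only [Term.lang_par, par_assoc]
  | parDist e f g =>
    simp only [Term.lang_par, Term.lang_add]
    exact congrArg _ Set.image2_union_right
  | starUnfoldL e =>
    rw [Term.lang_add, Term.lang_seq, Term.lang_star, Term.lang_one, one_union_mul_iUnion_pow]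
  | starUnfoldR e =>
    rw [Term.lang_add, Term.lang_seq, Term.lang_star, Term.lang_one, one_union_iUnion_pow_mul]
  | lfpL _ ih =>
    simp only [Term.lang_add, Term.lang_seq, Term.lang_star, cl_union_eq_cl_right_iff,
      Set.union_subset_iff] at ih ⊢
    exact iUnion_pow_mul_subset_cl (sp _) (sp _) ih.1 ih.2
  | lfpR _ ih =>
    simp only [Term.lang_add, Term.lang_seq, Term.lang_star, cl_union_eq_cl_right_iff,
      Set.union_subset_iff] at ih ⊢
    exact mul_iUnion_pow_subset_cl (sp _) (sp _) ih.1 ih.2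
  | hyp h => exact cl_union_eq_cl_right_iff.2 (lang_subset_cl_of_mem h)

end Soundness

end CKAH

namespace CKAH

open Bimonoid

/-! ### Evaluation of series-parallel pomsets in a bimonoid -/

namespace LPoset

variable {A : Type}

/-- The labelled poset induced on the points satisfying `P`. -/
noncomputable def restrict (u : LPoset A) (P : u.carrier → Prop) : LPoset A where
  carrier := {x // P x}
  fin := by classical exact inferInstance
  lab x := u.lab x

theorem Iso.restrict {u v : LPoset A} {e : u.carrier ≃o v.carrier} (he : ∀ x, v.lab (e x) = u.lab x)
    (P : v.carrier → Prop) : (u.restrict fun x => P (e x)).Iso (v.restrict P) :=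
  ⟨⟨e.toEquiv.subtypeEquiv fun _ => Iff.rfl, e.le_iff_le⟩, fun x => he x.1⟩

theorem restrict_iso {u v : LPoset A} {f : u.carrier → v.carrier}
    (hle : ∀ x y, f x ≤ f y ↔ x ≤ y) (hlab : ∀ x, v.lab (f x) = u.lab x) {P : v.carrier → Prop}
    (hP : ∀ y, P y ↔ y ∈ Set.range f) : (v.restrict P).Iso u :=
  (iso_equivalence A).symm ⟨⟨(Equiv.ofInjective f (OrderEmbedding.ofMapLEIff f hle).injective).trans
    (Equiv.subtypeEquivRight fun y => (hP y).symm), hle _ _⟩, hlab⟩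

theorem restrict_seqL_iso (u v : LPoset A) (P : (u.seqL v).carrier → Prop) :
    ((u.restrict fun x => P (.inl x)).seqL (v.restrict fun y => P (.inr y))).Iso
      ((u.seqL v).restrict P) := by
  refine ⟨⟨(Equiv.subtypeSum (p := P)).symm, ?_⟩, ?_⟩
  · rintro (x | y) (x' | y')
    exacts [(seqL_inl_le_inl (u := u)).trans (seqL_inl_le_inl (u := u.restrict _)).symm,
      iff_of_true seqL_inl_le_inr seqL_inl_le_inr,
      iff_of_false not_seqL_inr_le_inl not_seqL_inr_le_inl,
      (seqL_inr_le_inr (v := v)).trans (seqL_inr_le_inr (v := v.restrict _)).symm]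
  · rintro (x | y) <;> rfl

theorem restrict_parL_iso (u v : LPoset A) (P : (u.parL v).carrier → Prop) :
    ((u.restrict fun x => P (.inl x)).parL (v.restrict fun y => P (.inr y))).Iso
      ((u.parL v).restrict P) := by
  refine ⟨⟨(Equiv.subtypeSum (p := P)).symm, ?_⟩, ?_⟩
  · rintro (x | y) (x' | y')
    exacts [(parL_inl_le_inl (u := u)).trans (parL_inl_le_inl (u := u.restrict _)).symm,
      iff_of_false not_parL_inl_le_inr not_parL_inl_le_inr,
      iff_of_false not_parL_inr_le_inl not_parL_inr_le_inl,
      (parL_inr_le_inr (v := v)).trans (parL_inr_le_inr (v := v.restrict _)).symm]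
  · rintro (x | y) <;> rfl

variable {M : Type*} [Bimonoid M] {g : A → M} {u v : LPoset A} {a b m n : M}

/-- `u.HasValue g m` says that `u` is built from the empty poset and from letters by sequential
and parallel composition, and that the same composition of the values `g` of its letters in a
bimonoid yields `m`. -/
inductive HasValue (g : A → M) : LPoset A → M → Prop
  | empty : HasValue g (emptyL A) 1
  | single (a : A) : HasValue g (singleL a) (g a)
  | seq {u v : LPoset A} {m n : M} :
      HasValue g u m → HasValue g v n → HasValue g (u.seqL v) (m * n)
  | par {u v : LPoset A} {m n : M} :
      HasValue g u m → HasValue g v n → HasValue g (u.parL v) (m ∥ n)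
  | iso {u v : LPoset A} {m : M} : HasValue g u m → u.Iso v → HasValue g v m

theorem HasValue.eq_one (h : u.HasValue g m) (hu : IsEmpty u.carrier) : m = 1 := by
  induction h with
  | empty => rfl
  | single => exact hu.elim ⟨⟩
  | seq _ _ ihu ihv =>
    obtain ⟨hu, hv⟩ := isEmpty_sum.1 hu
    rw [ihu hu, ihv hv, one_mul]
  | par _ _ ihu ihv =>
    obtain ⟨hu, hv⟩ := isEmpty_sum.1 hu
    rw [ihu hu, ihv hv, par_one]
  | iso _ hiso ih =>
    obtain ⟨e, -⟩ := hiso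
    exact ih e.toEquiv.isEmpty

theorem HasValue.eq_one_or_eq_one {P : u.carrier → Prop} {Q : v.carrier → Prop}
    (hu : (u.restrict P).HasValue g a) (hv : (v.restrict Q).HasValue g b)
    (h : ∀ x y, P x → ¬Q y) : a = 1 ∨ b = 1 := by
  by_cases hP : ∃ x, P x
  · obtain ⟨x, hx⟩ := hP
    exact .inr (hv.eq_one ⟨fun y => h x y.1 hx y.2⟩)
  · exact .inl (hu.eq_one ⟨fun x => hP ⟨x.1, x.2⟩⟩)

theorem HasValue.restrict (h : u.HasValue g m) {P : u.carrier → Prop} (hP : ∀ x, P x) :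
    (u.restrict P).HasValue g m :=
  h.iso ⟨⟨(Equiv.subtypeUnivEquiv hP).symm, Iff.rfl⟩, fun _ => rfl⟩

theorem hasValue_restrict_one {P : u.carrier → Prop} (hP : ∀ x, ¬P x) :
    (u.restrict P).HasValue g 1 :=
  have : IsEmpty (u.restrict P).carrier := ⟨fun x => hP x.1 x.2⟩
  HasValue.empty.iso ⟨⟨Equiv.equivOfIsEmpty _ _, fun {x} => isEmptyElim x⟩, isEmptyElim⟩

theorem HasValue.restrict_of_subsingleton (h : u.HasValue g m) (hu : Subsingleton u.carrier)
    (P : u.carrier → Prop) :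
    (u.restrict P).HasValue g m ∧ (u.restrict fun x => ¬P x).HasValue g 1 ∨
      (u.restrict P).HasValue g 1 ∧ (u.restrict fun x => ¬P x).HasValue g m := by
  by_cases hP : ∃ x, P x
  · obtain ⟨x, hx⟩ := hP
    have hP : ∀ y, P y := fun y => Subsingleton.elim x y ▸ hx
    exact .inl ⟨h.restrict hP, hasValue_restrict_one fun y => not_not_intro (hP y)⟩
  · exact .inr ⟨hasValue_restrict_one (not_exists.1 hP), h.restrict (not_exists.1 hP)⟩

theorem HasValue.exists_mul (h : u.HasValue g m) (P : u.carrier → Prop)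
    (hP : ∀ x y, P x → ¬P y → x ≤ y) :
    ∃ a b, (u.restrict P).HasValue g a ∧ (u.restrict fun x => ¬P x).HasValue g b ∧ a * b = m := by
  induction h with
  | empty =>
    rcases (HasValue.empty (g := g)).restrict_of_subsingleton
      (inferInstanceAs (Subsingleton (Fin 0))) P with ⟨h, h'⟩ | ⟨h, h'⟩
    exacts [⟨_, _, h, h', mul_one _⟩, ⟨_, _, h, h', one_mul _⟩]
  | single a =>
    rcases (HasValue.single (g := g) a).restrict_of_subsingleton
      (inferInstanceAs (Subsingleton PUnit)) P with ⟨h, h'⟩ | ⟨h, h'⟩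
    exacts [⟨_, _, h, h', mul_one _⟩, ⟨_, _, h, h', one_mul _⟩]
  | @seq u v _ _ hu hv ihu ihv =>
    obtain ⟨a, b, ha, hb, rfl⟩ := ihu (fun x => P (.inl x))
      fun x y hx hy => seqL_inl_le_inl.1 (hP _ _ hx hy)
    obtain ⟨c, d, hc, hd, rfl⟩ := ihv (fun x => P (.inr x))
      fun x y hx hy => seqL_inr_le_inr.1 (hP _ _ hx hy)
    refine ⟨a * c, b * d, (ha.seq hc).iso (restrict_seqL_iso u v P),
      (hb.seq hd).iso (restrict_seqL_iso u v fun x => ¬P x), ?_⟩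
    rcases hc.eq_one_or_eq_one hb fun x y hx hy => not_seqL_inr_le_inl (hP _ _ hx hy) with
      rfl | rfl <;> simp [mul_assoc]
  | @par u v _ _ hu hv ihu ihv =>
    obtain ⟨a, b, ha, hb, rfl⟩ := ihu (fun x => P (.inl x))
      fun x y hx hy => parL_inl_le_inl.1 (hP _ _ hx hy)
    obtain ⟨c, d, hc, hd, rfl⟩ := ihv (fun x => P (.inr x))
      fun x y hx hy => parL_inr_le_inr.1 (hP _ _ hx hy)
    refine ⟨a ∥ c, b ∥ d, (ha.par hc).iso (restrict_parL_iso u v P),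
      (hb.par hd).iso (restrict_parL_iso u v fun x => ¬P x), (mul_par_mul_of_eq_one ?_ ?_).symm⟩
    · exact ha.eq_one_or_eq_one hd fun x y hx hy => not_parL_inl_le_inr (hP _ _ hx hy)
    · exact (hc.eq_one_or_eq_one hb fun x y hx hy => not_parL_inr_le_inl (hP _ _ hx hy)).symm
  | iso _ hiso ih =>
    obtain ⟨e, he⟩ := hiso
    obtain ⟨a, b, ha, hb, hm⟩ := ih (fun x => P (e x)) fun x y hx hy => e.le_iff_le.1 (hP _ _ hx hy)
    exact ⟨a, b, ha.iso (.restrict he P), hb.iso (.restrict he fun x => ¬P x), hm⟩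

theorem HasValue.exists_par (h : u.HasValue g m) (P : u.carrier → Prop)
    (hP : ∀ x y, P x → ¬P y → ¬x ≤ y ∧ ¬y ≤ x) :
    ∃ a b, (u.restrict P).HasValue g a ∧ (u.restrict fun x => ¬P x).HasValue g b ∧ a ∥ b = m := by
  induction h with
  | empty =>
    rcases (HasValue.empty (g := g)).restrict_of_subsingleton
      (inferInstanceAs (Subsingleton (Fin 0))) P with ⟨h, h'⟩ | ⟨h, h'⟩
    exacts [⟨_, _, h, h', par_one _⟩, ⟨_, _, h, h', one_par _⟩]
  | single a =>
    rcases (HasValue.single (g := g) a).restrict_of_subsingleton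
      (inferInstanceAs (Subsingleton PUnit)) P with ⟨h, h'⟩ | ⟨h, h'⟩
    exacts [⟨_, _, h, h', par_one _⟩, ⟨_, _, h, h', one_par _⟩]
  | @seq u v _ _ hu hv ihu ihv =>
    obtain ⟨a, b, ha, hb, rfl⟩ := ihu (fun x => P (.inl x)) fun x y hx hy => by
      simpa only [seqL_inl_le_inl] using hP _ _ hx hy
    obtain ⟨c, d, hc, hd, rfl⟩ := ihv (fun x => P (.inr x)) fun x y hx hy => by
      simpa only [seqL_inr_le_inr] using hP _ _ hx hy
    refine ⟨a * c, b * d, (ha.seq hc).iso (restrict_seqL_iso u v P),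
      (hb.seq hd).iso (restrict_seqL_iso u v fun x => ¬P x), mul_par_mul_of_eq_one ?_ ?_⟩
    · exact ha.eq_one_or_eq_one hd fun x y hx hy => (hP _ _ hx hy).1 seqL_inl_le_inr
    · exact (hb.eq_one_or_eq_one hc fun x y hx hy => (hP _ _ hy hx).2 seqL_inl_le_inr).symm
  | @par u v _ _ hu hv ihu ihv =>
    obtain ⟨a, b, ha, hb, rfl⟩ := ihu (fun x => P (.inl x)) fun x y hx hy => by
      simpa only [parL_inl_le_inl] using hP _ _ hx hy
    obtain ⟨c, d, hc, hd, rfl⟩ := ihv (fun x => P (.inr x)) fun x y hx hy => by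
      simpa only [parL_inr_le_inr] using hP _ _ hx hy
    exact ⟨a ∥ c, b ∥ d, (ha.par hc).iso (restrict_parL_iso u v P),
      (hb.par hd).iso (restrict_parL_iso u v fun x => ¬P x), par_par_par_comm a c b d⟩
  | iso _ hiso ih =>
    obtain ⟨e, he⟩ := hiso
    obtain ⟨a, b, ha, hb, hm⟩ := ih (fun x => P (e x)) fun x y hx hy => by
      simpa only [e.le_iff_le] using hP _ _ hx hy
    exact ⟨a, b, ha.iso (.restrict he P), hb.iso (.restrict he fun x => ¬P x), hm⟩

theorem HasValue.eq_lab (h : u.HasValue g m) {x : u.carrier} (hx : ∀ y, y = x) :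
    m = g (u.lab x) := by
  induction h with
  | empty => exact isEmptyElim x
  | single => rfl
  | seq hu hv ihu ihv =>
    rcases x with x | y
    · rw [ihu fun x' => Sum.inl_injective (hx (.inl x')),
        hv.eq_one ⟨fun y => Sum.inr_ne_inl (hx (.inr y))⟩, mul_one]
      rfl
    · rw [ihv fun y' => Sum.inr_injective (hx (.inr y')),
        hu.eq_one ⟨fun x => Sum.inl_ne_inr (hx (.inl x))⟩, one_mul]
      rfl
  | par hu hv ihu ihv =>
    rcases x with x | y
    · rw [ihu fun x' => Sum.inl_injective (hx (.inl x')),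
        hv.eq_one ⟨fun y => Sum.inr_ne_inl (hx (.inr y))⟩, par_one]
      rfl
    · rw [ihv fun y' => Sum.inr_injective (hx (.inr y')),
        hu.eq_one ⟨fun x => Sum.inl_ne_inr (hx (.inl x))⟩, one_par]
      rfl
  | iso _ hiso ih =>
    obtain ⟨e, he⟩ := hiso
    rw [ih (x := e.symm x) fun y => e.injective (by simp [hx]), ← he, e.apply_symm_apply]

theorem notMem_range_inl_iff {α β : Type*} (y : α ⊕ β) :
    y ∉ Set.range Sum.inl ↔ y ∈ Set.range Sum.inr :=
  Set.ext_iff.1 Set.compl_range_inl y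

theorem HasValue.unique (hm : u.HasValue g m) (hn : u.HasValue g n) : m = n := by
  induction hn generalizing m with
  | empty => exact hm.eq_one inferInstance
  | single => exact hm.eq_lab (x := PUnit.unit) fun _ => rfl
  | @seq u v _ _ _ _ ihu ihv =>
    have cut : ∀ x y : (u.seqL v).carrier,
        x ∈ Set.range Sum.inl → y ∉ Set.range Sum.inl → x ≤ y := by
      rintro _ (y | y) ⟨x, rfl⟩ hy
      exacts [(hy ⟨y, rfl⟩).elim, seqL_inl_le_inr]
    obtain ⟨a, b, ha, hb, rfl⟩ := hm.exists_mul _ cut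
    have hu : u.HasValue g a :=
      ha.iso (restrict_iso (f := Sum.inl) (fun _ _ => seqL_inl_le_inl) (fun _ => rfl)
        fun _ => Iff.rfl)
    have hv : v.HasValue g b :=
      hb.iso (restrict_iso (v := u.seqL v) (f := Sum.inr) (fun _ _ => seqL_inr_le_inr)
        (fun _ => rfl) (notMem_range_inl_iff (α := u.carrier)))
    rw [ihu hu, ihv hv]
  | @par u v _ _ _ _ ihu ihv =>
    have cut : ∀ x y : (u.parL v).carrier,
        x ∈ Set.range Sum.inl → y ∉ Set.range Sum.inl → ¬x ≤ y ∧ ¬y ≤ x := by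
      rintro _ (y | y) ⟨x, rfl⟩ hy
      exacts [(hy ⟨y, rfl⟩).elim, ⟨not_parL_inl_le_inr, not_parL_inr_le_inl⟩]
    obtain ⟨a, b, ha, hb, rfl⟩ := hm.exists_par _ cut
    have hu : u.HasValue g a :=
      ha.iso (restrict_iso (f := Sum.inl) (fun _ _ => parL_inl_le_inl) (fun _ => rfl)
        fun _ => Iff.rfl)
    have hv : v.HasValue g b :=
      hb.iso (restrict_iso (v := u.parL v) (f := Sum.inr) (fun _ _ => parL_inr_le_inr)
        (fun _ => rfl) (notMem_range_inl_iff (α := u.carrier)))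
    rw [ihu hu, ihv hv]
  | iso _ hiso ih => exact ih (hm.iso ((iso_equivalence A).symm hiso))

end LPoset

namespace Pomset

variable {A : Type} {M : Type*} [Bimonoid M] {g : A → M} {U V : Pomset A}

/-- The value in a bimonoid of a series-parallel pomset under a valuation of its letters; other
pomsets get a junk value. -/
noncomputable def eval (g : A → M) (U : Pomset A) : M :=
  Classical.epsilon fun m => ∃ u : LPoset A, ⟦u⟧ = U ∧ u.HasValue g m

theorem eval_mk {u : LPoset A} {m : M} (h : u.HasValue g m) : eval g ⟦u⟧ = m := by
  obtain ⟨v, hv, hm⟩ := Classical.epsilon_spec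
    (p := fun m => ∃ v : LPoset A, (⟦v⟧ : Pomset A) = ⟦u⟧ ∧ v.HasValue g m) ⟨m, u, rfl, h⟩
  exact hm.unique (h.iso (Quotient.exact hv.symm))

theorem IsSP.exists_hasValue (g : A → M) (hU : U.IsSP) :
    ∃ (u : LPoset A) (m : M), ⟦u⟧ = U ∧ u.HasValue g m := by
  induction hU with
  | empty => exact ⟨_, _, rfl, .empty⟩
  | single a => exact ⟨_, _, rfl, .single a⟩
  | seq _ _ ihU ihV =>
    obtain ⟨u, m, rfl, hu⟩ := ihU
    obtain ⟨v, n, rfl, hv⟩ := ihV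
    exact ⟨_, _, rfl, hu.seq hv⟩
  | par _ _ ihU ihV =>
    obtain ⟨u, m, rfl, hu⟩ := ihU
    obtain ⟨v, n, rfl, hv⟩ := ihV
    exact ⟨_, _, rfl, hu.par hv⟩

theorem eval_one : eval g (1 : Pomset A) = 1 := eval_mk .empty

theorem eval_single (a : A) : eval g (single a) = g a := eval_mk (.single a)

theorem IsSP.eval_mul (hU : U.IsSP) (hV : V.IsSP) : eval g (U * V) = eval g U * eval g V := by
  obtain ⟨u, m, rfl, hu⟩ := hU.exists_hasValue g
  obtain ⟨v, n, rfl, hv⟩ := hV.exists_hasValue g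
  rw [eval_mk hu, eval_mk hv]
  exact eval_mk (hu.seq hv)

theorem IsSP.eval_par (hU : U.IsSP) (hV : V.IsSP) : eval g (U ∥ V) = eval g U ∥ eval g V := by
  obtain ⟨u, m, rfl, hu⟩ := hU.exists_hasValue g
  obtain ⟨v, n, rfl, hv⟩ := hV.exists_hasValue g
  rw [eval_mk hu, eval_mk hv]
  exact eval_mk (hu.par hv)

end Pomset

end CKAH

namespace CKAH

open Computability
open scoped Pointwise

/-! ### Concurrent monoids and concurrent Kleene algebras -/

section ConcurrentMonoids

open Bimonoid

/-- A concurrent monoid: a preordered bimonoid with monotone compositions that satisfies the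
exchange law. -/
class ConcurrentMonoid (M : Type*) [Bimonoid M] [Preorder M] : Prop where
  mul_le_mul {a b c d : M} : a ≤ b → c ≤ d → a * c ≤ b * d
  par_le_par {a b c d : M} : a ≤ b → c ≤ d → a ∥ c ≤ b ∥ d
  exchange (a b c d : M) : (a ∥ b) * (c ∥ d) ≤ (a * c) ∥ (b * d)

instance {M N : Type*} [Bimonoid M] [Preorder M] [ConcurrentMonoid M]
    [Bimonoid N] [Preorder N] [ConcurrentMonoid N] : ConcurrentMonoid (M × N) where
  mul_le_mul h h' := ⟨ConcurrentMonoid.mul_le_mul h.1 h'.1, ConcurrentMonoid.mul_le_mul h.2 h'.2⟩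
  par_le_par h h' := ⟨ConcurrentMonoid.par_le_par h.1 h'.1, ConcurrentMonoid.par_le_par h.2 h'.2⟩
  exchange _ _ _ _ := ⟨ConcurrentMonoid.exchange .., ConcurrentMonoid.exchange ..⟩

theorem mul_le_par {M : Type*} [Bimonoid M] [Preorder M] [ConcurrentMonoid M] (a b : M) :
    a * b ≤ a ∥ b := by
  simpa [par_one, one_par] using ConcurrentMonoid.exchange a 1 1 b

/-- The power set of a preordered set, with the Smyth preorder: `s ≤ t` if every element of `t` is
above some element of `s`. It is a type synonym because `Set M` is already ordered by inclusion. -/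
def Smyth (M : Type*) : Type _ := Set M

namespace Smyth

variable {M : Type*}

instance : Membership M (Smyth M) := inferInstanceAs (Membership M (Set M))

instance [Finite M] : Finite (Smyth M) := inferInstanceAs (Finite (Set M))

section Bimonoid

variable [Bimonoid M]

instance : Bimonoid (Smyth M) := inferInstanceAs (Bimonoid (Set M))

theorem mul_mem_mul {s t : Smyth M} {a b : M} (ha : a ∈ s) (hb : b ∈ t) : a * b ∈ s * t :=
  ⟨a, ha, b, hb, rfl⟩

theorem par_mem_par {s t : Smyth M} {a b : M} (ha : a ∈ s) (hb : b ∈ t) : a ∥ b ∈ s ∥ t :=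
  ⟨a, ha, b, hb, rfl⟩

end Bimonoid

section Preorder

variable [Preorder M]

instance : Preorder (Smyth M) where
  le s t := ∀ b ∈ t, ∃ a ∈ s, a ≤ b
  le_refl _ b hb := ⟨b, hb, le_rfl⟩
  le_trans s t u hst htu c hc := by
    obtain ⟨b, hb, hbc⟩ := htu c hc
    obtain ⟨a, ha, hab⟩ := hst b hb
    exact ⟨a, ha, hab.trans hbc⟩

instance [Bimonoid M] [ConcurrentMonoid M] : ConcurrentMonoid (Smyth M) where
  mul_le_mul h h' := by
    rintro _ ⟨b, hb, d, hd, rfl⟩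
    obtain ⟨a, ha, hab⟩ := h b hb
    obtain ⟨c, hc, hcd⟩ := h' d hd
    exact ⟨_, mul_mem_mul ha hc, ConcurrentMonoid.mul_le_mul hab hcd⟩
  par_le_par h h' := by
    rintro _ ⟨b, hb, d, hd, rfl⟩
    obtain ⟨a, ha, hab⟩ := h b hb
    obtain ⟨c, hc, hcd⟩ := h' d hd
    exact ⟨_, par_mem_par ha hc, ConcurrentMonoid.par_le_par hab hcd⟩
  exchange s t u v := by
    rintro _ ⟨_, ⟨a, ha, c, hc, rfl⟩, _, ⟨b, hb, d, hd, rfl⟩, rfl⟩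
    exact ⟨_, mul_mem_mul (par_mem_par ha hb) (par_mem_par hc hd), ConcurrentMonoid.exchange ..⟩

end Preorder

end Smyth

end ConcurrentMonoids

/-- A concurrent Kleene algebra with exchange: a Kleene algebra with a parallel composition that
distributes over sums and satisfies the exchange law. -/
class ConcurrentKleeneAlgebra (K : Type*) extends KleeneAlgebra K, Bimonoid K where
  par_zero (a : K) : par a 0 = 0
  par_add (a b c : K) : par a (b + c) = par a b + par a c
  par_mul_par_le (a b c d : K) : par a b * par c d ≤ par (a * c) (b * d)

/-- The value of a term in a concurrent Kleene algebra, given the values of the letters. -/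
def Term.eval {K : Type*} {G : Type} [ConcurrentKleeneAlgebra K] (k : G → K) : Term G → K
  | .zero => 0
  | .one => 1
  | .var a => k a
  | .add e f => e.eval k + f.eval k
  | .seq e f => e.eval k * f.eval k
  | .par e f => Bimonoid.par (e.eval k) (f.eval k)
  | .star e => (e.eval k)∗

section ConcurrentKleeneAlgebras

open Bimonoid

variable {K : Type*} [ConcurrentKleeneAlgebra K]

/-- Parallel composition with a fixed right factor, as a homomorphism of the additive structure. -/
def parRight (b : K) : K →+ K where
  toFun a := a ∥ b
  map_zero' := by rw [par_comm]; exact ConcurrentKleeneAlgebra.par_zero b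
  map_add' a c := by simp only [par_comm _ b]; exact ConcurrentKleeneAlgebra.par_add b a c

theorem parRight_apply (a b : K) : parRight b a = a ∥ b := rfl

theorem monotone_of_addMonoidHom {K L : Type*} [IdemSemiring K] [IdemSemiring L] (φ : K →+ L) :
    Monotone φ := fun a b h => by
  rw [← add_eq_right_iff_le.2 h, map_add]
  exact le_self_add

instance : ConcurrentMonoid K where
  mul_le_mul := mul_le_mul'
  par_le_par {a b c d} h h' := by
    calc a ∥ c ≤ b ∥ c := monotone_of_addMonoidHom (parRight c) h
      _ ≤ b ∥ d := by rw [par_comm b, par_comm b]; exact monotone_of_addMonoidHom (parRight b) h'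
  exchange := ConcurrentKleeneAlgebra.par_mul_par_le

end ConcurrentKleeneAlgebras

section SumLemmas

variable {K ι : Type*} [IdemSemiring K] {s : Finset ι} {f : ι → K} {a b : K}

theorem sum_le_of_forall_le (h : ∀ i ∈ s, f i ≤ b) : ∑ i ∈ s, f i ≤ b :=
  Finset.sum_induction f (· ≤ b) (fun _ _ => add_le) zero_le h

theorem le_sum_of_mem {i : ι} (hi : i ∈ s) : f i ≤ ∑ i ∈ s, f i :=
  Finset.single_le_sum (fun _ _ => zero_le) hi

theorem mul_sum_le (h : ∀ i ∈ s, a * f i ≤ b) : a * ∑ i ∈ s, f i ≤ b := by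
  rw [Finset.mul_sum]
  exact sum_le_of_forall_le h

theorem sum_mul_le (h : ∀ i ∈ s, f i * a ≤ b) : (∑ i ∈ s, f i) * a ≤ b := by
  rw [Finset.sum_mul]
  exact sum_le_of_forall_le h

end SumLemmas

/-! ### Stars of matrices -/

section MatrixStars

variable {K ι : Type*} [KleeneAlgebra K]

/-- The elimination step of the Floyd–Warshall–Kleene algorithm: paths are allowed to pass through
the additional vertex `k`. -/
def pivot (P : Matrix ι ι K) (k : ι) : Matrix ι ι K :=
  fun i j => P i j + P i k * (P k k)∗ * P k j

variable {P : Matrix ι ι K} {k l : ι}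

theorem le_pivot (i j : ι) : P i j ≤ pivot P k i j := le_self_add

theorem pivot_apply_self_right_le (i : ι) : pivot P k i k ≤ P i k * (P k k)∗ := by
  refine add_le (le_mul_of_one_le_right' one_le_kstar) ?_
  rw [mul_assoc]
  grw [kstar_mul_le_kstar]

theorem pivot_apply_self_left_le (j : ι) : pivot P k k j ≤ (P k k)∗ * P k j := by
  refine add_le (le_mul_of_one_le_left' one_le_kstar) ?_
  grw [mul_kstar_le_kstar]

theorem mul_kstar_mul_pivot_le (i j : ι) :
    P i k * (P k k)∗ * pivot P k k j ≤ pivot P k i j := by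
  calc P i k * (P k k)∗ * pivot P k k j
      ≤ P i k * (P k k)∗ * ((P k k)∗ * P k j) := by grw [pivot_apply_self_left_le]
    _ = P i k * ((P k k)∗ * (P k k)∗) * P k j := by simp only [mul_assoc]
    _ ≤ pivot P k i j := by rw [kstar_mul_kstar]; exact le_add_self

theorem pivot_mul_pivot_self_le (i j : ι) : pivot P k i k * pivot P k k j ≤ pivot P k i j :=
  (mul_le_mul_left (pivot_apply_self_right_le i) _).trans (mul_kstar_mul_pivot_le i j)

theorem pivot_mul_pivot_le (hl : ∀ i j, P i l * P l j ≤ P i j) (i j : ι) :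
    pivot P k i l * pivot P k l j ≤ pivot P k i j := by
  have mul_pivot_le (i : ι) : P i l * pivot P k l j ≤ pivot P k i j := by
    simp only [pivot, mul_add, ← mul_assoc]
    grw [hl, hl]
  calc pivot P k i l * pivot P k l j
      = P i l * pivot P k l j + P i k * (P k k)∗ * (P k l * pivot P k l j) := by
        simp only [pivot, add_mul, mul_assoc]
    _ ≤ pivot P k i j + P i k * (P k k)∗ * pivot P k k j := by grw [mul_pivot_le, mul_pivot_le]
    _ ≤ pivot P k i j := add_le le_rfl (mul_kstar_mul_pivot_le i j)

theorem pivot_mul_le {w : ι → K} (hw : ∀ i j, P i j * w j ≤ w i) (i j : ι) :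
    pivot P k i j * w j ≤ w i := by
  rw [pivot, add_mul, mul_assoc, mul_assoc]
  refine add_le (hw i j) ?_
  grw [hw k j, kstar_mul_le_self (hw k k), hw i k]

theorem exists_le_mul_le_of_finset (B : Matrix ι ι K) (s : Finset ι) :
    ∃ P : Matrix ι ι K, (∀ i j, B i j ≤ P i j) ∧ (∀ k ∈ s, ∀ i j, P i k * P k j ≤ P i j) ∧
      ∀ w : ι → K, (∀ i j, B i j * w j ≤ w i) → ∀ i j, P i j * w j ≤ w i := by
  induction s using Finset.cons_induction with
  | empty => exact ⟨B, fun _ _ => le_rfl, by simp, fun _ hw => hw⟩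
  | cons k s _ ih =>
    obtain ⟨P, le_P, trans_P, P_least⟩ := ih
    refine ⟨pivot P k, fun i j => (le_P i j).trans (le_pivot i j), ?_,
      fun w hw => pivot_mul_le (P_least w hw)⟩
    intro l hl
    obtain rfl | hl := Finset.mem_cons.1 hl
    · exact pivot_mul_pivot_self_le
    · exact pivot_mul_pivot_le (trans_P l hl)

theorem exists_star_matrix [Finite ι] (B : Matrix ι ι K) :
    ∃ P : Matrix ι ι K, (∀ i, 1 ≤ P i i) ∧ (∀ i j, B i j ≤ P i j) ∧
      (∀ i k j, P i k * P k j ≤ P i j) ∧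
      ∀ w : ι → K, (∀ i j, B i j * w j ≤ w i) → ∀ i j, P i j * w j ≤ w i := by
  classical
  cases nonempty_fintype ι
  obtain ⟨P, le_P, trans_P, P_least⟩ := exists_le_mul_le_of_finset (B + 1) Finset.univ
  refine ⟨P, fun i => ?_, fun i j => le_self_add.trans (le_P i j),
    fun i k => trans_P k (Finset.mem_univ k) i, fun w hw => P_least w fun i j => ?_⟩
  · exact (le_add_self.trans_eq' (Matrix.one_apply_eq i)).trans (le_P i i)
  · rw [Matrix.add_apply, add_mul]
    refine add_le (hw i j) ?_
    obtain rfl | hij := eq_or_ne i j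
    · rw [Matrix.one_apply_eq, one_mul]
    · rw [Matrix.one_apply_ne hij, zero_mul]
      exact zero_le

/-- The reflexive and transitive closure of a finite matrix over a Kleene algebra, that is, its
star; it is pinned down by `starMatrix_mul_le`. -/
noncomputable def starMatrix [Finite ι] (B : Matrix ι ι K) : Matrix ι ι K :=
  (exists_star_matrix B).choose

variable [Finite ι] (B : Matrix ι ι K)

theorem one_le_starMatrix (i : ι) : 1 ≤ starMatrix B i i :=
  (exists_star_matrix B).choose_spec.1 i

theorem le_starMatrix (i j : ι) : B i j ≤ starMatrix B i j :=
  (exists_star_matrix B).choose_spec.2.1 i j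

theorem starMatrix_mul_starMatrix_le (i k j : ι) :
    starMatrix B i k * starMatrix B k j ≤ starMatrix B i j :=
  (exists_star_matrix B).choose_spec.2.2.1 i k j

variable {B}

theorem starMatrix_mul_le {w : ι → K} (hw : ∀ i j, B i j * w j ≤ w i) (i j : ι) :
    starMatrix B i j * w j ≤ w i :=
  (exists_star_matrix B).choose_spec.2.2.2 w hw i j

end MatrixStars

end CKAH

namespace CKAH

open Bimonoid Computability
open scoped Pointwise

/-! ### Recognizers -/

/-- A finite automaton with weights in `K` together with a finite concurrent monoid `Val` in which
pomsets are evaluated. The value `m` of a pomset determines the pairs of states it connects: if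
`rel m q r` holds then the pomset, evaluated in `K`, is below the entry `weight q r`. The axioms
make this true for all series-parallel pomsets, and `le_mul_self` makes contraction of letters
sound. -/
structure Recognizer {G : Type} {K : Type*} [ConcurrentKleeneAlgebra K] (k : G → K) where
  Val : Type
  [finite_val : Finite Val]
  [bimonoid : Bimonoid Val]
  [preorder : Preorder Val]
  [concurrentMonoid : ConcurrentMonoid Val]
  val : G → Val
  le_mul_self : ∀ a, k a ≤ k a * k a → val a ≤ val a * val a
  State : Type
  [finite_state : Finite State]
  weight : Matrix State State K
  one_le_weight : ∀ q, 1 ≤ weight q q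
  weight_mul_weight_le : ∀ q r s, weight q r * weight r s ≤ weight q s
  rel : Val → State → State → Prop
  antitone_rel : Antitone rel
  rel_mul : ∀ {m n q s}, rel (m * n) q s → ∃ r, rel m q r ∧ rel n r s
  rel_par : ∀ {m n q r}, rel (m ∥ n) q r →
    ∃ a b c d, rel m a b ∧ rel n c d ∧ weight a b ∥ weight c d ≤ weight q r
  one_le_of_rel : ∀ {q r}, rel 1 q r → 1 ≤ weight q r
  le_of_rel_val : ∀ {a q r}, rel (val a) q r → k a ≤ weight q r
  idle : State
  rel_idle : rel 1 idle idle
  weight_idle_le : weight idle idle ≤ 1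

namespace Recognizer

attribute [instance] finite_val bimonoid preorder concurrentMonoid finite_state

variable {G : Type} {K : Type*} [ConcurrentKleeneAlgebra K] {k : G → K} (S : Recognizer k)
  {m n : S.Val} {V W : Set S.Val} {x y z : K}

/-- `x` is below every entry of the weight matrix that the value `m` selects. -/
def Bounds (m : S.Val) (x : K) : Prop := ∀ ⦃q r⦄, S.rel m q r → x ≤ S.weight q r

/-- `S.Decomposes V x` says that `x` is below a finite sum of elements each of which is bounded by
some value in `V`. -/
inductive Decomposes (V : Set S.Val) : K → Prop
  | of_bounds {m : S.Val} {x : K} : m ∈ V → S.Bounds m x → Decomposes V x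
  | zero : Decomposes V 0
  | add {x y : K} : Decomposes V x → Decomposes V y → Decomposes V (x + y)
  | of_le {x y : K} : x ≤ y → Decomposes V y → Decomposes V x

variable {S}

theorem Bounds.mul (hx : S.Bounds m x) (hy : S.Bounds n y) : S.Bounds (m * n) (x * y) :=
  fun _ _ h => by
    obtain ⟨r, hr, hr'⟩ := S.rel_mul h
    exact (mul_le_mul' (hx hr) (hy hr')).trans (S.weight_mul_weight_le _ _ _)

theorem Bounds.par (hx : S.Bounds m x) (hy : S.Bounds n y) : S.Bounds (m ∥ n) (x ∥ y) :=
  fun _ _ h => by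
    obtain ⟨a, b, c, d, hab, hcd, hle⟩ := S.rel_par h
    exact (ConcurrentMonoid.par_le_par (hx hab) (hy hcd)).trans hle

namespace Decomposes

theorem map (h : S.Decomposes V x) (φ : K →+ K)
    (hφ : ∀ m ∈ V, ∀ x, S.Bounds m x → S.Decomposes W (φ x)) : S.Decomposes W (φ x) := by
  induction h with
  | of_bounds hm hx => exact hφ _ hm _ hx
  | zero => rw [map_zero]; exact .zero
  | add _ _ ihx ihy => rw [map_add]; exact ihx.add ihy
  | of_le hxy _ ih => exact ih.of_le (monotone_of_addMonoidHom φ hxy)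

theorem mono (hVW : V ⊆ W) (h : S.Decomposes V x) : S.Decomposes W x :=
  h.map (.id K) fun _ hm _ hx => .of_bounds (hVW hm) hx

theorem mul (hx : S.Decomposes V x) (hy : S.Decomposes W y) : S.Decomposes (V * W) (x * y) :=
  hx.map (.mulRight y) fun _ hm x hx => hy.map (.mulLeft x) fun _ hn _ hy =>
    .of_bounds (Set.mul_mem_mul hm hn) (hx.mul hy)

theorem par (hx : S.Decomposes V x) (hy : S.Decomposes W y) : S.Decomposes (V ∥ W) (x ∥ y) :=
  hx.map (parRight y) fun m hm x hx => by
    rw [parRight_apply, par_comm x]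
    exact hy.map (parRight x) fun n hn y hy => by
      rw [parRight_apply, par_comm y]
      exact .of_bounds (Set.mem_image2_of_mem hm hn) (hx.par hy)

theorem le (h : S.Decomposes V x) (hz : ∀ m ∈ V, ∀ x, S.Bounds m x → x ≤ z) : x ≤ z := by
  induction h with
  | of_bounds hm hx => exact hz _ hm _ hx
  | zero => exact zero_le
  | add _ _ ihx ihy => exact add_le ihx ihy
  | of_le hxy _ ih => exact hxy.trans ih

theorem sum {ι : Type*} {s : Finset ι} {f : ι → K} (h : ∀ i ∈ s, S.Decomposes V (f i)) :
    S.Decomposes V (∑ i ∈ s, f i) :=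
  Finset.sum_induction f _ (fun _ _ => .add) .zero h

theorem exists_le_sum [Fintype S.Val] (h : S.Decomposes V x) :
    ∃ t : S.Val → K, (∀ m, S.Bounds m (t m)) ∧ (∀ m ∉ V, t m = 0) ∧ x ≤ ∑ m, t m := by
  classical
  induction h with
  | @of_bounds m x hm hx =>
    refine ⟨fun n => if n = m then x else 0, fun n => ?_, fun n hn => if_neg ?_, ?_⟩
    · dsimp only
      split_ifs with hnm
      exacts [hnm ▸ hx, fun _ _ _ => zero_le]
    · exact fun hnm => hn (hnm ▸ hm)
    · rw [Finset.sum_ite_eq' _ m, if_pos (Finset.mem_univ m)]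
  | zero => exact ⟨0, fun _ _ _ _ => zero_le, fun _ _ => rfl, zero_le⟩
  | add _ _ ihx ihy =>
    obtain ⟨t, ht, ht_zero, hxt⟩ := ihx
    obtain ⟨t', ht', ht'_zero, hxt'⟩ := ihy
    refine ⟨t + t', fun m q r h => add_le (ht m h) (ht' m h), fun m hm => ?_, ?_⟩
    · rw [Pi.add_apply, ht_zero m hm, ht'_zero m hm, add_zero]
    · simp only [Pi.add_apply, Finset.sum_add_distrib]
      exact add_le_add hxt hxt'
  | of_le hxy _ ih =>
    obtain ⟨t, ht, ht_zero, hyt⟩ := ih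
    exact ⟨t, ht, ht_zero, hxy.trans hyt⟩

section Star

variable {N : Submonoid S.Val}

open scoped Classical in
/-- The matrix over `N` whose entry at `(m, n)` sums the elements `t l` that lead from `m` to `n`
by multiplication from the right. -/
noncomputable def transitionMatrix (N : Submonoid S.Val) [Fintype N] (t : S.Val → K) :
    Matrix N N K :=
  fun m n => ∑ l with m * l = n, t l

theorem le_transitionMatrix [Fintype N] (t : S.Val → K) (m l : N) :
    t l ≤ transitionMatrix N t m (m * l) :=
  le_sum_of_mem (f := fun l : N => t l) (by simp)

/-- The invariant behind the bound is that the weights reachable from `q` along `m` and continued to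
`r` are respected by the transitions. -/
theorem bounds_starMatrix [Fintype N] {t : S.Val → K} (ht : ∀ m, S.Bounds m (t m))
    (n : N) :
    S.Bounds n (starMatrix (transitionMatrix N t) 1 n) := fun q r hqr => by
  classical
  cases nonempty_fintype S.State
  let w (m : N) : K := ∑ p with S.rel m q p, S.weight p r
  have hw (m m' : N) : transitionMatrix N t m m' * w m' ≤ w m := by
    refine sum_mul_le fun l hl => mul_sum_le fun p hp => ?_
    rw [← (Finset.mem_filter.1 hl).2] at hp
    obtain ⟨p', hp', hl'⟩ := S.rel_mul (Finset.mem_filter.1 hp).2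
    calc t l * S.weight p r ≤ S.weight p' p * S.weight p r := mul_le_mul_left (ht l hl') _
      _ ≤ S.weight p' r := S.weight_mul_weight_le _ _ _
      _ ≤ w m := le_sum_of_mem (f := (S.weight · r)) (by simpa using hp')
  have one_le : 1 ≤ w n := (S.one_le_weight r).trans
    (le_sum_of_mem (f := (S.weight · r)) (by simpa using hqr))
  refine (le_mul_of_one_le_right' one_le).trans ((starMatrix_mul_le hw 1 n).trans ?_)
  refine sum_le_of_forall_le fun p hp => ?_
  have one_le : 1 ≤ S.weight q p := S.one_le_of_rel (by simpa using hp)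
  exact (le_mul_of_one_le_left' one_le).trans (S.weight_mul_weight_le _ _ _)

theorem kstar (h : S.Decomposes V x) : S.Decomposes (Submonoid.closure V) x∗ := by
  cases nonempty_fintype S.Val
  cases nonempty_fintype (Submonoid.closure V)
  obtain ⟨t, ht, ht_zero, hxt⟩ := h.exists_le_sum
  let P := starMatrix (transitionMatrix (Submonoid.closure V) t)
  have one_le : 1 ≤ ∑ m, P 1 m := (one_le_starMatrix _ 1).trans (le_sum_of_mem (Finset.mem_univ _))
  have mul_le : (∑ m, P 1 m) * x ≤ ∑ m, P 1 m := by
    grw [hxt]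
    refine sum_mul_le fun m _ => mul_sum_le fun l _ => ?_
    by_cases hl : l ∈ V
    · let l' : Submonoid.closure V := ⟨l, Submonoid.subset_closure hl⟩
      calc P 1 m * t l ≤ P 1 m * P m (m * l') :=
            mul_le_mul_right ((le_transitionMatrix t m l').trans (le_starMatrix _ _ _)) _
        _ ≤ P 1 (m * l') := starMatrix_mul_starMatrix_le _ _ _ _
        _ ≤ ∑ m, P 1 m := le_sum_of_mem (Finset.mem_univ _)
    · rw [ht_zero l hl, mul_zero]
      exact zero_le
  exact .of_le (kstar_le_of_mul_le_left one_le mul_le)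
    (.sum fun m _ => .of_bounds m.2 (bounds_starMatrix ht m))

end Star

end Decomposes

theorem eval_decomposes (S : Recognizer k) (e : Term G) :
    S.Decomposes (Pomset.eval S.val '' e.lang) (e.eval k) := by
  induction e with
  | zero => exact .zero
  | one => exact .of_bounds ⟨1, rfl, Pomset.eval_one⟩ fun _ _ => S.one_le_of_rel
  | var a => exact .of_bounds ⟨_, rfl, Pomset.eval_single a⟩ fun _ _ => S.le_of_rel_val
  | add e f ihe ihf =>
    exact (ihe.mono (Set.image_mono Set.subset_union_left)).add
      (ihf.mono (Set.image_mono Set.subset_union_right))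
  | seq e f ihe ihf =>
    refine (ihe.mul ihf).mono ?_
    rintro _ ⟨_, ⟨U, hU, rfl⟩, _, ⟨V, hV, rfl⟩, rfl⟩
    exact ⟨U * V, e.lang_seq f ▸ Set.mul_mem_mul hU hV,
      (e.lang_subset_SPset hU).eval_mul (f.lang_subset_SPset hV)⟩
  | par e f ihe ihf =>
    refine (ihe.par ihf).mono ?_
    rintro _ ⟨_, ⟨U, hU, rfl⟩, _, ⟨V, hV, rfl⟩, rfl⟩
    exact ⟨U ∥ V, e.lang_par f ▸ Set.mem_image2_of_mem hU hV,
      (e.lang_subset_SPset hU).eval_par (f.lang_subset_SPset hV)⟩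
  | star e ih =>
    refine ih.kstar.mono ?_
    rw [Term.lang_star]
    intro m hm
    induction hm using Submonoid.closure_induction with
    | mem m hm =>
      exact Set.image_mono (Set.subset_iUnion_of_subset 1 (pow_one e.lang).ge) hm
    | one => exact ⟨1, Set.mem_iUnion.2 ⟨0, rfl⟩, Pomset.eval_one⟩
    | mul m n _ _ ihm ihn =>
      obtain ⟨U, hU, rfl⟩ := ihm
      obtain ⟨V, hV, rfl⟩ := ihn
      obtain ⟨i, hU⟩ := Set.mem_iUnion.1 hU
      obtain ⟨j, hV⟩ := Set.mem_iUnion.1 hV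
      refine ⟨U * V, Set.mem_iUnion.2 ⟨i + j, ?_⟩, ?_⟩
      · rw [pow_add]
        exact Set.mul_mem_mul hU hV
      · exact (pow_subset_SPset e.lang_subset_SPset i hU).eval_mul
          (pow_subset_SPset e.lang_subset_SPset j hV)

/-- Some initial state in `I` is connected to some final state in `O` by `m`. -/
def Accepts (S : Recognizer k) (I O : Set S.State) (m : S.Val) : Prop :=
  ∃ i ∈ I, ∃ o ∈ O, S.rel m i o

/-- The recognizer with initial states `I` and final states `O` accepts all pomsets of `f` and is
sound for `f` in `K`. -/
structure Recognizes (S : Recognizer k) (I O : Set S.State) (f : Term G) : Prop where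
  weight_le : ∀ i ∈ I, ∀ o ∈ O, S.weight i o ≤ f.eval k
  accepts : ∀ U ∈ f.lang, S.Accepts I O (U.eval S.val)

theorem Recognizes.eval_le {I O : Set S.State} {e f : Term G} (h : S.Recognizes I O f)
    (he : ∀ U ∈ e.lang, S.Accepts I O (U.eval S.val)) : e.eval k ≤ f.eval k := by
  refine (S.eval_decomposes e).le ?_
  rintro _ ⟨U, hU, rfl⟩ x hx
  obtain ⟨i, hi, o, ho, hio⟩ := he U hU
  exact (hx hio).trans (h.weight_le i hi o ho)

end Recognizer

/-- Some recognizer recognizes the term `f`. -/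
def Recognizable {G : Type} {K : Type*} [ConcurrentKleeneAlgebra K] (k : G → K) (f : Term G) :
    Prop :=
  ∃ (S : Recognizer k) (I O : Set S.State), S.Recognizes I O f

end CKAH

namespace CKAH

open Bimonoid Computability

/-! ### Recognizers for letters, sums and parallel compositions -/

/-- The number of letters of a pomset, truncated at two. It suffices to tell whether a pomset is
empty or a single letter. -/
inductive TruncatedSize
  | zero
  | one
  | many
  deriving DecidableEq

namespace TruncatedSize

instance : Fintype TruncatedSize := ⟨{zero, one, many}, by rintro (_ | _ | _) <;> decide⟩

/-- Truncated addition. -/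
def add : TruncatedSize → TruncatedSize → TruncatedSize
  | .zero, n => n
  | m, .zero => m
  | _, _ => .many

instance : Bimonoid TruncatedSize where
  one := zero
  mul := add
  par := add
  mul_assoc := by decide
  one_mul := by decide
  mul_one := by decide
  par_assoc := by decide
  par_comm := by decide
  par_one := by decide

instance : Preorder TruncatedSize where
  le m n := m = n ∨ n = many
  le_refl _ := .inl rfl
  le_trans := by decide

instance : DecidableLE TruncatedSize := fun m n => inferInstanceAs (Decidable (m = n ∨ n = many))

instance : ConcurrentMonoid TruncatedSize where
  mul_le_mul {a b c d} := by revert a b c d; decide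
  par_le_par {a b c d} := by revert a b c d; decide
  exchange := by decide

end TruncatedSize

namespace Recognizer

variable {G : Type} {K : Type*} [ConcurrentKleeneAlgebra K] {k : G → K}

open scoped Classical in
/-- The recognizer of the letters in `A`, with `x` the weight of the only edge. -/
noncomputable def letters (A : Set G) {x : K} (hx : ∀ a ∈ A, k a ≤ x) : Recognizer k where
  Val := TruncatedSize
  val a := if a ∈ A then .one else .many
  le_mul_self a _ := by split_ifs <;> exact .inr rfl
  State := Bool
  weight
    | false, true => x
    | true, false => 0
    | _, _ => 1
  one_le_weight q := by cases q <;> rfl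
  weight_mul_weight_le q r s := by cases q <;> cases r <;> cases s <;> simp
  rel
    | .zero, q, r => q = r
    | .one, q, r => q = false ∧ r = true
    | .many, _, _ => False
  antitone_rel := by
    rintro m _ (rfl | rfl)
    exacts [le_rfl, fun _ _ => False.elim]
  rel_mul {m n q s} h := by
    cases m <;> cases n <;> first | exact ⟨_, rfl, h⟩ | exact ⟨_, h, rfl⟩ | exact h.elim
  rel_par {m n q r} h := by
    cases m with
    | zero => exact ⟨false, false, q, r, rfl, h, (one_par _).le⟩
    | one => cases n with
      | zero => exact ⟨q, r, false, false, h, rfl, (par_one _).le⟩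
      | one | many => exact h.elim
    | many => cases n <;> exact h.elim
  one_le_of_rel {q r} h := by obtain rfl : q = r := h; cases q <;> rfl
  le_of_rel_val {a q r} h := by
    split_ifs at h with ha
    · obtain ⟨rfl, rfl⟩ := h
      exact hx a ha
    · exact h.elim
  idle := false
  rel_idle := rfl
  weight_idle_le := le_rfl

/-- The disjoint union of two recognizers, which evaluates pomsets in both. -/
def sum (S T : Recognizer k) : Recognizer k where
  Val := S.Val × T.Val
  val a := (S.val a, T.val a)
  le_mul_self a ha := Prod.le_def.2 ⟨S.le_mul_self a ha, T.le_mul_self a ha⟩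
  State := S.State ⊕ T.State
  weight := Matrix.fromBlocks S.weight 0 0 T.weight
  one_le_weight := by rintro (q | q); exacts [S.one_le_weight q, T.one_le_weight q]
  weight_mul_weight_le := by
    rintro (q | q) (r | r) (s | s) <;> simp [S.weight_mul_weight_le, T.weight_mul_weight_le]
  rel m := Sum.LiftRel (S.rel m.1) (T.rel m.2)
  antitone_rel _ _ h _ _ := by
    have h := Prod.le_def.1 h
    exact Sum.LiftRel.mono (S.antitone_rel h.1) (T.antitone_rel h.2)
  rel_mul := by
    rintro _ _ _ _ (h | h)
    · obtain ⟨r, h, h'⟩ := S.rel_mul h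
      exact ⟨.inl r, .inl h, .inl h'⟩
    · obtain ⟨r, h, h'⟩ := T.rel_mul h
      exact ⟨.inr r, .inr h, .inr h'⟩
  rel_par := by
    rintro _ _ _ _ (h | h)
    · obtain ⟨a, b, c, d, hab, hcd, hle⟩ := S.rel_par h
      exact ⟨.inl a, .inl b, .inl c, .inl d, .inl hab, .inl hcd, hle⟩
    · obtain ⟨a, b, c, d, hab, hcd, hle⟩ := T.rel_par h
      exact ⟨.inr a, .inr b, .inr c, .inr d, .inr hab, .inr hcd, hle⟩
  one_le_of_rel := by rintro _ _ (h | h); exacts [S.one_le_of_rel h, T.one_le_of_rel h]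
  le_of_rel_val := by rintro _ _ _ (h | h); exacts [S.le_of_rel_val h, T.le_of_rel_val h]
  idle := .inl S.idle
  rel_idle := .inl S.rel_idle
  weight_idle_le := S.weight_idle_le

theorem eval_sum (S T : Recognizer k) {U : Pomset G} (hU : U.IsSP) :
    U.eval (S.sum T).val = (U.eval S.val, U.eval T.val) := by
  induction hU with
  | empty => simp only [Pomset.empty_eq_one, Pomset.eval_one]; rfl
  | single a => simp only [Pomset.eval_single]; rfl
  | seq hU hV ihU ihV => simp only [Pomset.seq_eq_mul, hU.eval_mul hV, ihU, ihV]; rfl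
  | par hU hV ihU ihV => simp only [Pomset.par_eq_par, hU.eval_par hV, ihU, ihV]; rfl

/-- The pairs of values obtained by giving the letter `a` to one of `S` and `T`, or to both if it
can be contracted. -/
def shuffleVal (S T : Recognizer k) (a : G) : Smyth (S.Val × T.Val) :=
  {p | p = (S.val a, 1) ∨ p = (1, T.val a) ∨ k a ≤ k a * k a ∧ p = (S.val a, T.val a)}

theorem mem_eval_shuffleVal_left (S T : Recognizer k) {U : Pomset G} (hU : U.IsSP) :
    (U.eval S.val, 1) ∈ U.eval (S.shuffleVal T) := by
  induction hU with
  | empty => simp only [Pomset.empty_eq_one, Pomset.eval_one]; rfl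
  | single a => simp only [Pomset.eval_single]; exact .inl rfl
  | seq hU hV ihU ihV =>
    simp only [Pomset.seq_eq_mul, hU.eval_mul hV]
    exact ⟨_, ihU, _, ihV, Prod.ext rfl (mul_one 1)⟩
  | par hU hV ihU ihV =>
    simp only [Pomset.par_eq_par, hU.eval_par hV]
    exact ⟨_, ihU, _, ihV, Prod.ext rfl (par_one 1)⟩

theorem mem_eval_shuffleVal_right (S T : Recognizer k) {U : Pomset G} (hU : U.IsSP) :
    (1, U.eval T.val) ∈ U.eval (S.shuffleVal T) := by
  induction hU with
  | empty => simp only [Pomset.empty_eq_one, Pomset.eval_one]; rfl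
  | single a => simp only [Pomset.eval_single]; exact .inr (.inl rfl)
  | seq hU hV ihU ihV =>
    simp only [Pomset.seq_eq_mul, hU.eval_mul hV]
    exact ⟨_, ihU, _, ihV, Prod.ext (mul_one 1) rfl⟩
  | par hU hV ihU ihV =>
    simp only [Pomset.par_eq_par, hU.eval_par hV]
    exact ⟨_, ihU, _, ihV, Prod.ext (par_one 1) rfl⟩

theorem shuffleVal_le_mul_self (S T : Recognizer k) {a : G} (ha : k a ≤ k a * k a) :
    S.shuffleVal T a ≤ S.shuffleVal T a * S.shuffleVal T a := by
  have hS := S.le_mul_self a ha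
  have hT := T.le_mul_self a ha
  rintro _ ⟨_, rfl | rfl | ⟨-, rfl⟩, _, rfl | rfl | ⟨-, rfl⟩, rfl⟩
  · exact ⟨_, .inl rfl, hS, (mul_one 1).ge⟩
  · exact ⟨_, .inr (.inr ⟨ha, rfl⟩), (mul_one _).ge, (one_mul _).ge⟩
  · exact ⟨_, .inr (.inr ⟨ha, rfl⟩), hS, (one_mul _).ge⟩
  · exact ⟨_, .inr (.inr ⟨ha, rfl⟩), (one_mul _).ge, (mul_one _).ge⟩
  · exact ⟨_, .inr (.inl rfl), (mul_one 1).ge, hT⟩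
  · exact ⟨_, .inr (.inr ⟨ha, rfl⟩), (one_mul _).ge, hT⟩
  · exact ⟨_, .inr (.inr ⟨ha, rfl⟩), hS, (mul_one _).ge⟩
  · exact ⟨_, .inr (.inr ⟨ha, rfl⟩), (mul_one _).ge, hT⟩
  · exact ⟨_, .inr (.inr ⟨ha, rfl⟩), hS, hT⟩

/-- The shuffle of two recognizers: the value of a pomset is the set of pairs of values that arise
by distributing its letters over the two components. -/
def shuffle (S T : Recognizer k) : Recognizer k where
  Val := Smyth (S.Val × T.Val)
  val := S.shuffleVal T
  le_mul_self _ := S.shuffleVal_le_mul_self T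
  State := S.State × T.State
  weight q r := S.weight q.1 r.1 ∥ T.weight q.2 r.2
  one_le_weight q := by
    rw [← par_one 1]
    exact ConcurrentMonoid.par_le_par (S.one_le_weight q.1) (T.one_le_weight q.2)
  weight_mul_weight_le q r s := (ConcurrentMonoid.exchange ..).trans
    (ConcurrentMonoid.par_le_par (S.weight_mul_weight_le ..) (T.weight_mul_weight_le ..))
  rel (A : Smyth (S.Val × T.Val)) q r := ∃ m ∈ A, S.rel m.1 q.1 r.1 ∧ T.rel m.2 q.2 r.2
  antitone_rel := by
    rintro A B hAB q r ⟨n, hn, hS, hT⟩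
    obtain ⟨m, hm, hmn⟩ := hAB n hn
    exact ⟨m, hm, S.antitone_rel hmn.1 _ _ hS, T.antitone_rel hmn.2 _ _ hT⟩
  rel_mul := by
    rintro A B q s ⟨_, ⟨m, hm, n, hn, rfl⟩, hS, hT⟩
    obtain ⟨r, hS, hS'⟩ := S.rel_mul hS
    obtain ⟨r', hT, hT'⟩ := T.rel_mul hT
    exact ⟨(r, r'), ⟨m, hm, hS, hT⟩, n, hn, hS', hT'⟩
  rel_par := by
    rintro A B q r ⟨_, ⟨m, hm, n, hn, rfl⟩, hS, hT⟩
    obtain ⟨a, b, c, d, hab, hcd, hle⟩ := S.rel_par hS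
    obtain ⟨a', b', c', d', hab', hcd', hle'⟩ := T.rel_par hT
    refine ⟨(a, a'), (b, b'), (c, c'), (d, d'), ⟨m, hm, hab, hab'⟩, ⟨n, hn, hcd, hcd'⟩, ?_⟩
    rw [par_par_par_comm]
    exact ConcurrentMonoid.par_le_par hle hle'
  one_le_of_rel := by
    rintro q r ⟨_, rfl, hS, hT⟩
    rw [← par_one 1]
    exact ConcurrentMonoid.par_le_par (S.one_le_of_rel hS) (T.one_le_of_rel hT)
  le_of_rel_val {a q r} := by
    rintro ⟨_, rfl | rfl | ⟨ha, rfl⟩, hS, hT⟩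
    · rw [← par_one (k a)]
      exact ConcurrentMonoid.par_le_par (S.le_of_rel_val hS) (T.one_le_of_rel hT)
    · rw [← one_par (k a)]
      exact ConcurrentMonoid.par_le_par (S.one_le_of_rel hS) (T.le_of_rel_val hT)
    · exact (ha.trans (mul_le_par _ _)).trans
        (ConcurrentMonoid.par_le_par (S.le_of_rel_val hS) (T.le_of_rel_val hT))
  idle := (S.idle, T.idle)
  rel_idle := ⟨1, rfl, S.rel_idle, T.rel_idle⟩
  weight_idle_le := by
    rw [← par_one 1]
    exact ConcurrentMonoid.par_le_par S.weight_idle_le T.weight_idle_le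

end Recognizer

namespace Recognizable

variable {G : Type} {K : Type*} [ConcurrentKleeneAlgebra K] {k : G → K} {e f : Term G}

theorem zero : Recognizable k .zero :=
  ⟨.letters ∅ (x := 0) (fun _ => False.elim), ∅, ∅, fun _ => False.elim, fun _ => False.elim⟩

theorem one : Recognizable k .one := by
  refine ⟨.letters ∅ (x := 0) (fun _ => False.elim), {false}, {false}, ?_, ?_⟩
  · rintro _ rfl _ rfl
    exact le_rfl
  · rintro _ rfl
    refine ⟨false, rfl, false, rfl, ?_⟩
    rw [Pomset.empty_eq_one, Pomset.eval_one]
    rfl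

theorem var (a : G) : Recognizable k (.var a) := by
  refine ⟨.letters {a} (x := k a) (by rintro _ rfl; rfl), {false}, {true}, ?_, ?_⟩
  · rintro _ rfl _ rfl
    exact le_rfl
  · rintro _ rfl
    refine ⟨false, rfl, true, rfl, ?_⟩
    rw [Pomset.eval_single]
    simp [Recognizer.letters]

theorem add (he : Recognizable k e) (hf : Recognizable k f) : Recognizable k (e.add f) := by
  obtain ⟨S, I, O, hS⟩ := he
  obtain ⟨T, I', O', hT⟩ := hf
  refine ⟨S.sum T, .inl '' I ∪ .inr '' I', .inl '' O ∪ .inr '' O', ?_, ?_⟩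
  · rintro _ (⟨i, hi, rfl⟩ | ⟨i, hi, rfl⟩) _ (⟨o, ho, rfl⟩ | ⟨o, ho, rfl⟩)
    exacts [(hS.weight_le i hi o ho).trans le_self_add, zero_le, zero_le,
      (hT.weight_le i hi o ho).trans le_add_self]
  · rintro U (hU | hU)
    · obtain ⟨i, hi, o, ho, h⟩ := hS.accepts U hU
      refine ⟨.inl i, .inl ⟨i, hi, rfl⟩, .inl o, .inl ⟨o, ho, rfl⟩, ?_⟩
      rw [S.eval_sum T (e.lang_subset_SPset hU)]
      exact .inl h
    · obtain ⟨i, hi, o, ho, h⟩ := hT.accepts U hU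
      refine ⟨.inr i, .inr ⟨i, hi, rfl⟩, .inr o, .inr ⟨o, ho, rfl⟩, ?_⟩
      rw [S.eval_sum T (f.lang_subset_SPset hU)]
      exact .inr h

theorem par (he : Recognizable k e) (hf : Recognizable k f) : Recognizable k (e.par f) := by
  obtain ⟨S, I, O, hS⟩ := he
  obtain ⟨T, I', O', hT⟩ := hf
  refine ⟨S.shuffle T, I ×ˢ I', O ×ˢ O', fun i hi o ho => ?_, ?_⟩
  · exact ConcurrentMonoid.par_le_par (hS.weight_le _ hi.1 _ ho.1) (hT.weight_le _ hi.2 _ ho.2)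
  · rw [Term.lang_par]
    rintro _ ⟨U, hU, V, hV, rfl⟩
    obtain ⟨i, hi, o, ho, h⟩ := hS.accepts U hU
    obtain ⟨i', hi', o', ho', h'⟩ := hT.accepts V hV
    refine ⟨(i, i'), ⟨hi, hi'⟩, (o, o'), ⟨ho, ho'⟩, (U.eval S.val, V.eval T.val), ?_, h, h'⟩
    have hU := e.lang_subset_SPset hU
    have hV := f.lang_subset_SPset hV
    rw [hU.eval_par hV]
    exact ⟨_, S.mem_eval_shuffleVal_left T hU, _, S.mem_eval_shuffleVal_right T hV,
      Prod.ext (par_one _) (one_par _)⟩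

end Recognizable

end CKAH

namespace CKAH

open Bimonoid Computability Relation

/-! ### Recognizers for sequential compositions and stars -/

namespace Recognizer

variable {G : Type} {K : Type*} [ConcurrentKleeneAlgebra K] {k : G → K}

section Feedback

variable (S : Recognizer k) (E : S.State → S.State → Prop)

/-- The moves of a recognizer `S`, extended by edges `E`, that read nothing. -/
def Silent : S.State → S.State → Prop :=
  ReflTransGen fun q r => E q r ∨ S.rel 1 q r

/-- The relation `R` with silent moves allowed before and after it. -/
def saturate (R : S.State → S.State → Prop) : S.State → S.State → Prop :=
  Comp (S.Silent E) (Comp R (S.Silent E))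

variable {S E} {R R' : S.State → S.State → Prop} {q r s : S.State}

theorem Silent.refl : S.Silent E q q := ReflTransGen.refl

theorem Silent.of_edge (h : E q r) : S.Silent E q r := .single (.inl h)

theorem Silent.of_rel (h : S.rel 1 q r) : S.Silent E q r := .single (.inr h)

theorem Silent.trans (h : S.Silent E q r) (h' : S.Silent E r s) : S.Silent E q s :=
  ReflTransGen.trans h h'

theorem le_saturate : R ≤ S.saturate E R := fun q r h => ⟨q, .refl, r, h, .refl⟩

theorem saturate_mono (h : R ≤ R') : S.saturate E R ≤ S.saturate E R' := by
  rintro q r ⟨a, ha, b, hb, hr⟩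
  exact ⟨a, ha, b, h _ _ hb, hr⟩

theorem saturate_saturate_le : S.saturate E (S.saturate E R) ≤ S.saturate E R := by
  rintro q r ⟨a, ha, b, ⟨c, hc, d, hd, hb⟩, hr⟩
  exact ⟨c, ha.trans hc, d, hd, hb.trans hr⟩

theorem saturate_silent_le : S.saturate E (S.Silent E) ≤ S.Silent E := by
  rintro q r ⟨a, ha, b, hb, hr⟩
  exact ha.trans (hb.trans hr)

theorem saturate_transGen_saturate_le :
    S.saturate E (TransGen (S.saturate E R)) ≤ TransGen (S.saturate E R) := by
  rintro q r ⟨a, ha, b, hab, hb⟩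
  obtain ⟨c, hac, hcb⟩ := TransGen.head'_iff.1 hab
  have hqb := TransGen.head' (saturate_saturate_le _ _ ⟨a, ha, c, hac, .refl⟩) hcb
  obtain ⟨d, hqd, hdb⟩ := TransGen.tail'_iff.1 hqb
  exact .tail' hqd (saturate_saturate_le _ _ ⟨d, .refl, b, hdb, hb⟩)

variable (S E)

/-- A value of the recognizer obtained from `S` by adding edges `E` that read nothing: the value of
a pomset in `S`, the pairs of states that the pomset connects along the new edges, and whether the
pomset is empty. -/
@[ext] structure FeedbackVal where
  val : S.Val
  rel : S.State → S.State → Prop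
  neutral : Prop
  rel_val_le : S.rel val ≤ rel
  saturate_le : S.saturate E rel ≤ rel
  eq_of_neutral : neutral → val = 1 ∧ rel = S.Silent E

namespace FeedbackVal

variable {S E} {x y z x' y' : S.FeedbackVal E}

theorem saturate_rel_val_le (x : S.FeedbackVal E) : S.saturate E (S.rel x.val) ≤ x.rel :=
  (saturate_mono x.rel_val_le).trans x.saturate_le

theorem comp_silent (x : S.FeedbackVal E) : Comp x.rel (S.Silent E) = x.rel := by
  ext q r
  exact ⟨fun ⟨a, ha, hr⟩ => x.saturate_le _ _ ⟨q, .refl, a, ha, hr⟩, fun h => ⟨r, h, .refl⟩⟩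

theorem silent_comp (x : S.FeedbackVal E) : Comp (S.Silent E) x.rel = x.rel := by
  ext q r
  exact ⟨fun ⟨a, ha, hr⟩ => x.saturate_le _ _ ⟨a, ha, r, hr, .refl⟩, fun h => ⟨q, .refl, h⟩⟩

instance : Finite (S.FeedbackVal E) :=
  Finite.of_injective (β := S.Val × (S.State → S.State → Prop) × Prop)
    (fun x => (x.val, x.rel, x.neutral)) fun x y h => by
      simp only [Prod.mk.injEq] at h
      exact FeedbackVal.ext h.1 h.2.1 h.2.2

instance : One (S.FeedbackVal E) where
  one :=
    { val := 1
      rel := S.Silent E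
      neutral := True
      rel_val_le := fun _ _ => .of_rel
      saturate_le := saturate_silent_le
      eq_of_neutral := fun _ => ⟨rfl, rfl⟩ }

instance : Mul (S.FeedbackVal E) where
  mul x y :=
    { val := x.val * y.val
      rel := Comp x.rel y.rel
      neutral := x.neutral ∧ y.neutral
      rel_val_le := fun q s h => by
        obtain ⟨r, hqr, hrs⟩ := S.rel_mul h
        exact ⟨r, x.rel_val_le _ _ hqr, y.rel_val_le _ _ hrs⟩
      saturate_le := by
        rw [saturate, comp_assoc, y.comp_silent, ← comp_assoc, x.silent_comp]
      eq_of_neutral := fun ⟨hx, hy⟩ => by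
        rw [(x.eq_of_neutral hx).1, (y.eq_of_neutral hy).1, (x.eq_of_neutral hx).2, y.silent_comp,
          (y.eq_of_neutral hy).2, mul_one]
        exact ⟨rfl, rfl⟩ }

/-- The pairs of states that two parallel pomsets connect: unless one of them is empty, they have to
be read between two states of `S` without using the new edges in between. -/
def parRel (x y : S.FeedbackVal E) (q r : S.State) : Prop :=
  x.neutral ∧ y.rel q r ∨ y.neutral ∧ x.rel q r ∨ S.saturate E (S.rel (x.val ∥ y.val)) q r

theorem parRel_comm (x y : S.FeedbackVal E) : x.parRel y = y.parRel x := by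
  ext q r
  rw [parRel, parRel, par_comm, or_left_comm]

theorem saturate_parRel_le (x y : S.FeedbackVal E) :
    S.saturate E (x.parRel y) ≤ x.parRel y := by
  rintro q r ⟨a, ha, b, ⟨hx, h⟩ | ⟨hy, h⟩ | h, hr⟩
  · exact .inl ⟨hx, y.saturate_le _ _ ⟨a, ha, b, h, hr⟩⟩
  · exact .inr (.inl ⟨hy, x.saturate_le _ _ ⟨a, ha, b, h, hr⟩⟩)
  · exact .inr (.inr (saturate_saturate_le _ _ ⟨a, ha, b, h, hr⟩))

theorem parRel_eq_of_neutral (hx : x.neutral) (y : S.FeedbackVal E) : x.parRel y = y.rel := by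
  ext q r
  refine ⟨?_, fun h => .inl ⟨hx, h⟩⟩
  rw [parRel, (x.eq_of_neutral hx).1, (x.eq_of_neutral hx).2, one_par]
  rintro (⟨-, h⟩ | ⟨hy, h⟩ | h)
  · exact h
  · exact (y.eq_of_neutral hy).2 ▸ h
  · exact y.saturate_rel_val_le _ _ h

/-- The parallel composition of values. -/
def par (x y : S.FeedbackVal E) : S.FeedbackVal E where
  val := x.val ∥ y.val
  rel := x.parRel y
  neutral := x.neutral ∧ y.neutral
  rel_val_le _ _ h := .inr (.inr (le_saturate _ _ h))
  saturate_le := x.saturate_parRel_le y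
  eq_of_neutral := fun ⟨hx, hy⟩ => by
    rw [parRel_eq_of_neutral hx, (x.eq_of_neutral hx).1, (y.eq_of_neutral hy).1, one_par]
    exact ⟨rfl, (y.eq_of_neutral hy).2⟩

theorem par_parRel_iff (q r : S.State) : (x.par y).parRel z q r ↔
    x.neutral ∧ y.neutral ∧ z.rel q r ∨ x.neutral ∧ z.neutral ∧ y.rel q r ∨
      y.neutral ∧ z.neutral ∧ x.rel q r ∨
      S.saturate E (S.rel (x.val ∥ y.val ∥ z.val)) q r := by
  have (hz : z.neutral) : x.val ∥ y.val ∥ z.val = x.val ∥ y.val := by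
    rw [(z.eq_of_neutral hz).1, par_one]
  simp only [par, parRel]
  by_cases hz : z.neutral
  · rw [this hz]; tauto
  · tauto

instance : Bimonoid (S.FeedbackVal E) where
  par := par
  mul_assoc x y z := FeedbackVal.ext (mul_assoc ..) (comp_assoc ..) (propext and_assoc)
  one_mul x := FeedbackVal.ext (one_mul _) x.silent_comp (true_and _)
  mul_one x := FeedbackVal.ext (mul_one _) x.comp_silent (and_true _)
  par_comm x y := FeedbackVal.ext (par_comm ..) (x.parRel_comm y) (propext and_comm)
  par_assoc x y z := FeedbackVal.ext (par_assoc ..)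
    (by
      change (x.par y).parRel z = x.parRel (y.par z)
      ext q r
      rw [parRel_comm x, par_parRel_iff, par_parRel_iff, par_comm (y.val ∥ z.val), par_assoc]
      tauto)
    (propext and_assoc)
  par_one x := FeedbackVal.ext (par_one _)
    ((x.parRel_comm 1).trans (parRel_eq_of_neutral (x := 1) trivial x)) (and_true _)

instance : Preorder (S.FeedbackVal E) where
  le x y := x.val ≤ y.val ∧ y.rel ≤ x.rel ∧ (y.neutral → x.neutral)
  le_refl _ := ⟨le_rfl, le_rfl, id⟩
  le_trans _ _ _ h h' := ⟨h.1.trans h'.1, h'.2.1.trans h.2.1, h.2.2 ∘ h'.2.2⟩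

instance : ConcurrentMonoid (S.FeedbackVal E) where
  mul_le_mul h h' := ⟨ConcurrentMonoid.mul_le_mul h.1 h'.1,
    fun _ _ ⟨p, hp, hp'⟩ => ⟨p, h.2.1 _ _ hp, h'.2.1 _ _ hp'⟩, And.imp h.2.2 h'.2.2⟩
  par_le_par h h' :=
    have val_le := ConcurrentMonoid.par_le_par h.1 h'.1
    ⟨val_le, fun _ _ => Or.imp (And.imp h.2.2 (h'.2.1 _ _))
      (Or.imp (And.imp h'.2.2 (h.2.1 _ _)) (saturate_mono (S.antitone_rel val_le) _ _)),
      And.imp h.2.2 h'.2.2⟩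
  exchange x y z w := by
    refine ⟨ConcurrentMonoid.exchange .., ?_, fun ⟨⟨hx, hz⟩, hy, hw⟩ => ⟨⟨hx, hy⟩, hz, hw⟩⟩
    rintro q r (⟨⟨hx, hz⟩, p, hp, hp'⟩ | ⟨⟨hy, hw⟩, p, hp, hp'⟩ | ⟨a, ha, b, hab, hb⟩)
    · exact ⟨p, .inl ⟨hx, hp⟩, .inl ⟨hz, hp'⟩⟩
    · exact ⟨p, .inr (.inl ⟨hy, hp⟩), .inr (.inl ⟨hw, hp'⟩)⟩
    · obtain ⟨p, hp, hp'⟩ := S.rel_mul (S.antitone_rel (ConcurrentMonoid.exchange ..) _ _ hab)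
      exact ⟨p, .inr (.inr ⟨a, ha, p, hp, .refl⟩), .inr (.inr ⟨p, .refl, b, hp', hb⟩)⟩

end FeedbackVal

/-- The value of a letter after adding the edges `E`. A letter that can be contracted may be read
several times. -/
def feedbackVal (a : G) : S.FeedbackVal E where
  val := S.val a
  rel q r := S.saturate E (S.rel (S.val a)) q r ∨
    k a ≤ k a * k a ∧ TransGen (S.saturate E (S.rel (S.val a))) q r
  neutral := False
  rel_val_le _ _ h := .inl (le_saturate _ _ h)
  saturate_le := by
    rintro q r ⟨a, ha, b, h | ⟨hk, h⟩, hr⟩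
    · exact .inl (saturate_saturate_le _ _ ⟨a, ha, b, h, hr⟩)
    · exact .inr ⟨hk, saturate_transGen_saturate_le _ _ ⟨a, ha, b, h, hr⟩⟩
  eq_of_neutral := False.elim

theorem feedbackVal_le_mul_self {a : G} (ha : k a ≤ k a * k a) :
    S.feedbackVal E a ≤ S.feedbackVal E a * S.feedbackVal E a := by
  refine ⟨S.le_mul_self a ha, ?_, And.left⟩
  have transGen {q r} (h : (S.feedbackVal E a).rel q r) :
      TransGen (S.saturate E (S.rel (S.val a))) q r := h.elim .single And.right
  rintro q r ⟨p, hp, hr⟩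
  exact .inr ⟨ha, (transGen hp).trans (transGen hr)⟩

variable {S} in
theorem val_eval_feedbackVal {U : Pomset G} (hU : U.IsSP) :
    (U.eval (S.feedbackVal E)).val = U.eval S.val := by
  induction hU with
  | empty => simp only [Pomset.empty_eq_one, Pomset.eval_one]; rfl
  | single a => simp only [Pomset.eval_single]; rfl
  | seq hU hV ihU ihV => simp only [Pomset.seq_eq_mul, hU.eval_mul hV, ← ihU, ← ihV]; rfl
  | par hU hV ihU ihV => simp only [Pomset.par_eq_par, hU.eval_par hV, ← ihU, ← ihV]; rfl

open scoped Classical in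
/-- The weights of `S` closed under the additional edges `E`. -/
noncomputable def feedbackWeight : Matrix S.State S.State K :=
  starMatrix fun q r => S.weight q r + if E q r then 1 else 0

variable {S E} in
theorem feedbackWeight_mul_le {w : S.State → K} (hw : ∀ q r, S.weight q r * w r ≤ w q)
    (hE : ∀ q r, E q r → w r ≤ w q) (q r : S.State) : S.feedbackWeight E q r * w r ≤ w q := by
  refine starMatrix_mul_le (fun q r => ?_) q r
  rw [add_mul]
  split_ifs with h
  · exact add_le (hw q r) ((one_mul _).trans_le (hE q r h))
  · exact add_le (hw q r) ((zero_mul _).trans_le zero_le)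

theorem feedbackWeight_mul_feedbackWeight_le (q r s : S.State) :
    S.feedbackWeight E q r * S.feedbackWeight E r s ≤ S.feedbackWeight E q s :=
  starMatrix_mul_starMatrix_le _ q r s

theorem weight_le_feedbackWeight (q r : S.State) : S.weight q r ≤ S.feedbackWeight E q r := by
  refine le_trans ?_ (le_starMatrix _ q r)
  exact le_self_add

variable {S E} in
theorem one_le_feedbackWeight_of_edge {q r : S.State} (h : E q r) : 1 ≤ S.feedbackWeight E q r := by
  refine le_trans ?_ (le_starMatrix _ q r)
  rw [if_pos h]
  exact le_add_self

variable {S E} in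
theorem one_le_feedbackWeight_of_silent {q r : S.State} (h : S.Silent E q r) :
    1 ≤ S.feedbackWeight E q r := by
  induction h with
  | refl => exact one_le_starMatrix _ q
  | tail _ hrs ih =>
    refine (one_le_mul ih ?_).trans (S.feedbackWeight_mul_feedbackWeight_le E _ _ _)
    obtain hrs | hrs := hrs
    · exact one_le_feedbackWeight_of_edge hrs
    · exact (S.one_le_of_rel hrs).trans (S.weight_le_feedbackWeight E _ _)

variable {S E} in
theorem le_feedbackWeight_of_silent {x : K} {a b q r : S.State} (ha : S.Silent E q a)
    (hx : x ≤ S.feedbackWeight E a b) (hb : S.Silent E b r) : x ≤ S.feedbackWeight E q r := by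
  calc x = 1 * (x * 1) := by rw [mul_one, one_mul]
    _ ≤ S.feedbackWeight E q a * (S.feedbackWeight E a b * S.feedbackWeight E b r) :=
      mul_le_mul' (one_le_feedbackWeight_of_silent ha)
        (mul_le_mul' hx (one_le_feedbackWeight_of_silent hb))
    _ ≤ S.feedbackWeight E q r := by
      grw [feedbackWeight_mul_feedbackWeight_le, feedbackWeight_mul_feedbackWeight_le]

theorem le_feedbackWeight_of_feedbackVal {a : G} {q r : S.State}
    (h : (S.feedbackVal E a).rel q r) : k a ≤ S.feedbackWeight E q r := by
  have le {q r} : S.saturate E (S.rel (S.val a)) q r → k a ≤ S.feedbackWeight E q r :=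
    fun ⟨_, hp, _, h, hp'⟩ => le_feedbackWeight_of_silent hp
      ((S.le_of_rel_val h).trans (S.weight_le_feedbackWeight E _ _)) hp'
  obtain h | ⟨ha, h⟩ := h
  · exact le h
  · induction h with
    | single h => exact le h
    | tail _ h ih =>
      exact (ha.trans (mul_le_mul' ih (le h))).trans
        (S.feedbackWeight_mul_feedbackWeight_le E _ _ _)

/-- The recognizer `S` with additional edges `E` that read nothing. The original states are kept
as well: parallel pomsets are read along them, because their components may not use the edges. -/
noncomputable def feedback : Recognizer k where
  Val := S.FeedbackVal E
  val := S.feedbackVal E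
  le_mul_self _ := S.feedbackVal_le_mul_self E
  State := S.State ⊕ S.State
  weight := Matrix.fromBlocks S.weight 0 0 (S.feedbackWeight E)
  one_le_weight := by
    rintro (q | q)
    exacts [S.one_le_weight q, one_le_feedbackWeight_of_silent .refl]
  weight_mul_weight_le := by
    rintro (q | q) (r | r) (s | s) <;>
      simp [S.weight_mul_weight_le, S.feedbackWeight_mul_feedbackWeight_le]
  rel x := Sum.LiftRel (S.rel x.val) x.rel
  antitone_rel _ _ h _ _ := Sum.LiftRel.mono (S.antitone_rel h.1) h.2.1
  rel_mul := by
    rintro x y _ _ (h | ⟨r, hr, hr'⟩)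
    · obtain ⟨r, h, h'⟩ := S.rel_mul h
      exact ⟨.inl r, .inl h, .inl h'⟩
    · exact ⟨.inr r, .inr hr, .inr hr'⟩
  rel_par := by
    rintro x y _ _ (h | ⟨hx, h⟩ | ⟨hy, h⟩ | ⟨p, hp, p', h, hp'⟩)
    · obtain ⟨a, b, c, d, hab, hcd, hle⟩ := S.rel_par h
      exact ⟨.inl a, .inl b, .inl c, .inl d, .inl hab, .inl hcd, hle⟩
    · refine ⟨.inl S.idle, .inl S.idle, _, _, .inl ?_, .inr h, ?_⟩
      · rw [(x.eq_of_neutral hx).1]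
        exact S.rel_idle
      · exact (ConcurrentMonoid.par_le_par S.weight_idle_le le_rfl).trans_eq (one_par _)
    · refine ⟨_, _, .inl S.idle, .inl S.idle, .inr h, .inl ?_, ?_⟩
      · rw [(y.eq_of_neutral hy).1]
        exact S.rel_idle
      · exact (ConcurrentMonoid.par_le_par le_rfl S.weight_idle_le).trans_eq (par_one _)
    · obtain ⟨a, b, c, d, hab, hcd, hle⟩ := S.rel_par h
      exact ⟨.inl a, .inl b, .inl c, .inl d, .inl hab, .inl hcd, le_feedbackWeight_of_silent hp
        (hle.trans (S.weight_le_feedbackWeight E _ _)) hp'⟩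
  one_le_of_rel := by
    rintro _ _ (h | h)
    exacts [S.one_le_of_rel h, one_le_feedbackWeight_of_silent h]
  le_of_rel_val := by
    rintro _ _ _ (h | h)
    exacts [S.le_of_rel_val h, S.le_feedbackWeight_of_feedbackVal E h]
  idle := .inl S.idle
  rel_idle := .inl S.rel_idle
  weight_idle_le := S.weight_idle_le

variable {S E} in
theorem rel_eval_feedbackVal {U : Pomset G} (hU : U.IsSP) {q r : S.State}
    (h : S.rel (U.eval S.val) q r) : (U.eval (S.feedbackVal E)).rel q r :=
  FeedbackVal.rel_val_le _ _ _ ((val_eval_feedbackVal E hU).symm ▸ h)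

variable {S E} in
theorem rel_eval_feedbackVal_mul {U V : Pomset G} (hU : U.IsSP) (hV : V.IsSP)
    {q o i r : S.State} (hqo : S.rel (U.eval S.val) q o) (hoi : E o i)
    (hir : (V.eval (S.feedbackVal E)).rel i r) : ((U * V).eval (S.feedbackVal E)).rel q r := by
  rw [hU.eval_mul hV]
  exact ⟨o, rel_eval_feedbackVal hU hqo,
    FeedbackVal.saturate_le _ _ _ ⟨i, .of_edge hoi, r, hir, .refl⟩⟩

end Feedback

section WeightTo

variable (S : Recognizer k)

open scoped Classical in
/-- The total weight from `q` to the states in `O`. -/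
noncomputable def weightTo (O : Set S.State) (q : S.State) : K :=
  have := Fintype.ofFinite S.State
  ∑ o with o ∈ O, S.weight q o

theorem weight_mul_weightTo_le (O : Set S.State) (q r : S.State) :
    S.weight q r * S.weightTo O r ≤ S.weightTo O q :=
  mul_sum_le fun _ ho => (S.weight_mul_weight_le q r _).trans (le_sum_of_mem (f := S.weight q) ho)

variable {S} {I O : Set S.State} {q : S.State}

theorem one_le_weightTo (ho : q ∈ O) : 1 ≤ S.weightTo O q :=
  (S.one_le_weight q).trans (le_sum_of_mem (f := S.weight q) (by simpa using ho))

theorem Recognizes.weightTo_le {f : Term G} (h : S.Recognizes I O f) (hq : q ∈ I) :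
    S.weightTo O q ≤ f.eval k :=
  sum_le_of_forall_le fun o ho => h.weight_le q hq o (by simpa using ho)

end WeightTo

section Star

variable {S : Recognizer k} {I O : Set S.State} {e : Term G}

theorem Recognizes.feedbackWeight_le_kstar (h : S.Recognizes I O (.add .one e)) {i o : S.State}
    (hi : i ∈ I) (ho : o ∈ O) :
    S.feedbackWeight (fun o i => o ∈ O ∧ i ∈ I) i o ≤ (e.eval k)∗ := by
  let w (q : S.State) : K := S.weightTo O q * (e.eval k)∗
  have hw (q r : S.State) : S.weight q r * w r ≤ w q :=
    (mul_assoc _ _ _).symm.trans_le (mul_le_mul_left (S.weight_mul_weightTo_le O q r) _)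
  have w_le {i} (hi : i ∈ I) : w i ≤ (e.eval k)∗ := by
    calc w i ≤ (1 + e.eval k) * (e.eval k)∗ := mul_le_mul_left (h.weightTo_le hi) _
      _ = (e.eval k)∗ + e.eval k * (e.eval k)∗ := by rw [add_mul, one_mul]
      _ ≤ (e.eval k)∗ := add_le le_rfl mul_kstar_le_kstar
  have hE (o i : S.State) : o ∈ O ∧ i ∈ I → w i ≤ w o := fun ⟨ho, hi⟩ =>
    (w_le hi).trans (le_mul_of_one_le_left' (one_le_weightTo ho))
  calc S.feedbackWeight _ i o
      ≤ S.feedbackWeight _ i o * w o :=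
        le_mul_of_one_le_right' (one_le_mul (one_le_weightTo ho) one_le_kstar)
    _ ≤ w i := feedbackWeight_mul_le hw hE i o
    _ ≤ (e.eval k)∗ := w_le hi

theorem Recognizes.exists_rel_of_mem_pow (h : S.Recognizes I O (.add .one e)) (n : ℕ) :
    ∀ U ∈ e.lang ^ n, ∃ i ∈ I, ∃ o ∈ O,
      (U.eval (S.feedbackVal fun o i => o ∈ O ∧ i ∈ I)).rel i o := by
  induction n with
  | zero =>
    rintro _ rfl
    obtain ⟨i, hi, o, ho, hio⟩ := h.accepts 1 (.inl rfl)
    exact ⟨i, hi, o, ho, rel_eval_feedbackVal .empty hio⟩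
  | succ n ih =>
    rw [pow_succ']
    rintro _ ⟨U, hU, V, hV, rfl⟩
    obtain ⟨i, hi, o, ho, hio⟩ := h.accepts U (.inr hU)
    obtain ⟨i', hi', o', ho', hio'⟩ := ih V hV
    exact ⟨i, hi, o', ho', rel_eval_feedbackVal_mul (e.lang_subset_SPset hU)
      (pow_subset_SPset e.lang_subset_SPset n hV) hio ⟨ho, hi'⟩ hio'⟩

end Star

end Recognizer

namespace Recognizable

variable {G : Type} {K : Type*} [ConcurrentKleeneAlgebra K] {k : G → K} {e f : Term G}

theorem seq (he : Recognizable k e) (hf : Recognizable k f) : Recognizable k (e.seq f) := by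
  obtain ⟨S, I, O, hS⟩ := he
  obtain ⟨T, I', O', hT⟩ := hf
  let E (q r : S.State ⊕ T.State) : Prop := ∃ o ∈ O, ∃ i ∈ I', q = .inl o ∧ r = .inr i
  refine ⟨(S.sum T).feedback E, .inr '' (.inl '' I), .inr '' (.inr '' O'), ?_, ?_⟩
  · let w : (S.sum T).State → K := Sum.elim (S.weightTo O · * f.eval k) (T.weightTo O')
    have hw (q r : (S.sum T).State) : (S.sum T).weight q r * w r ≤ w q := by
      obtain q | q := q <;> obtain r | r := r
      · exact (mul_assoc _ _ _).symm.trans_le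
          (mul_le_mul_left (S.weight_mul_weightTo_le O q r) _)
      · exact (zero_mul _).trans_le zero_le
      · exact (zero_mul _).trans_le zero_le
      · exact T.weight_mul_weightTo_le O' q r
    have hE (q r : (S.sum T).State) : E q r → w r ≤ w q := by
      rintro ⟨o, ho, i, hi, rfl, rfl⟩
      exact (hT.weightTo_le hi).trans (le_mul_of_one_le_left' (Recognizer.one_le_weightTo ho))
    rintro _ ⟨_, ⟨i, hi, rfl⟩, rfl⟩ _ ⟨_, ⟨o, ho, rfl⟩, rfl⟩
    calc (S.sum T).feedbackWeight E (.inl i) (.inr o)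
        ≤ (S.sum T).feedbackWeight E (.inl i) (.inr o) * w (.inr o) :=
          le_mul_of_one_le_right' (Recognizer.one_le_weightTo ho)
      _ ≤ w (.inl i) := Recognizer.feedbackWeight_mul_le hw hE _ _
      _ ≤ e.eval k * f.eval k := mul_le_mul_left (hS.weightTo_le hi) _
  · rw [Term.lang_seq]
    rintro _ ⟨U, hU, V, hV, rfl⟩
    obtain ⟨i, hi, o, ho, hio⟩ := hS.accepts U hU
    obtain ⟨i', hi', o', ho', hio'⟩ := hT.accepts V hV
    have hU := e.lang_subset_SPset hU
    have hV := f.lang_subset_SPset hV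
    have hio : (S.sum T).rel (U.eval (S.sum T).val) (.inl i) (.inl o) := by
      rw [S.eval_sum T hU]
      exact .inl hio
    have hio' : (S.sum T).rel (V.eval (S.sum T).val) (.inr i') (.inr o') := by
      rw [S.eval_sum T hV]
      exact .inr hio'
    exact ⟨_, ⟨_, ⟨i, hi, rfl⟩, rfl⟩, _, ⟨_, ⟨o', ho', rfl⟩, rfl⟩,
      .inr (Recognizer.rel_eval_feedbackVal_mul hU hV hio ⟨o, ho, i', hi', rfl, rfl⟩
        (Recognizer.rel_eval_feedbackVal hV hio'))⟩

theorem star (he : Recognizable k e) : Recognizable k e.star := by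
  -- The recognizer of `1 + e` also accepts the empty pomset, and `(1 + e)∗ = e∗`.
  obtain ⟨S, I, O, hS⟩ := one.add he
  refine ⟨S.feedback fun o i => o ∈ O ∧ i ∈ I, .inr '' I, .inr '' O, ?_, ?_⟩
  · rintro _ ⟨i, hi, rfl⟩ _ ⟨o, ho, rfl⟩
    exact hS.feedbackWeight_le_kstar hi ho
  · rw [Term.lang_star]
    intro U hU
    obtain ⟨n, hU⟩ := Set.mem_iUnion.1 hU
    obtain ⟨i, hi, o, ho, hio⟩ := hS.exists_rel_of_mem_pow n U hU
    exact ⟨_, ⟨i, hi, rfl⟩, _, ⟨o, ho, rfl⟩, .inr hio⟩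

end Recognizable

theorem recognizable {G : Type} {K : Type*} [ConcurrentKleeneAlgebra K] (k : G → K) (e : Term G) :
    Recognizable k e := by
  induction e with
  | zero => exact .zero
  | one => exact .one
  | var a => exact .var a
  | add _ _ he hf => exact he.add hf
  | seq _ _ he hf => exact he.seq hf
  | par _ _ he hf => exact he.par hf
  | star _ he => exact he.star

end CKAH

namespace CKAH

/-! ### The Lindenbaum algebra of observations -/

/-- The value of a propositional term in a Boolean algebra, given the values of the observations.
An atom `α : Ω → Bool` satisfies `p` if `p.eval α = true`. -/
def BATerm.eval {Ω : Type} {B : Type*} [BooleanAlgebra B] (v : Ω → B) : BATerm Ω → B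
  | .bot => ⊥
  | .top => ⊤
  | .var o => v o
  | .or p q => p.eval v ⊔ q.eval v
  | .and p q => p.eval v ⊓ q.eval v
  | .not p => (p.eval v)ᶜ

theorem BACong.eval_eq {Ω : Type} {B : Type*} [BooleanAlgebra B] {p q : BATerm Ω}
    (h : BACong p q) (v : Ω → B) : p.eval v = q.eval v := by
  induction h with
  | refl p => rfl
  | symm _ ih => exact ih.symm
  | trans _ _ ih₁ ih₂ => exact ih₁.trans ih₂
  | orCong _ _ ih₁ ih₂ => exact congrArg₂ (· ⊔ ·) ih₁ ih₂
  | andCong _ _ ih₁ ih₂ => exact congrArg₂ (· ⊓ ·) ih₁ ih₂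
  | notCong _ ih => exact congrArg compl ih
  | orBot p => exact sup_bot_eq _
  | orComm p q => exact sup_comm _ _
  | orNot p => exact sup_compl_eq_top
  | orAssoc p q r => exact (sup_assoc _ _ _).symm
  | andTop p => exact inf_top_eq _
  | andComm p q => exact inf_comm _ _
  | andNot p => exact inf_compl_eq_bot
  | andAssoc p q r => exact (inf_assoc _ _ _).symm
  | orAndDist p q r => exact sup_inf_left _ _ _
  | andOrDist p q r => exact inf_sup_left _ _ _

/-- The setoid of the congruence `≡_BA`. -/
def BATerm.setoid (Ω : Type) : Setoid (BATerm Ω) := ⟨BACong, .refl, .symm, .trans⟩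

/-- The Lindenbaum algebra: propositional terms modulo `≡_BA`. -/
def Lindenbaum (Ω : Type) : Type := Quotient (BATerm.setoid Ω)

namespace Lindenbaum

variable {Ω : Type}

/-- The class of a propositional term. -/
def mk (p : BATerm Ω) : Lindenbaum Ω := Quotient.mk _ p

theorem mk_eq_mk_iff {p q : BATerm Ω} : mk p = mk q ↔ BACong p q := Quotient.eq

instance : Max (Lindenbaum Ω) where
  max x y := Quotient.map₂ (sa := BATerm.setoid Ω) (sb := BATerm.setoid Ω) .or
    (fun _ _ h _ _ h' => h.orCong h') x y

instance : Min (Lindenbaum Ω) where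
  min x y := Quotient.map₂ (sa := BATerm.setoid Ω) (sb := BATerm.setoid Ω) .and
    (fun _ _ h _ _ h' => h.andCong h') x y

instance : Compl (Lindenbaum Ω) where
  compl x := Quotient.map (sa := BATerm.setoid Ω) .not (fun _ _ h => h.notCong) x

instance : Top (Lindenbaum Ω) := ⟨mk .top⟩

instance : Bot (Lindenbaum Ω) := ⟨mk .bot⟩

section BooleanAlgebraAxioms

variable (x y z : Lindenbaum Ω)

protected theorem sup_comm : x ⊔ y = y ⊔ x := by
  rcases x, y with ⟨⟨p⟩, ⟨q⟩⟩
  exact mk_eq_mk_iff.2 (.orComm p q)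

protected theorem inf_comm : x ⊓ y = y ⊓ x := by
  rcases x, y with ⟨⟨p⟩, ⟨q⟩⟩
  exact mk_eq_mk_iff.2 (.andComm p q)

protected theorem sup_assoc : x ⊔ y ⊔ z = x ⊔ (y ⊔ z) := by
  rcases x, y, z with ⟨⟨p⟩, ⟨q⟩, ⟨r⟩⟩
  exact mk_eq_mk_iff.2 (.symm (.orAssoc p q r))

protected theorem inf_assoc : x ⊓ y ⊓ z = x ⊓ (y ⊓ z) := by
  rcases x, y, z with ⟨⟨p⟩, ⟨q⟩, ⟨r⟩⟩
  exact mk_eq_mk_iff.2 (.symm (.andAssoc p q r))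

protected theorem sup_bot : x ⊔ ⊥ = x := by
  rcases x with ⟨p⟩
  exact mk_eq_mk_iff.2 (.orBot p)

protected theorem inf_top : x ⊓ ⊤ = x := by
  rcases x with ⟨p⟩
  exact mk_eq_mk_iff.2 (.andTop p)

protected theorem sup_compl : x ⊔ xᶜ = ⊤ := by
  rcases x with ⟨p⟩
  exact mk_eq_mk_iff.2 (.orNot p)

protected theorem inf_compl : x ⊓ xᶜ = ⊥ := by
  rcases x with ⟨p⟩
  exact mk_eq_mk_iff.2 (.andNot p)

protected theorem sup_inf_left : x ⊔ y ⊓ z = (x ⊔ y) ⊓ (x ⊔ z) := by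
  rcases x, y, z with ⟨⟨p⟩, ⟨q⟩, ⟨r⟩⟩
  exact mk_eq_mk_iff.2 (.orAndDist p q r)

protected theorem inf_sup_left : x ⊓ (y ⊔ z) = x ⊓ y ⊔ x ⊓ z := by
  rcases x, y, z with ⟨⟨p⟩, ⟨q⟩, ⟨r⟩⟩
  exact mk_eq_mk_iff.2 (.andOrDist p q r)

protected theorem sup_top : x ⊔ ⊤ = ⊤ :=
  calc x ⊔ ⊤ = (x ⊔ ⊤) ⊓ (x ⊔ xᶜ) := by rw [x.sup_compl, Lindenbaum.inf_top]
    _ = x ⊔ xᶜ ⊓ ⊤ := by rw [← Lindenbaum.sup_inf_left, Lindenbaum.inf_comm]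
    _ = ⊤ := by rw [Lindenbaum.inf_top, x.sup_compl]

protected theorem inf_bot : x ⊓ ⊥ = ⊥ :=
  calc x ⊓ ⊥ = x ⊓ ⊥ ⊔ x ⊓ xᶜ := by rw [x.inf_compl, Lindenbaum.sup_bot]
    _ = x ⊓ (xᶜ ⊔ ⊥) := by rw [← Lindenbaum.inf_sup_left, Lindenbaum.sup_comm]
    _ = ⊥ := by rw [Lindenbaum.sup_bot, x.inf_compl]

protected theorem sup_inf_self : x ⊔ x ⊓ y = x :=
  calc x ⊔ x ⊓ y = x ⊓ (y ⊔ ⊤) := by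
        rw [Lindenbaum.sup_comm y, Lindenbaum.inf_sup_left, x.inf_top]
    _ = x := by rw [y.sup_top, x.inf_top]

protected theorem inf_sup_self : x ⊓ (x ⊔ y) = x :=
  calc x ⊓ (x ⊔ y) = x ⊔ y ⊓ ⊥ := by
        rw [Lindenbaum.inf_comm y, Lindenbaum.sup_inf_left, x.sup_bot]
    _ = x := by rw [y.inf_bot, x.sup_bot]

end BooleanAlgebraAxioms

instance : Lattice (Lindenbaum Ω) :=
  .mk' Lindenbaum.sup_comm Lindenbaum.sup_assoc Lindenbaum.inf_comm Lindenbaum.inf_assoc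
    Lindenbaum.sup_inf_self Lindenbaum.inf_sup_self

instance : BooleanAlgebra (Lindenbaum Ω) where
  le_sup_inf x y z := (x.sup_inf_left y z).ge
  inf_compl_le_bot x := x.inf_compl.le
  top_le_sup_compl x := x.sup_compl.ge
  le_top x := sup_eq_right.1 x.sup_top
  bot_le x := inf_eq_right.1 x.inf_bot

theorem mk_le_mk_iff {p q : BATerm Ω} : mk p ≤ mk q ↔ leBA p q :=
  sup_eq_right.symm.trans mk_eq_mk_iff

theorem mk_eq_eval (p : BATerm Ω) : mk p = p.eval fun o => mk (.var o) := by
  induction p with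
  | bot | top | var => rfl
  | or p q ihp ihq => exact congrArg₂ (· ⊔ ·) ihp ihq
  | and p q ihp ihq => exact congrArg₂ (· ⊓ ·) ihp ihq
  | not p ih => exact congrArg compl ih

end Lindenbaum

theorem BATerm.eval_atomTerm {Ω : Type} [Fintype Ω] {B : Type*} [BooleanAlgebra B] (v : Ω → B)
    (α : Ω → Bool) :
    (atomTerm α).eval v = Finset.univ.inf fun o => if α o then v o else (v o)ᶜ := by
  classical
  have eval_foldr (l : List Ω) :
      (l.foldr (fun o t => BATerm.and (if α o then .var o else .not (.var o)) t) .top).eval v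
        = l.toFinset.inf fun o => if α o then v o else (v o)ᶜ := by
    induction l with
    | nil => rfl
    | cons o l ih =>
      rw [List.toFinset_cons, Finset.inf_insert, List.foldr_cons, BATerm.eval, ih]
      split_ifs <;> rfl
  rw [atomTerm, eval_foldr, Finset.toList_toFinset]

theorem BATerm.eval_atomTerm_self {Ω : Type} [Fintype Ω] (α : Ω → Bool) :
    (atomTerm α).eval α = true := by
  rw [eval_atomTerm]
  exact top_le_iff.1 (Finset.le_inf fun o _ => by cases α o <;> simp)

theorem BATerm.sup_eval_atomTerm {Ω : Type} [Fintype Ω] [DecidableEq Ω] {B : Type*}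
    [BooleanAlgebra B] (v : Ω → B) :
    (Finset.univ.sup fun α : Ω → Bool => (atomTerm α).eval v) = ⊤ := by
  refine top_unique ?_
  calc (⊤ : B) ≤ Finset.univ.inf fun o =>
        Finset.univ.sup fun b : Bool => if b then v o else (v o)ᶜ :=
        Finset.le_inf fun o _ => by simp [sup_compl_eq_top]
    _ ≤ Finset.univ.sup fun α : Ω → Bool => (atomTerm α).eval v := by
        rw [Finset.inf_sup]
        refine Finset.sup_le fun β _ => ?_
        refine le_trans ?_ (Finset.le_sup (Finset.mem_univ fun o => β o (Finset.mem_univ o)))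
        rw [eval_atomTerm]
        exact Finset.le_inf fun o ho => Finset.inf_le (Finset.mem_attach _ ⟨o, ho⟩)

theorem BATerm.eval_atomTerm_le {Ω : Type} [Fintype Ω] {B : Type*} [BooleanAlgebra B]
    (v : Ω → B) (α : Ω → Bool) (p : BATerm Ω) :
    (atomTerm α).eval v ≤ if p.eval α then p.eval v else (p.eval v)ᶜ := by
  induction p with
  | bot => simp [eval]
  | top => simp [eval]
  | var o =>
    rw [eval_atomTerm]
    exact Finset.inf_le (Finset.mem_univ o)
  | or p q ihp ihq =>
    cases hp : p.eval α <;> cases hq : q.eval α <;>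
      simp_all [eval, le_sup_of_le_left, le_sup_of_le_right]
  | and p q ihp ihq =>
    cases hp : p.eval α <;> cases hq : q.eval α <;>
      simp_all [eval, le_sup_of_le_left, le_sup_of_le_right]
  | not p ih => cases hp : p.eval α <;> simp_all [eval]

section Atoms

variable {Ω : Type} [Fintype Ω]

theorem Lindenbaum.sup_mk_atomTerm [DecidableEq Ω] :
    (Finset.univ.sup fun α : Ω → Bool => mk (atomTerm α)) = ⊤ := by
  simpa only [← mk_eq_eval] using BATerm.sup_eval_atomTerm fun o : Ω => mk (.var o)

theorem Lindenbaum.mk_atomTerm_le (α : Ω → Bool) (p : BATerm Ω) :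
    mk (atomTerm α) ≤ if p.eval α then mk p else (mk p)ᶜ := by
  simpa only [← mk_eq_eval] using p.eval_atomTerm_le (fun o => mk (.var o)) α

theorem leBA_atomTerm_iff {α : Ω → Bool} {p : BATerm Ω} :
    leBA (atomTerm α) p ↔ p.eval α = true := by
  refine ⟨fun h => ?_, fun h => ?_⟩
  · rw [← BACong.eval_eq h α, BATerm.eval, BATerm.eval_atomTerm_self]
    exact top_sup_eq _
  · exact Lindenbaum.mk_le_mk_iff.1 ((Lindenbaum.mk_atomTerm_le α p).trans_eq (if_pos h))

theorem Lindenbaum.mk_eq_sup_atomTerm [DecidableEq Ω] (p : BATerm Ω)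
    [DecidablePred fun α => leBA (atomTerm α) p] :
    mk p = (Finset.univ.filter fun α => leBA (atomTerm α) p).sup fun α => mk (atomTerm α) := by
  refine le_antisymm ?_ (Finset.sup_le fun α hα => mk_le_mk_iff.2 (Finset.mem_filter.1 hα).2)
  calc mk p = mk p ⊓ Finset.univ.sup fun α => mk (atomTerm α) :=
        sup_mk_atomTerm (Ω := Ω) ▸ (inf_top_eq _).symm
    _ = Finset.univ.sup fun α => mk p ⊓ mk (atomTerm α) := Finset.sup_inf_distrib_left _ _ _
    _ ≤ _ := Finset.sup_le fun α _ => ?_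
  by_cases hα : leBA (atomTerm α) p
  · exact inf_le_right.trans
      (Finset.le_sup (f := fun α => mk (atomTerm α)) (Finset.mem_filter.2 ⟨Finset.mem_univ α, hα⟩))
  · have hp : mk (atomTerm α) ≤ (mk p)ᶜ :=
      (mk_atomTerm_le α p).trans_eq (if_neg (mt leBA_atomTerm_iff.2 hα))
    exact (le_compl_iff_disjoint_left.1 hp).le_bot.trans bot_le

end Atoms

end CKAH

namespace CKAH

/-! ### The term algebra of a set of hypotheses -/

/-- The setoid of the congruence `≡^H`. -/
def Term.setoid {A : Type} (H : HypSet A) : Setoid (Term A) := ⟨CongH H, .refl, .symm, .trans⟩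

/-- The term algebra of `H`: CKA terms modulo `≡^H`. -/
def TermAlgebra {A : Type} (H : HypSet A) : Type := Quotient (Term.setoid H)

namespace TermAlgebra

open Computability Bimonoid

variable {A : Type} {H : HypSet A} {e f : Term A}

/-- The class of a term. -/
def mk (H : HypSet A) (e : Term A) : TermAlgebra H := Quotient.mk _ e

theorem mk_eq_mk_iff : mk H e = mk H f ↔ CongH H e f := Quotient.eq

instance : Add (TermAlgebra H) := ⟨Quotient.map₂ .add fun _ _ h _ _ h' => h.addCong h'⟩

instance : Mul (TermAlgebra H) := ⟨Quotient.map₂ .seq fun _ _ h _ _ h' => h.seqCong h'⟩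

instance : Zero (TermAlgebra H) := ⟨mk H .zero⟩

instance : One (TermAlgebra H) := ⟨mk H .one⟩

instance : KStar (TermAlgebra H) := ⟨Quotient.map .star fun _ _ h => h.starCong⟩

protected theorem add_comm (x y : TermAlgebra H) : x + y = y + x := by
  rcases x, y with ⟨⟨e⟩, ⟨f⟩⟩
  exact mk_eq_mk_iff.2 (.addComm e f)

protected theorem add_zero (x : TermAlgebra H) : x + 0 = x := by
  rcases x with ⟨e⟩
  exact mk_eq_mk_iff.2 (.addZero e)

instance : Semiring (TermAlgebra H) where
  add_assoc := by
    rintro ⟨e⟩ ⟨f⟩ ⟨g⟩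
    exact mk_eq_mk_iff.2 (.symm (.addAssoc e f g))
  add_comm := TermAlgebra.add_comm
  add_zero := TermAlgebra.add_zero
  zero_add x := by rw [TermAlgebra.add_comm, TermAlgebra.add_zero]
  nsmul := nsmulRec
  mul_assoc := by
    rintro ⟨e⟩ ⟨f⟩ ⟨g⟩
    exact mk_eq_mk_iff.2 (.symm (.seqAssoc e f g))
  one_mul := by
    rintro ⟨e⟩
    exact mk_eq_mk_iff.2 (.seqOneL e)
  mul_one := by
    rintro ⟨e⟩
    exact mk_eq_mk_iff.2 (.seqOneR e)
  zero_mul := by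
    rintro ⟨e⟩
    exact mk_eq_mk_iff.2 (.seqZeroL e)
  mul_zero := by
    rintro ⟨e⟩
    exact mk_eq_mk_iff.2 (.seqZeroR e)
  left_distrib := by
    rintro ⟨e⟩ ⟨f⟩ ⟨g⟩
    exact mk_eq_mk_iff.2 (.seqDistL e f g)
  right_distrib := by
    rintro ⟨e⟩ ⟨f⟩ ⟨g⟩
    exact mk_eq_mk_iff.2 (.seqDistR e f g)

instance : IdemSemiring (TermAlgebra H) :=
  .ofSemiring <| by
    rintro ⟨e⟩
    exact mk_eq_mk_iff.2 (.addIdem e)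

theorem mk_le_mk_iff : mk H e ≤ mk H f ↔ LeH H e f :=
  add_eq_right_iff_le.symm.trans mk_eq_mk_iff

theorem one_add_mul_kstar (x : TermAlgebra H) : 1 + x * x∗ = x∗ := by
  rcases x with ⟨e⟩
  exact mk_eq_mk_iff.2 (.starUnfoldL e)

theorem one_add_kstar_mul (x : TermAlgebra H) : 1 + x∗ * x = x∗ := by
  rcases x with ⟨e⟩
  exact mk_eq_mk_iff.2 (.starUnfoldR e)

instance : KleeneAlgebra (TermAlgebra H) where
  one_le_kstar x := le_self_add.trans_eq (one_add_mul_kstar x)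
  mul_kstar_le_kstar x := le_add_self.trans_eq (one_add_mul_kstar x)
  kstar_mul_le_kstar x := le_add_self.trans_eq (one_add_kstar_mul x)
  mul_kstar_le_self := by
    rintro ⟨f⟩ ⟨e⟩ h
    exact mk_le_mk_iff.2 (.lfpR (mk_le_mk_iff.1 (add_le le_rfl h)))
  kstar_mul_le_self := by
    rintro ⟨f⟩ ⟨e⟩ h
    exact mk_le_mk_iff.2 (.lfpL (mk_le_mk_iff.1 (add_le le_rfl h)))

instance : Bimonoid (TermAlgebra H) where
  par := Quotient.map₂ .par fun _ _ h _ _ h' => h.parCong h'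
  par_assoc := by
    rintro ⟨e⟩ ⟨f⟩ ⟨g⟩
    exact mk_eq_mk_iff.2 (.symm (.parAssoc e f g))
  par_comm := by
    rintro ⟨e⟩ ⟨f⟩
    exact mk_eq_mk_iff.2 (.parComm e f)
  par_one := by
    rintro ⟨e⟩
    exact mk_eq_mk_iff.2 (.parOne e)

instance [hH : Fact (exch A ⊆ H)] : ConcurrentKleeneAlgebra (TermAlgebra H) where
  par_zero := by
    rintro ⟨e⟩
    exact mk_eq_mk_iff.2 (.parZero e)
  par_add := by
    rintro ⟨e⟩ ⟨f⟩ ⟨g⟩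
    exact mk_eq_mk_iff.2 (.parDist e f g)
  par_mul_par_le := by
    rintro ⟨e⟩ ⟨f⟩ ⟨g⟩ ⟨h⟩
    exact mk_le_mk_iff.2 (.hyp (hH.out ⟨e, f, g, h, rfl⟩))

theorem eval_mk_var [Fact (exch A ⊆ H)] (e : Term A) :
    e.eval (fun a => mk H (.var a)) = mk H e := by
  induction e with
  | zero | one | var => rfl
  | add _ _ ihe ihf => exact congrArg₂ (· + ·) ihe ihf
  | seq _ _ ihe ihf => exact congrArg₂ (· * ·) ihe ihf
  | par _ _ ihe ihf => exact congrArg₂ (· ∥ ·) ihe ihf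
  | star _ ih => exact congrArg KStar.kstar ih

theorem mk_rTerm {r : A → Term A} (hr : ∀ a, mk H (r a) = mk H (.var a)) (e : Term A) :
    mk H (rTerm r e) = mk H e := by
  induction e with
  | zero | one => rfl
  | var a => exact hr a
  | add _ _ ihe ihf => exact congrArg₂ (· + ·) ihe ihf
  | seq _ _ ihe ihf => exact congrArg₂ (· * ·) ihe ihf
  | par _ _ ihe ihf => exact congrArg₂ (· ∥ ·) ihe ihf
  | star _ ih => exact congrArg KStar.kstar ih

end TermAlgebra

end CKAH

namespace CKAH

open Bimonoid
open scoped Pointwise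

/-! ### Set-valued evaluation of languages -/

/-- The values of the pomsets of a language in a bimonoid, when each letter `a` may take any value
in the set `g a`. -/
def Lang.values {A : Type} {M : Type*} [Bimonoid M] (g : A → Set M) (L : Lang A) : Set M :=
  {m | ∃ U ∈ L, m ∈ U.eval g}

theorem Pomset.IsSP.eval_singleton {A : Type} {M : Type*} [Bimonoid M] {v : A → M} {U : Pomset A}
    (hU : U.IsSP) :
    U.eval (fun a => ({v a} : Set M)) = {U.eval v} := by
  induction hU with
  | empty => rw [Pomset.empty_eq_one, Pomset.eval_one, Pomset.eval_one, Set.singleton_one]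
  | single a => rw [Pomset.eval_single, Pomset.eval_single]
  | seq hU hV ihU ihV =>
    rw [Pomset.seq_eq_mul, hU.eval_mul hV, hU.eval_mul hV, ihU, ihV, Set.singleton_mul_singleton]
  | par hU hV ihU ihV =>
    rw [Pomset.par_eq_par, hU.eval_par hV, hU.eval_par hV, ihU, ihV]
    exact Set.image2_singleton

namespace Lang

section Bimonoid

variable {A : Type} {M : Type*} [Bimonoid M] {g : A → Set M} {L K : Lang A}

theorem values_mono (h : L ⊆ K) : L.values g ⊆ K.values g :=
  fun _ ⟨U, hU, hm⟩ => ⟨U, h hU, hm⟩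

theorem values_union : (L ∪ K : Lang A).values g = L.values g ∪ K.values g := by
  ext m
  simp only [values, Set.mem_union, Set.mem_ofPred_eq, or_and_right, exists_or]

theorem values_iUnion {ι : Sort*} {L : ι → Lang A} :
    Lang.values g (⋃ i, L i) = ⋃ i, (L i).values g := by
  ext m
  simp only [values, Set.mem_iUnion, Set.mem_ofPred_eq]
  exact ⟨fun ⟨U, ⟨i, hU⟩, hm⟩ => ⟨i, U, hU, hm⟩, fun ⟨i, U, hU, hm⟩ => ⟨U, ⟨i, hU⟩, hm⟩⟩

theorem values_singleton (U : Pomset A) : ({U} : Lang A).values g = U.eval g := by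
  ext m
  simp [values]

theorem values_one : (1 : Lang A).values g = 1 :=
  (values_singleton 1).trans Pomset.eval_one

theorem values_mul (hL : L ⊆ SPset A) (hK : K ⊆ SPset A) :
    (L * K).values g = L.values g * K.values g := by
  ext m
  constructor
  · rintro ⟨_, ⟨U, hU, V, hV, rfl⟩, hm⟩
    change m ∈ Pomset.eval g (U * V) at hm
    rw [(hL hU).eval_mul (hK hV)] at hm
    obtain ⟨a, ha, b, hb, rfl⟩ := hm
    exact ⟨a, ⟨U, hU, ha⟩, b, ⟨V, hV, hb⟩, rfl⟩
  · rintro ⟨a, ⟨U, hU, ha⟩, b, ⟨V, hV, hb⟩, rfl⟩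
    refine ⟨U * V, ⟨U, hU, V, hV, rfl⟩, ?_⟩
    rw [(hL hU).eval_mul (hK hV)]
    exact ⟨a, ha, b, hb, rfl⟩

theorem values_par (hL : L ⊆ SPset A) (hK : K ⊆ SPset A) :
    (L ∥ K).values g = L.values g ∥ K.values g := by
  ext m
  constructor
  · rintro ⟨_, ⟨U, hU, V, hV, rfl⟩, hm⟩
    change m ∈ Pomset.eval g (U ∥ V) at hm
    rw [(hL hU).eval_par (hK hV)] at hm
    obtain ⟨a, ha, b, hb, rfl⟩ := hm
    exact ⟨a, ⟨U, hU, ha⟩, b, ⟨V, hV, hb⟩, rfl⟩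
  · rintro ⟨a, ⟨U, hU, ha⟩, b, ⟨V, hV, hb⟩, rfl⟩
    refine ⟨U ∥ V, ⟨U, hU, V, hV, rfl⟩, ?_⟩
    rw [(hL hU).eval_par (hK hV)]
    exact ⟨a, ha, b, hb, rfl⟩

theorem values_pow (hL : L ⊆ SPset A) (n : ℕ) : (L ^ n).values g = L.values g ^ n := by
  induction n with
  | zero => rw [pow_zero, pow_zero, values_one]
  | succ n ih => rw [pow_succ, pow_succ, values_mul (pow_subset_SPset hL n) hL, ih]

theorem values_lang_seq (e f : Term A) :
    (e.seq f).lang.values g = e.lang.values g * f.lang.values g := by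
  rw [Term.lang_seq, values_mul e.lang_subset_SPset f.lang_subset_SPset]

theorem values_lang_par (e f : Term A) :
    (e.par f).lang.values g = e.lang.values g ∥ f.lang.values g := by
  rw [Term.lang_par, values_par e.lang_subset_SPset f.lang_subset_SPset]

theorem values_rTerm (r : A → Term A) (e : Term A) :
    (rTerm r e).lang.values g = e.lang.values fun a => (r a).lang.values g := by
  induction e with
  | zero => simp [rTerm, values, Term.lang_zero]
  | one =>
    rw [rTerm, Term.lang_one, values_one, values_one]
  | var a =>
    symm
    rw [Term.lang, values_singleton, Pomset.eval_single, rTerm]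
  | add e f ihe ihf =>
    rw [rTerm, Term.lang_add, Term.lang_add, values_union, values_union, ihe, ihf]
  | seq e f ihe ihf =>
    rw [rTerm, values_lang_seq, values_lang_seq, ihe, ihf]
  | par e f ihe ihf =>
    rw [rTerm, values_lang_par, values_lang_par, ihe, ihf]
  | star e ih =>
    simp only [rTerm, Term.lang_star, values_iUnion, values_pow (Term.lang_subset_SPset _), ih]

theorem values_singleton_comp {v : A → M} (hL : L ⊆ SPset A) :
    (L.values fun a => {v a}) = (fun U => U.eval v) '' L := by
  ext m
  refine exists_congr fun U => and_congr_right fun hU => ?_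
  rw [(hL hU).eval_singleton, Set.mem_singleton_iff, eq_comm]

end Bimonoid

end Lang

section Contexts

variable {A : Type} {C : Pomset (Option A)}

theorem Ctx.img_subset_SPset (hC : GenCtx C) {L : Lang A} (hL : L ⊆ SPset A) :
    Ctx.img C L ⊆ SPset A := by
  rintro _ ⟨U, hU, rfl⟩
  exact hC.isSP_ins (hL hU)

theorem Ctx.img_single_none (L : Lang A) : Ctx.img (.single none) L = L := by
  simp [Ctx.img, Pomset.ins_single_none]

theorem Ctx.img_map_some_mul (U : Pomset A) (hC : C.IsCtx) (L : Lang A) :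
    Ctx.img (U.map some * C) L = {U} * Ctx.img C L := by
  ext W
  simp [Ctx.img, Pomset.ins_map_some_mul U hC, eq_comm]

theorem Ctx.img_mul_map_some (hC : C.IsCtx) (U : Pomset A) (L : Lang A) :
    Ctx.img (C * U.map some) L = Ctx.img C L * {U} := by
  ext W
  simp [Ctx.img, Pomset.ins_mul_map_some hC, eq_comm]

theorem Ctx.img_map_some_par (U : Pomset A) (hC : C.IsCtx) (L : Lang A) :
    Ctx.img (U.map some ∥ C) L = {U} ∥ Ctx.img C L := by
  ext W
  simp only [Ctx.img, Pomset.ins_map_some_par U hC]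
  exact Iff.symm ⟨fun ⟨_, hU, _, ⟨V, hV, hW⟩, h⟩ => ⟨V, hV, by rw [← h, hW, hU]⟩,
    fun ⟨V, hV, hW⟩ => ⟨U, rfl, _, ⟨V, hV, rfl⟩, hW.symm⟩⟩

end Contexts

section Hypotheses

variable {A : Type} {M : Type*} [Bimonoid M] [Preorder M] [ConcurrentMonoid M] {g : A → Set M}
  {L K : Lang A} {C : Pomset (Option A)} {H : HypSet A}

theorem mul_subset_lowerClosure {s s' t t' : Set M} (hs : s ⊆ lowerClosure s')
    (ht : t ⊆ lowerClosure t') : s * t ⊆ lowerClosure (s' * t') := by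
  rintro _ ⟨a, ha, b, hb, rfl⟩
  obtain ⟨a', ha', haa'⟩ := hs ha
  obtain ⟨b', hb', hbb'⟩ := ht hb
  exact ⟨a' * b', Set.mul_mem_mul ha' hb', ConcurrentMonoid.mul_le_mul haa' hbb'⟩

theorem par_subset_lowerClosure {s s' t t' : Set M} (hs : s ⊆ lowerClosure s')
    (ht : t ⊆ lowerClosure t') : s ∥ t ⊆ lowerClosure (s' ∥ t') := by
  rintro _ ⟨a, ha, b, hb, rfl⟩
  obtain ⟨a', ha', haa'⟩ := hs ha
  obtain ⟨b', hb', hbb'⟩ := ht hb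
  exact ⟨a' ∥ b', Set.mem_image2_of_mem ha' hb', ConcurrentMonoid.par_le_par haa' hbb'⟩

theorem Lang.values_img_subset_lowerClosure (hC : GenCtx C) (hL : L ⊆ SPset A) (hK : K ⊆ SPset A)
    (h : L.values g ⊆ lowerClosure (K.values g)) :
    (Ctx.img C L).values g ⊆ lowerClosure ((Ctx.img C K).values g) := by
  induction hC with
  | star => rwa [Ctx.img_single_none, Ctx.img_single_none]
  | @seqL U C hU hC ih =>
    have hU' : ({U} : Lang A) ⊆ SPset A := Set.singleton_subset_iff.2 hU
    rw [Pomset.seq_eq_mul, Ctx.img_map_some_mul _ hC.isSPCtx.1, Ctx.img_map_some_mul _ hC.isSPCtx.1,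
      values_mul hU' (Ctx.img_subset_SPset hC hL), values_mul hU' (Ctx.img_subset_SPset hC hK)]
    exact mul_subset_lowerClosure subset_lowerClosure ih
  | @seqR C U hC hU ih =>
    have hU' : ({U} : Lang A) ⊆ SPset A := Set.singleton_subset_iff.2 hU
    rw [Pomset.seq_eq_mul, Ctx.img_mul_map_some hC.isSPCtx.1, Ctx.img_mul_map_some hC.isSPCtx.1,
      values_mul (Ctx.img_subset_SPset hC hL) hU', values_mul (Ctx.img_subset_SPset hC hK) hU']
    exact mul_subset_lowerClosure ih subset_lowerClosure
  | @par U C hU hC ih =>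
    have hU' : ({U} : Lang A) ⊆ SPset A := Set.singleton_subset_iff.2 hU
    rw [Pomset.par_eq_par, Ctx.img_map_some_par _ hC.isSPCtx.1, Ctx.img_map_some_par _ hC.isSPCtx.1,
      values_par hU' (Ctx.img_subset_SPset hC hL), values_par hU' (Ctx.img_subset_SPset hC hK)]
    exact par_subset_lowerClosure subset_lowerClosure ih

theorem Lang.values_cl_subset_lowerClosure
    (hH : ∀ p ∈ H, p.1.lang.values g ⊆ lowerClosure (p.2.lang.values g)) :
    (cl H L).values g ⊆ lowerClosure (L.values g) := by
  rintro m ⟨U, hU, hm⟩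
  induction hU generalizing m with
  | base hU => exact subset_lowerClosure ⟨_, hU, hm⟩
  | @step e f hef C hC _ U hU ih =>
    obtain ⟨n, ⟨_, ⟨V, hV, rfl⟩, hn⟩, hmn⟩ :=
      values_img_subset_lowerClosure (genCtx_iff_isSPCtx.2 hC) (Term.lang_subset_SPset e)
        (Term.lang_subset_SPset f) (hH _ hef) ⟨_, ⟨U, hU, rfl⟩, hm⟩
    exact (lowerClosure _).lower hmn (ih V hV hn)

theorem Lang.values_exch_subset_lowerClosure {p : Term A × Term A} (hp : p ∈ exch A) :
    p.1.lang.values g ⊆ lowerClosure (p.2.lang.values g) := by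
  obtain ⟨e₁, e₂, e₃, e₄, rfl⟩ := hp
  simp only [values_lang_seq, values_lang_par]
  rintro _ ⟨_, ⟨a, ha, b, hb, rfl⟩, _, ⟨c, hc, d, hd, rfl⟩, rfl⟩
  exact ⟨_, Set.mem_image2_of_mem (Set.mul_mem_mul ha hc) (Set.mul_mem_mul hb hd),
    ConcurrentMonoid.exchange a b c d⟩

end Hypotheses

end CKAH

namespace CKAH

/-! ### Completeness -/

open Bimonoid TermAlgebra

theorem LeH.of_lang_subset_cl {A : Type} {H : HypSet A} [Fact (exch A ⊆ H)] {r : A → Term A}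
    (hr : ∀ a, mk H (r a) = mk H (.var a))
    (hH : ∀ S : Recognizer fun a => mk H (.var a), ∀ p ∈ H,
      p.1.lang.values (fun a => (r a).lang.values fun b => {S.val b}) ⊆
        lowerClosure (p.2.lang.values fun a => (r a).lang.values fun b => {S.val b}))
    {e f : Term A} (h : e.lang ⊆ cl H f.lang) : LeH H e f := by
  obtain ⟨S, I, O, hS⟩ := recognizable (fun a => mk H (.var a)) (rTerm r f)
  rw [← mk_le_mk_iff, ← mk_rTerm hr e, ← mk_rTerm hr f, ← eval_mk_var, ← eval_mk_var (rTerm r f)]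
  refine hS.eval_le fun U hU => ?_
  have hUe : U.eval S.val ∈ (rTerm r e).lang.values fun b => {S.val b} := by
    rw [Lang.values_singleton_comp (Term.lang_subset_SPset _)]
    exact ⟨U, hU, rfl⟩
  rw [Lang.values_rTerm] at hUe
  obtain ⟨m, hm, hUm⟩ := Lang.values_cl_subset_lowerClosure (hH S) (Lang.values_mono h hUe)
  rw [← Lang.values_rTerm, Lang.values_singleton_comp (Term.lang_subset_SPset _)] at hm
  obtain ⟨V, hV, rfl⟩ := hm
  obtain ⟨i, hi, o, ho, hrel⟩ := hS.accepts V hV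
  exact ⟨i, hi, o, ho, S.antitone_rel hUm i o hrel⟩

section Sums

variable {A ι : Type} (t : ι → Term A) (l : List ι)

theorem Term.lang_foldr_add :
    (l.foldr (fun i u => Term.add (t i) u) .zero).lang = ⋃ i ∈ l, (t i).lang := by
  induction l with
  | nil => simp [Term.lang_zero]
  | cons i l ih => simp [Term.lang_add, ih]

theorem TermAlgebra.mk_foldr_add [DecidableEq ι] (H : HypSet A) :
    mk H (l.foldr (fun i u => Term.add (t i) u) .zero) = l.toFinset.sup fun i => mk H (t i) := by
  induction l with
  | nil => rfl
  | cons i l ih => rw [List.foldr_cons, List.toFinset_cons, Finset.sup_insert, ← ih]; rfl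

end Sums

section Observations

variable {S Ω : Type}

instance : Fact (exch (OLet S Ω) ⊆ obsHyp S Ω) := ⟨fun _ h => .inl (.inr h)⟩

/-- The interpretation of observations in the term algebra of `obs`, where disjunction becomes
choice. -/
def observe (S Ω : Type) : SupBotHom (Lindenbaum Ω) (TermAlgebra (obsHyp S Ω)) where
  toFun := Quotient.lift (fun p => mk _ (.var (.inr p))) fun p q h =>
    le_antisymm (mk_le_mk_iff.2 (.hyp (.inl (.inl (.inl ⟨p, q, h, rfl⟩)))))
      (mk_le_mk_iff.2 (.hyp (.inl (.inl (.inl ⟨q, p, h.symm, rfl⟩)))))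
  map_sup' := by
    rintro ⟨p⟩ ⟨q⟩
    exact le_antisymm (mk_le_mk_iff.2 (.hyp (.inr (.inr ⟨p, q, .inr rfl⟩))))
      (mk_le_mk_iff.2 (.hyp (.inr (.inr ⟨p, q, .inl rfl⟩))))
  map_bot' := le_antisymm (mk_le_mk_iff.2 (.hyp (.inr (.inl (.inr rfl)))))
    (mk_le_mk_iff.2 (.hyp (.inr (.inl (.inl rfl)))))

theorem observe_mk (p : BATerm Ω) :
    observe S Ω (.mk p) = mk (obsHyp S Ω) (.var (.inr p)) := rfl

theorem observe_le_mul_self (x : Lindenbaum Ω) : observe S Ω x ≤ observe S Ω x * observe S Ω x := by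
  rcases x with ⟨p⟩
  calc observe S Ω (.mk p) = observe S Ω (.mk p ⊓ .mk p) := by rw [inf_idem]
    _ ≤ _ := mk_le_mk_iff.2 (.hyp (.inl (.inl (.inr ⟨p, p, rfl⟩))))

theorem mk_obsR [Fintype Ω] [DecidableEq Ω] (a : OLet S Ω) :
    mk (obsHyp S Ω) (obsR S Ω a) = mk (obsHyp S Ω) (.var a) := by
  classical
  rcases a with a | p
  · rfl
  · rw [obsR, mk_foldr_add, Finset.toList_toFinset, ← observe_mk, Lindenbaum.mk_eq_sup_atomTerm p,
      map_finset_sup]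
    rfl

theorem values_obsR_inr [Fintype Ω] [DecidableEq Ω] {M : Type*} [Bimonoid M] (v : OLet S Ω → M)
    (p : BATerm Ω) :
    ((obsR S Ω (.inr p)).lang.values fun b => {v b}) =
      (fun α => v (.inr (atomTerm α))) '' {α | p.eval α = true} := by
  rw [Lang.values_singleton_comp (Term.lang_subset_SPset _), obsR, Term.lang_foldr_add]
  ext m
  simp [Term.lang, leBA_atomTerm_iff, Pomset.eval_single]

theorem values_obsHyp_subset_lowerClosure {M : Type*} [Bimonoid M] [Preorder M]
    [ConcurrentMonoid M] {g : OLet S Ω → Set M} {v : (Ω → Bool) → M}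
    (hv : ∀ α, v α ≤ v α * v α) (hg : ∀ p, g (.inr p) = v '' {α | p.eval α = true})
    {x : Term (OLet S Ω) × Term (OLet S Ω)} (hx : x ∈ obsHyp S Ω) :
    x.1.lang.values g ⊆ lowerClosure (x.2.lang.values g) := by
  have values_observation (p : BATerm Ω) :
      (Term.var (.inr p)).lang.values g = v '' {α | p.eval α = true} := by
    rw [Term.lang, Lang.values_singleton, Pomset.eval_single, hg]
  have values_or (p q : BATerm Ω) : (Term.var (.inr (p.or q))).lang.values g =
      ((Term.var (.inr p)).add (.var (.inr q))).lang.values g := by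
    rw [Term.lang_add, Lang.values_union]
    simp only [values_observation, ← Set.image_union]
    congr 1
    ext α
    exact Bool.or_eq_true_iff
  obtain ((⟨p, q, h, rfl⟩ | ⟨p, q, rfl⟩) | hx) | (rfl | rfl) | ⟨p, q, rfl | rfl⟩ := hx
  · rw [values_observation, values_observation]
    simpa only [← h.eval_eq] using subset_lowerClosure
  · rw [Lang.values_lang_seq, values_observation, values_observation, values_observation]
    rintro _ ⟨α, hα, rfl⟩
    obtain ⟨hp, hq⟩ := Bool.and_eq_true_iff.1 hα
    exact ⟨_, Set.mul_mem_mul ⟨α, hp, rfl⟩ ⟨α, hq, rfl⟩, hv α⟩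
  · exact Lang.values_exch_subset_lowerClosure hx
  · simp [Term.lang_zero, Lang.values]
  · simp [values_observation, BATerm.eval]
  · exact (values_or p q).symm.subset.trans subset_lowerClosure
  · exact (values_or p q).subset.trans subset_lowerClosure

theorem CongH.of_cl_lang_eq [Finite Ω] {e f : Term (OLet S Ω)}
    (h : cl (obsHyp S Ω) e.lang = cl (obsHyp S Ω) f.lang) : CongH (obsHyp S Ω) e f := by
  classical
  cases nonempty_fintype Ω
  have le_of_subset {e f : Term (OLet S Ω)} (h : e.lang ⊆ cl (obsHyp S Ω) f.lang) :
      LeH (obsHyp S Ω) e f :=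
    .of_lang_subset_cl mk_obsR (fun R _ hx => values_obsHyp_subset_lowerClosure
      (fun α => R.le_mul_self _ (observe_le_mul_self (.mk (atomTerm α))))
      (values_obsR_inr R.val) hx) h
  obtain ⟨hef, hfe⟩ := cl_eq_cl_iff.1 h
  exact mk_eq_mk_iff.1 (le_antisymm (mk_le_mk_iff.2 (le_of_subset hef))
    (mk_le_mk_iff.2 (le_of_subset hfe)))

end Observations

end CKAH

namespace CKAH

/-- **Soundness and completeness of CKAO**: `e ≡^obs f` iff `cl_obs(⟦e⟧) = cl_obs(⟦f⟧)`. -/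
theorem ckao_soundness_and_completeness (S Ω : Type) [Fintype Ω]
    (e f : Term (OLet S Ω)) :
    CongH (obsHyp S Ω) e f ↔ cl (obsHyp S Ω) e.lang = cl (obsHyp S Ω) f.lang := by
  exact ⟨CongH.cl_lang_eq, CongH.of_cl_lang_eq⟩

end CKAH
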